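/- Let $(\Omega_n)$ be a sequence of finite-perimeter subsets of a bounded open set $\mathcal{D}$ converging in $L^1$ to $\Omega$, and let $K \subset \mathcal{D}$ be closed. Suppose $U$ is an open set with $K \subset U \subset \mathcal{D}$ such that $\mathcal{H}^{N-1}(\partial^*\Omega_n \cap \partial U) = 0$ for all $n$ and $\mathcal{H}^{N-1}(\partial^*\Omega \cap \partial U) = 0$. Then for any $A \geq 1$, $\liminf_n \big(\mathcal{H}^{N-1}(\partial^*\Omega_n \cap K \cap \mathcal{D}) + A\,\mathcal{H}^{N-1}(\partial^*\Omega_n \setminus K \cap \mathcal{D})\big) \geq \mathcal{H}^{N-1}(\partial^*\Omega \cap K \cap \mathcal{D}) + A\,\mathcal{H}^{N-1}(\partial^*\Omega \setminus K \cap \mathcal{D})$, provided also $\mathcal{H}^{N-1}(\partial^*\Omega_n \cap U \setminus K)$ and $\mathcal{H}^{N-1}(\partial^*\Omega \cap U \setminus K)$ are handled by lower semicontinuity on the open set $U \setminus K$ (i.e., assuming additionally $K = \partial\Omega_0$ for some fixed set so that $U \setminus K$ is open). -/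

import Mathlib

open MeasureTheory Metric Filter Set Bornology
open scoped ENNReal Topology NNReal RealInnerProductSpace

noncomputable section

/-- Points of Lebesgue density `1` of a set in `ℝ^N`. -/
def densityOnePts {N : ℕ} (E : Set (EuclideanSpace ℝ (Fin N))) :
    Set (EuclideanSpace ℝ (Fin N)) :=
  {x | Tendsto (fun r : ℝ => volume (E ∩ ball x r) / volume (ball x r)) (𝓝[>] 0) (𝓝 1)}

/-- Points of Lebesgue density `0` of a set in `ℝ^N`. -/
def densityZeroPts {N : ℕ} (E : Set (EuclideanSpace ℝ (Fin N))) :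
    Set (EuclideanSpace ℝ (Fin N)) :=
  {x | Tendsto (fun r : ℝ => volume (E ∩ ball x r) / volume (ball x r)) (𝓝[>] 0) (𝓝 0)}

/-- The essential boundary `∂*E`: points of density neither `0` nor `1`. -/
def essBdry {N : ℕ} (E : Set (EuclideanSpace ℝ (Fin N))) :
    Set (EuclideanSpace ℝ (Fin N)) :=
  (densityOnePts E ∪ densityZeroPts E)ᶜ

/-- Relative perimeter of `E` in `Ω` (De Giorgi–Federer):
`P(E,Ω) = H^{N-1}(∂*E ∩ Ω)`. -/
def perim {N : ℕ} (E Ω : Set (EuclideanSpace ℝ (Fin N))) : ℝ≥0∞ :=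
  μH[(N : ℝ) - 1] (essBdry E ∩ Ω)

/-- Support of the Gauss–Green measure `μ_E`, whose total variation is
`H^{N-1} ⌊ ∂*E`. -/
def sptGG {N : ℕ} (E : Set (EuclideanSpace ℝ (Fin N))) :
    Set (EuclideanSpace ℝ (Fin N)) :=
  {x | ∀ r : ℝ, 0 < r → 0 < μH[(N : ℝ) - 1] (essBdry E ∩ ball x r)}

/-- The Lebesgue volume `ω_N` of the unit ball of `ℝ^N`. -/
def omegaVol (N : ℕ) : ℝ := (volume (ball (0 : EuclideanSpace ℝ (Fin N)) 1)).toReal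



/-- One half of the Baire argument on a line. -/
lemma baire_aux (a b : ℝ) (A B : Set ℝ) (hd : Disjoint A B) (hcov : Ioo a b ⊆ A ∪ B)
    (J T : Set ℝ) (hJ : IsOpen J) (hJc : J.OrdConnected) (hJab : J ⊆ Ioo a b)
    (hF : J \ (interior A ∪ interior B) ⊆ T) (hT : Disjoint T B)
    (hno : ∀ t ε, 0 < ε → t ∈ T → ¬ Ioo t (t + ε) ⊆ B)
    (hno' : ∀ t ε, 0 < ε → t ∈ T → ¬ Ioo (t - ε) t ⊆ B)
    (t0 : ℝ) (ht0 : t0 ∈ J) (ht0' : t0 ∉ interior A ∪ interior B) : False := by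
  apply ht0'
  left
  have hJA : J ⊆ A := by
    intro s hs
    by_contra hsA
    have hsB : s ∈ B := (hcov (hJab hs)).resolve_left hsA
    have hsT : s ∉ T := fun h => Set.disjoint_left.1 hT h hsB
    have hsG : s ∈ interior A ∪ interior B := by
      by_contra h; exact hsT (hF ⟨hs, h⟩)
    have hsIB : s ∈ interior B := hsG.resolve_left (fun h => hsA (interior_subset h))
    have ht0s : t0 ∉ interior B := fun h => ht0' (Or.inr h)
    rcases lt_trichotomy s t0 with hlt | heq | hgt
    · set C : Set ℝ := Icc s t0 ∩ (interior B)ᶜ with hC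
      have hCc : IsCompact C := isCompact_Icc.inter_right isOpen_interior.isClosed_compl
      have hCn : C.Nonempty := ⟨t0, ⟨hlt.le, le_rfl⟩, ht0s⟩
      have hm := hCc.sInf_mem hCn
      set t1 := sInf C
      have hst1 : s < t1 := lt_of_le_of_ne hm.1.1 (fun h => hm.2 (h ▸ hsIB))
      have hsub : Ioo s t1 ⊆ B := by
        intro u hu
        by_contra huB
        have : u ∈ C := ⟨⟨hu.1.le, hu.2.le.trans hm.1.2⟩, fun h => huB (interior_subset h)⟩
        exact absurd (csInf_le hCc.bddBelow this) (not_le.2 hu.2)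
      have ht1J : t1 ∈ J := hJc.out hs ht0 hm.1
      have ht1A : t1 ∉ interior A := by
        intro h
        obtain ⟨l, hl, hls⟩ := exists_Ioc_subset_of_mem_nhds (mem_interior_iff_mem_nhds.1 h)
          ⟨s, hst1⟩
        obtain ⟨u, hu1, hu2⟩ := exists_between (max_lt hl hst1)
        have h1 : u ∈ A := hls ⟨(le_max_left _ _).trans_lt hu1, hu2.le⟩
        have h2 : u ∈ B := hsub ⟨(le_max_right _ _).trans_lt hu1, hu2⟩
        exact Set.disjoint_left.1 hd h1 h2
      have ht1T : t1 ∈ T := hF ⟨ht1J, fun h => h.elim ht1A hm.2⟩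
      refine hno' t1 (t1 - s) (by linarith) ht1T ?_
      simpa using hsub
    · exact ht0s (heq ▸ hsIB)
    · set C : Set ℝ := Icc t0 s ∩ (interior B)ᶜ with hC
      have hCc : IsCompact C := isCompact_Icc.inter_right isOpen_interior.isClosed_compl
      have hCn : C.Nonempty := ⟨t0, ⟨le_rfl, hgt.le⟩, ht0s⟩
      have hm := hCc.sSup_mem hCn
      set t1 := sSup C
      have hst1 : t1 < s := lt_of_le_of_ne hm.1.2 (fun h => hm.2 (h ▸ hsIB))
      have hsub : Ioo t1 s ⊆ B := by
        intro u hu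
        by_contra huB
        have : u ∈ C := ⟨⟨hm.1.1.trans hu.1.le, hu.2.le⟩, fun h => huB (interior_subset h)⟩
        exact absurd (le_csSup hCc.bddAbove this) (not_le.2 hu.1)
      have ht1J : t1 ∈ J := hJc.out ht0 hs hm.1
      have ht1A : t1 ∉ interior A := by
        intro h
        obtain ⟨l, hl, hls⟩ := exists_Ico_subset_of_mem_nhds (mem_interior_iff_mem_nhds.1 h)
          ⟨s, hst1⟩
        obtain ⟨u, hu1, hu2⟩ := exists_between (lt_min hl hst1)
        have h1 : u ∈ A := hls ⟨hu1.le, hu2.trans_le (min_le_left _ _)⟩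
        have h2 : u ∈ B := hsub ⟨hu1, hu2.trans_le (min_le_right _ _)⟩
        exact Set.disjoint_left.1 hd h1 h2
      have ht1T : t1 ∈ T := hF ⟨ht1J, fun h => h.elim ht1A hm.2⟩
      refine hno t1 (s - t1) (by linarith) ht1T ?_
      simpa using hsub
  exact mem_interior.2 ⟨J, hJA, hJ, ht0⟩

/-- Baire category lemma on a line. -/
lemma baire_line (a b : ℝ) (A B : Set ℝ) (hd : Disjoint A B) (hcov : Ioo a b ⊆ A ∪ B)
    (Ak Bk : ℕ → Set ℝ) (hAc : ∀ k, IsClosed (Ak k)) (hBc : ∀ k, IsClosed (Bk k))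
    (hA : A ⊆ ⋃ k, Ak k) (hB : B ⊆ ⋃ k, Bk k)
    (hAk : ∀ k, Disjoint (Ak k) B) (hBk : ∀ k, Disjoint (Bk k) A)
    (hno : ∀ k t ε, 0 < ε → t ∈ Ak k → ¬ Ioo t (t + ε) ⊆ B)
    (hno' : ∀ k t ε, 0 < ε → t ∈ Ak k → ¬ Ioo (t - ε) t ⊆ B)
    (hnp : ∀ k t ε, 0 < ε → t ∈ Bk k → ¬ Ioo t (t + ε) ⊆ A)
    (hnp' : ∀ k t ε, 0 < ε → t ∈ Bk k → ¬ Ioo (t - ε) t ⊆ A) :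
    Ioo a b ⊆ A ∨ Ioo a b ⊆ B := by
  by_cases hF : (Ioo a b \ (interior A ∪ interior B)).Nonempty
  · exfalso
    set Fc := Ioo a b \ (interior A ∪ interior B) with hFc
    have hlc : IsLocallyClosed Fc :=
      isOpen_Ioo.isLocallyClosed.inter
        (isOpen_interior.union isOpen_interior).isClosed_compl.isLocallyClosed
    haveI : LocallyCompactSpace Fc := hlc.locallyCompactSpace
    haveI : Nonempty Fc := hF.to_subtype
    let f : ℕ ⊕ ℕ → Set Fc := fun i => Subtype.val ⁻¹' (Sum.elim Ak Bk i)
    obtain ⟨i, ⟨t0, ht0⟩⟩ := nonempty_interior_of_iUnion_of_closed (f := f)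
      (by rintro (k | k)
          · exact (hAc k).preimage continuous_subtype_val
          · exact (hBc k).preimage continuous_subtype_val)
      (by
        refine eq_univ_of_forall fun x => ?_
        rcases hcov x.2.1 with h | h
        · obtain ⟨k, hk⟩ := mem_iUnion.1 (hA h)
          exact mem_iUnion.2 ⟨Sum.inl k, hk⟩
        · obtain ⟨k, hk⟩ := mem_iUnion.1 (hB h)
          exact mem_iUnion.2 ⟨Sum.inr k, hk⟩)
    have hn := mem_interior_iff_mem_nhds.1 ht0
    rw [nhds_subtype_eq_comap, mem_comap] at hn
    obtain ⟨V, hV, hVs⟩ := hn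
    have hV2 : V ∩ Ioo a b ∈ 𝓝 (t0 : ℝ) := inter_mem hV (isOpen_Ioo.mem_nhds t0.2.1)
    obtain ⟨ε, hε, hεs⟩ := Metric.mem_nhds_iff.1 hV2
    rw [Real.ball_eq_Ioo] at hεs
    have hmem : (t0 : ℝ) ∈ Ioo ((t0 : ℝ) - ε) (t0 + ε) := ⟨by linarith, by linarith⟩
    have hsub : Ioo ((t0 : ℝ) - ε) (t0 + ε) \ (interior A ∪ interior B) ⊆ Sum.elim Ak Bk i := by
      intro u hu
      have hu' := hεs hu.1
      exact hVs (show (⟨u, hu'.2, hu.2⟩ : Fc) ∈ Subtype.val ⁻¹' V from hu'.1)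
    rcases i with k | k
    · exact baire_aux a b A B hd hcov _ (Ak k) isOpen_Ioo ordConnected_Ioo
        (fun u hu => (hεs hu).2) hsub (hAk k) (hno k) (hno' k) t0 hmem t0.2.2
    · exact baire_aux a b B A hd.symm (by rwa [union_comm]) _ (Bk k) isOpen_Ioo ordConnected_Ioo
        (fun u hu => (hεs hu).2) (by rw [union_comm]; exact hsub) (hBk k) (hnp k) (hnp' k) t0 hmem
        (by rw [union_comm]; exact t0.2.2)
  · have hsub : Ioo a b ⊆ interior A ∪ interior B := by
      intro u hu; by_contra h; exact hF ⟨u, hu, h⟩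
    rcases isPreconnected_Ioo.subset_or_subset isOpen_interior isOpen_interior
      (hd.mono interior_subset interior_subset) hsub with h | h
    · exact Or.inl (h.trans interior_subset)
    · exact Or.inr (h.trans interior_subset)

/-- Locally a.e. constant sets on an interval are a.e. constant, or there is a jump. -/
lemma jump_line (p q : ℝ) (A T : Set ℝ)
    (hfin : (T ∩ Ioo p q).Finite)
    (hT : ∀ a b, a < b → Ioo a b ⊆ Ioo p q → Disjoint T (Ioo a b) →
      volume (Ioo a b ∩ A) = 0 ∨ volume (Ioo a b \ A) = 0)
    (h1 : volume (Ioo p q ∩ A) ≠ 0) (h2 : volume (Ioo p q \ A) ≠ 0) :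
    ∃ τ ∈ T, ∃ a b : ℚ, p < a ∧ (a : ℝ) < τ ∧ τ < b ∧ b < q ∧
      ((volume (Ioo (a : ℝ) τ \ A) = 0 ∧ volume (Ioo τ (b : ℝ) ∩ A) = 0) ∨
       (volume (Ioo (a : ℝ) τ ∩ A) = 0 ∧ volume (Ioo τ (b : ℝ) \ A) = 0)) := by
  by_contra! hcon
  -- every point has a neighbourhood on which `A` is trivial
  have key : ∀ t ∈ Ioo p q, ∃ a b : ℝ, a < t ∧ t < b ∧
      (volume (Ioo a b ∩ A) = 0 ∨ volume (Ioo a b \ A) = 0) := by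
    intro t ht
    have hcl : IsClosed ((T ∩ Ioo p q) \ {t}) := (hfin.subset diff_subset).isClosed
    have hn : Ioo p q ∩ ((T ∩ Ioo p q) \ {t})ᶜ ∈ 𝓝 t :=
      inter_mem (isOpen_Ioo.mem_nhds ht) (hcl.isOpen_compl.mem_nhds (by simp))
    obtain ⟨ε, hε, hεs⟩ := Metric.mem_nhds_iff.1 hn
    rw [Real.ball_eq_Ioo] at hεs
    obtain ⟨a, ha1, ha2⟩ := exists_rat_btwn (show t - ε < t by linarith)
    obtain ⟨b, hb1, hb2⟩ := exists_rat_btwn (show t < t + ε by linarith)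
    have hsubL : Ioo (a : ℝ) t ⊆ Ioo (t - ε) (t + ε) := fun u hu =>
      ⟨by linarith [hu.1], by linarith [hu.2]⟩
    have hsubR : Ioo t (b : ℝ) ⊆ Ioo (t - ε) (t + ε) := fun u hu =>
      ⟨by linarith [hu.1], by linarith [hu.2]⟩
    have hL := hT a t ha2 (fun u hu => (hεs (hsubL hu)).1) (by
      rw [Set.disjoint_left]; intro u huT hu
      have := hεs (hsubL hu)
      exact this.2 ⟨⟨huT, this.1⟩, ne_of_lt hu.2⟩)
    have hR := hT t b hb1 (fun u hu => (hεs (hsubR hu)).1) (by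
      rw [Set.disjoint_left]; intro u huT hu
      have := hεs (hsubR hu)
      exact this.2 ⟨⟨huT, this.1⟩, ne_of_gt hu.1⟩)
    have hcovI : Ioo (a : ℝ) b ⊆ Ioo (a : ℝ) t ∪ {t} ∪ Ioo t (b : ℝ) := by
      intro u hu
      rcases lt_trichotomy u t with h | h | h
      · exact Or.inl (Or.inl ⟨hu.1, h⟩)
      · exact Or.inl (Or.inr h)
      · exact Or.inr ⟨h, hu.2⟩
    have hpa : p < a := by
      by_contra h
      push Not at h
      by_cases hpt : p ∈ Ioo (t - ε) (t + ε)
      · exact lt_irrefl _ (hεs hpt).1.1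
      · apply hpt; exact ⟨by linarith, by linarith [ht.1]⟩
    have hbq : b < q := by
      by_contra h
      push Not at h
      by_cases hpt : q ∈ Ioo (t - ε) (t + ε)
      · exact lt_irrefl _ (hεs hpt).1.2
      · apply hpt; exact ⟨by linarith [ht.2], by linarith⟩
    have glue : ∀ C : Set ℝ, volume (Ioo (a : ℝ) t ∩ C) = 0 → volume (Ioo t (b : ℝ) ∩ C) = 0 →
        volume (Ioo (a : ℝ) b ∩ C) = 0 := by
      intro C hC1 hC2
      have h3 : volume ({t} ∩ C) = 0 := measure_mono_null inter_subset_left (by simp)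
      refine measure_mono_null ?_ (measure_union_null (measure_union_null hC1 h3) hC2)
      rw [← union_inter_distrib_right, ← union_inter_distrib_right]
      exact inter_subset_inter_left _ hcovI
    by_cases htT : t ∈ T
    · have := hcon t htT a b hpa ha2 hb1 hbq
      rcases hL with hL | hL <;> rcases hR with hR | hR
      · exact ⟨a, b, ha2, hb1, Or.inl (glue A hL hR)⟩
      · exact absurd hR (this.2 hL)
      · exact absurd hR (this.1 hL)
      · exact ⟨a, b, ha2, hb1, Or.inr (glue Aᶜ hL hR)⟩
    · refine ⟨a, b, ha2, hb1, hT a b (ha2.trans hb1) (fun u hu => ⟨hpa.trans hu.1, hu.2.trans hbq⟩) ?_⟩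
      rw [Set.disjoint_left]; intro u huT hu
      rcases hcovI hu with (h | h) | h
      · exact (hεs (hsubL h)).2 ⟨⟨huT, (hεs (hsubL h)).1⟩, ne_of_lt h.2⟩
      · exact htT (h ▸ huT)
      · exact (hεs (hsubR h)).2 ⟨⟨huT, (hεs (hsubR h)).1⟩, ne_of_gt h.1⟩
  set P : Set ℝ := {t | ∃ a b : ℝ, a < t ∧ t < b ∧ volume (Ioo a b ∩ A) = 0}
  set Q : Set ℝ := {t | ∃ a b : ℝ, a < t ∧ t < b ∧ volume (Ioo a b \ A) = 0}
  have hPo : IsOpen P := by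
    rw [isOpen_iff_mem_nhds]
    rintro t ⟨a, b, ha, hb, h⟩
    filter_upwards [Ioo_mem_nhds ha hb] with u hu
    exact ⟨a, b, hu.1, hu.2, h⟩
  have hQo : IsOpen Q := by
    rw [isOpen_iff_mem_nhds]
    rintro t ⟨a, b, ha, hb, h⟩
    filter_upwards [Ioo_mem_nhds ha hb] with u hu
    exact ⟨a, b, hu.1, hu.2, h⟩
  have hPQ : Disjoint P Q := by
    rw [Set.disjoint_left]
    rintro t ⟨a, b, ha, hb, h⟩ ⟨c, d, hc, hd, h'⟩
    have : volume (Ioo (max a c) (min b d)) = 0 := by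
      refine measure_mono_null ?_ (measure_union_null h h')
      intro u hu
      by_cases huA : u ∈ A
      · exact Or.inl ⟨⟨(le_max_left _ _).trans_lt hu.1, hu.2.trans_le (min_le_left _ _)⟩, huA⟩
      · exact Or.inr ⟨⟨(le_max_right _ _).trans_lt hu.1, hu.2.trans_le (min_le_right _ _)⟩, huA⟩
    rw [Real.volume_Ioo, ENNReal.ofReal_eq_zero] at this
    have h3 : max a c < min b d := (max_lt ha hc).trans (lt_min hb hd)
    linarith
  have hcov : Ioo p q ⊆ P ∪ Q := by
    intro t ht
    obtain ⟨a, b, ha, hb, h | h⟩ := key t ht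
    · exact Or.inl ⟨a, b, ha, hb, h⟩
    · exact Or.inr ⟨a, b, ha, hb, h⟩
  rcases isPreconnected_Ioo.subset_or_subset hPo hQo hPQ hcov with h | h
  · apply h1
    refine measure_null_of_locally_null _ fun t ht => ?_
    obtain ⟨a, b, ha, hb, h⟩ := h ht.1
    refine ⟨Ioo a b ∩ A, ?_, h⟩
    filter_upwards [mem_nhdsWithin_of_mem_nhds (Ioo_mem_nhds ha hb), self_mem_nhdsWithin] with u hu hu'
    exact ⟨hu, hu'.2⟩
  · apply h2
    refine measure_null_of_locally_null _ fun t ht => ?_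
    obtain ⟨a, b, ha, hb, h⟩ := h ht.1
    refine ⟨Ioo a b \ A, ?_, h⟩
    filter_upwards [mem_nhdsWithin_of_mem_nhds (Ioo_mem_nhds ha hb), self_mem_nhdsWithin] with u hu hu'
    exact ⟨hu, hu'.2⟩


section density
variable {N : ℕ}

local notation "𝕏" => EuclideanSpace ℝ (Fin N)

lemma vball_pos (x : 𝕏) {r : ℝ} (hr : 0 < r) : volume (ball x r) ≠ 0 :=
  (measure_ball_pos volume x hr).ne'

lemma vball_top (x : 𝕏) (r : ℝ) : volume (ball x r) ≠ ⊤ := measure_ball_lt_top.ne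

lemma ratio_compl {E : Set 𝕏} (hE : MeasurableSet E) (x : 𝕏) {r : ℝ} (hr : 0 < r) :
    volume (Eᶜ ∩ ball x r) / volume (ball x r) = 1 - volume (E ∩ ball x r) / volume (ball x r) := by
  have h1 : Eᶜ ∩ ball x r = ball x r \ (E ∩ ball x r) := by
    ext y; simp only [mem_inter_iff, mem_compl_iff, mem_diff]; tauto
  have hfin : volume (E ∩ ball x r) ≠ ⊤ := measure_ne_top_of_subset inter_subset_right (vball_top x r)
  rw [h1, measure_sdiff inter_subset_right (hE.inter measurableSet_ball).nullMeasurableSet hfin,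
    ENNReal.sub_div (fun _ _ => vball_pos x hr), ENNReal.div_self (vball_pos x hr) (vball_top x r)]

lemma zero_sub_one {E : Set 𝕏} (hE : MeasurableSet E) :
    densityZeroPts E ⊆ densityOnePts Eᶜ := by
  intro x hx
  have h : Tendsto (fun r : ℝ => 1 - volume (E ∩ ball x r) / volume (ball x r)) (𝓝[>] 0)
      (𝓝 (1 - 0)) := ENNReal.Tendsto.sub tendsto_const_nhds hx (Or.inl ENNReal.one_ne_top)
  rw [tsub_zero] at h
  refine h.congr' ?_
  filter_upwards [self_mem_nhdsWithin] with r hr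
  exact (ratio_compl hE x hr).symm

lemma one_sub_zero {E : Set 𝕏} (hE : MeasurableSet E) :
    densityOnePts E ⊆ densityZeroPts Eᶜ := by
  intro x hx
  have h : Tendsto (fun r : ℝ => 1 - volume (E ∩ ball x r) / volume (ball x r)) (𝓝[>] 0)
      (𝓝 (1 - 1)) := ENNReal.Tendsto.sub tendsto_const_nhds hx (Or.inl ENNReal.one_ne_top)
  rw [tsub_self] at h
  refine h.congr' ?_
  filter_upwards [self_mem_nhdsWithin] with r hr
  exact (ratio_compl hE x hr).symm

lemma one_compl {E : Set 𝕏} (hE : MeasurableSet E) : densityOnePts Eᶜ = densityZeroPts E := by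
  apply Subset.antisymm _ (zero_sub_one hE)
  have := one_sub_zero hE.compl
  rwa [compl_compl] at this

lemma zero_compl {E : Set 𝕏} (hE : MeasurableSet E) : densityZeroPts Eᶜ = densityOnePts E := by
  have := one_compl hE.compl
  rw [compl_compl] at this
  exact this.symm

lemma essBdry_compl {E : Set 𝕏} (hE : MeasurableSet E) : essBdry Eᶜ = essBdry E := by
  unfold essBdry
  rw [one_compl hE, zero_compl hE, union_comm]

lemma one_disj_zero (E : Set 𝕏) : Disjoint (densityOnePts E) (densityZeroPts E) := by
  rw [Set.disjoint_left]
  intro x h1 h0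
  exact one_ne_zero (tendsto_nhds_unique h1 h0)

lemma ae_one {E : Set 𝕏} (hE : MeasurableSet E) : volume (E \ densityOnePts E) = 0 := by
  have h := Besicovitch.ae_tendsto_measure_inter_div (volume : Measure 𝕏) E
  rw [ae_restrict_iff' hE] at h
  refine measure_mono_null ?_ h
  intro x hx
  simp only [mem_compl_iff, mem_setOf_eq]
  intro hcon
  apply hx.2
  have := hcon hx.1
  refine this.congr' ?_
  filter_upwards [self_mem_nhdsWithin] with r hr
  have hr' : r ≠ 0 := ne_of_gt hr
  have hae : (closedBall x r : Set 𝕏) =ᵐ[volume] ball x r := by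
    rw [← ball_union_sphere]
    refine union_ae_eq_left_of_ae_eq_empty ?_
    exact ae_eq_empty.2 (Measure.addHaar_sphere_of_ne_zero _ _ hr')
  have h1 : volume (E ∩ closedBall x r) = volume (E ∩ ball x r) :=
    measure_congr ((ae_eq_refl E).inter hae)
  rw [h1, measure_congr hae]

lemma ae_zero {E : Set 𝕏} (hE : MeasurableSet E) : volume (Eᶜ \ densityZeroPts E) = 0 := by
  have := ae_one hE.compl
  rwa [one_compl hE] at this

lemma one_diff_null {E : Set 𝕏} (hE : MeasurableSet E) : volume (densityOnePts E \ E) = 0 := by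
  refine measure_mono_null ?_ (ae_zero hE)
  intro x hx
  exact ⟨hx.2, fun h => Set.disjoint_left.1 (one_disj_zero E) hx.1 h⟩

/-- Points where the density of `E` is at most `δ` at all scales below `1/(k+1)`. -/
def lowSet (E : Set 𝕏) (δ : ℝ≥0∞) (k : ℕ) : Set 𝕏 :=
  {x | ∀ r : ℝ, 0 < r → r < 1 / ((k : ℝ) + 1) → volume (E ∩ ball x r) ≤ δ * volume (ball x r)}

lemma lowSet_mono (E : Set 𝕏) {δ δ' : ℝ≥0∞} (h : δ ≤ δ') (k : ℕ) : lowSet E δ k ⊆ lowSet E δ' k :=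
  fun _ hx r h1 h2 => (hx r h1 h2).trans (by gcongr)

lemma lowSet_closed (E : Set 𝕏) (δ : ℝ≥0∞) (k : ℕ) : IsClosed (lowSet E δ k) := by
  rw [← isSeqClosed_iff_isClosed]
  intro u x hu hux r hr hrk
  -- exhaust the ball by smaller ones
  have hun : E ∩ ball x r = ⋃ m : ℕ, E ∩ ball x (r - r / (m + 2)) := by
    rw [← inter_iUnion]
    congr 1
    ext y
    simp only [mem_ball, mem_iUnion]
    constructor
    · intro hy
      obtain ⟨m, hm⟩ := exists_nat_gt (r / (r - dist y x))
      refine ⟨m, ?_⟩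
      have h1 : 0 < r - dist y x := by linarith
      rw [div_lt_iff₀ h1] at hm
      have h2 : (0 : ℝ) < m + 2 := by positivity
      have : r / (m + 2) < r - dist y x := by
        rw [div_lt_iff₀ h2]; nlinarith
      linarith
    · rintro ⟨m, hm⟩
      have : 0 < r / ((m : ℝ) + 2) := by positivity
      linarith
  rw [hun, Monotone.measure_iUnion]
  · refine iSup_le fun m => ?_
    have hpos : 0 < r / ((m : ℝ) + 2) := by positivity
    obtain ⟨j, hj⟩ := ((Metric.tendsto_atTop.1 hux) _ hpos)
    have hj := hj j le_rfl
    calc volume (E ∩ ball x (r - r / (m + 2))) ≤ volume (E ∩ ball (u j) r) := by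
          apply measure_mono
          apply inter_subset_inter_right
          apply ball_subset_ball'
          rw [dist_comm] at hj
          linarith
      _ ≤ δ * volume (ball (u j) r) := hu j r hr hrk
      _ = δ * volume (ball x r) := by
          rw [Measure.addHaar_ball_center, Measure.addHaar_ball_center volume x]
  · intro a b hab
    apply inter_subset_inter_right
    apply ball_subset_ball
    have : r / ((b : ℝ) + 2) ≤ r / ((a : ℝ) + 2) := by
      have : (a : ℝ) ≤ b := by exact_mod_cast hab
      gcongr
    linarith

lemma zero_sub_low (E : Set 𝕏) {δ : ℝ≥0∞} (hδ : 0 < δ) : densityZeroPts E ⊆ ⋃ k, lowSet E δ k := by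
  intro x hx
  have h : ∀ᶠ r in 𝓝[>] (0 : ℝ), volume (E ∩ ball x r) / volume (ball x r) < δ :=
    hx.eventually (gt_mem_nhds hδ)
  rw [eventually_nhdsWithin_iff] at h
  obtain ⟨ε, hε, hh⟩ := Metric.eventually_nhds_iff.1 h
  obtain ⟨k, hk⟩ := exists_nat_one_div_lt hε
  refine mem_iUnion.2 ⟨k, fun r hr hrk => ?_⟩
  have := hh (y := r) (by rw [Real.dist_eq, sub_zero, abs_of_pos hr]; linarith) hr
  exact (ENNReal.div_le_iff (vball_pos x hr) (vball_top x r)).1 this.le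

lemma low_disj_one (E : Set 𝕏) {δ : ℝ≥0∞} (hδ : δ < 1) (k : ℕ) :
    Disjoint (lowSet E δ k) (densityOnePts E) := by
  rw [Set.disjoint_left]
  intro x hx h1
  have h : ∀ᶠ r in 𝓝[>] (0 : ℝ), δ < volume (E ∩ ball x r) / volume (ball x r) :=
    h1.eventually (lt_mem_nhds hδ)
  have h2 : ∀ᶠ r in 𝓝[>] (0 : ℝ), r < 1 / ((k : ℝ) + 1) :=
    mem_nhdsWithin_of_mem_nhds (gt_mem_nhds (by positivity))
  obtain ⟨r, hr1, hr2, hr3⟩ := (h.and (h2.and self_mem_nhdsWithin)).exists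
  exact absurd ((ENNReal.div_le_iff (vball_pos x hr3) (vball_top x r)).2 (hx r hr3 hr2)) (not_le.2 hr1)

end density


section slicing
variable {N : ℕ} {B : Type*} [NormedAddCommGroup B] [NormedSpace ℝ B] [FiniteDimensional ℝ B]
  [MeasurableSpace B] [BorelSpace B]

local notation "𝕏" => EuclideanSpace ℝ (Fin N)

lemma haar_scale (Ψ : (B × ℝ) ≃L[ℝ] 𝕏) (μ : Measure B) [μ.IsAddHaarMeasure] :
    ∃ c : ℝ≥0∞, c ≠ 0 ∧ c ≠ ⊤ ∧ ∀ s : Set (B × ℝ), volume (Ψ '' s) = c * (μ.prod volume) s := by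
  have hm : (Measure.map Ψ (μ.prod (volume : Measure ℝ))).IsAddHaarMeasure :=
    Ψ.isAddHaarMeasure_map _
  have h := Measure.isAddLeftInvariant_eq_smul (volume : Measure 𝕏)
    (Measure.map Ψ (μ.prod (volume : Measure ℝ)))
  set c := (volume : Measure 𝕏).addHaarScalarFactor (Measure.map Ψ (μ.prod (volume : Measure ℝ)))
    with hc
  have hc0 : 0 < c := Measure.addHaarScalarFactor_pos_of_isAddHaarMeasure _ _
  refine ⟨c, by exact_mod_cast hc0.ne', ENNReal.coe_ne_top, fun s => ?_⟩
  rw [h, Measure.smul_apply]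
  have hme : Measure.map Ψ (μ.prod (volume : Measure ℝ)) (Ψ '' s) = (μ.prod volume) s := by
    have := (Ψ.toHomeomorph.toMeasurableEquiv).map_apply (μ := μ.prod (volume : Measure ℝ)) (Ψ '' s)
    refine this.trans ?_
    congr 1
    exact preimage_image_eq _ Ψ.injective
  rw [hme]
  rfl

lemma slice_null_up (Ψ : (B × ℝ) ≃L[ℝ] 𝕏) (μ : Measure B) [μ.IsAddHaarMeasure] :
    ∃ δ : ℝ≥0∞, 0 < δ ∧ ∀ E : Set 𝕏, MeasurableSet E → ∀ k : ℕ,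
      μ {z | ∃ t ε : ℝ, 0 < ε ∧ Ψ (z, t) ∈ lowSet E δ k ∧
        ∀ s ∈ Ioo t (t + ε), Ψ (z, s) ∈ densityOnePts E} = 0 := by
  obtain ⟨c, hc0, hct, hc⟩ := haar_scale Ψ μ
  set C : ℝ := ‖(Ψ : (B × ℝ) →L[ℝ] 𝕏)‖ + 1 with hC
  have hCpos : 0 < C := by positivity
  set n := Module.finrank ℝ B with hn
  have hN : Module.finrank ℝ 𝕏 = n + 1 := by
    rw [← Ψ.toLinearEquiv.finrank_eq, Module.finrank_prod, Module.finrank_self]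
  have hL : c * (2⁻¹ * μ (ball 0 1)) ≠ 0 := by
    have := (measure_ball_pos μ (0 : B) one_pos).ne'
    simp [hc0, this]
  have hKt : ENNReal.ofReal ((3 * C) ^ (n + 1)) * volume (ball (0 : 𝕏) 1) ≠ ⊤ :=
    ENNReal.mul_ne_top ENNReal.ofReal_ne_top (vball_top _ _)
  obtain ⟨δ, hδ0, hδ⟩ := ENNReal.exists_nnreal_pos_mul_lt hKt hL
  refine ⟨δ, by exact_mod_cast hδ0, fun E hE k => ?_⟩
  -- decomposition
  set η : ℕ → ℝ := fun m => 1 / (2 * ((m : ℝ) + 1)) with hη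
  have hηpos : ∀ m, 0 < η m := fun m => by positivity
  set T : ℕ → ℤ → Set B := fun m j => {z | ∃ t : ℝ, j * η m ≤ t ∧ t < (j + 1) * η m ∧
      Ψ (z, t) ∈ lowSet E δ k ∧ ∀ s ∈ Ioo t (t + 2 * η m), Ψ (z, s) ∈ densityOnePts E} with hT
  suffices h : ∀ m j, μ (T m j) = 0 by
    refine measure_mono_null ?_ (measure_iUnion_null fun m => measure_iUnion_null fun j => h m j)
    rintro z ⟨t, ε, hε, h1, h2⟩
    obtain ⟨m, hm⟩ := exists_nat_one_div_lt hε
    have h2η : 2 * η m < ε := by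
      have : 2 * η m = 1 / ((m : ℝ) + 1) := by simp only [hη]; field_simp
      rw [this]; exact hm
    refine mem_iUnion.2 ⟨m, mem_iUnion.2 ⟨⌊t / η m⌋, t, ?_, ?_, h1, ?_⟩⟩
    · exact (le_div_iff₀ (hηpos m)).1 (Int.floor_le _)
    · exact (div_lt_iff₀ (hηpos m)).1 (Int.lt_floor_add_one _)
    · intro s hs; exact h2 s ⟨hs.1, by linarith [hs.2]⟩
  intro m j
  by_contra hne
  have hd := Besicovitch.ae_tendsto_measure_inter_div μ (T m j)
  have hne' : NeBot (ae (μ.restrict (T m j))) := by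
    rw [ae_neBot]; intro h; exact hne (Measure.restrict_eq_zero.1 h)
  obtain ⟨z0, hz0⟩ := hd.exists
  have e1 : ∀ᶠ r in 𝓝[>] (0 : ℝ), (2⁻¹ : ℝ≥0∞) <
      μ (T m j ∩ closedBall z0 r) / μ (closedBall z0 r) :=
    hz0.eventually (lt_mem_nhds (by simp))
  have e2 : ∀ᶠ r in 𝓝[>] (0 : ℝ), r < η m / 2 :=
    mem_nhdsWithin_of_mem_nhds (gt_mem_nhds (by have := hηpos m; positivity))
  have e3 : ∀ᶠ r in 𝓝[>] (0 : ℝ), r < 1 / ((k : ℝ) + 1) / (3 * C) :=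
    mem_nhdsWithin_of_mem_nhds (gt_mem_nhds (by positivity))
  obtain ⟨r, hr1, hr2, hr3, hr⟩ := (e1.and (e2.and (e3.and self_mem_nhdsWithin))).exists
  have hr : 0 < r := hr
  have hball : μ (closedBall z0 r) = ENNReal.ofReal (r ^ n) * μ (ball 0 1) :=
    Measure.addHaar_closedBall μ z0 hr.le
  have hb0 : μ (closedBall z0 r) ≠ 0 := (measure_closedBall_pos μ z0 hr).ne'
  have hbt : μ (closedBall z0 r) ≠ ⊤ := measure_closedBall_lt_top.ne
  set A := T m j ∩ closedBall z0 r with hA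
  have hAm : 2⁻¹ * μ (closedBall z0 r) ≤ μ A :=
    (ENNReal.le_div_iff_mul_le (Or.inl hb0) (Or.inl hbt)).1 hr1.le
  -- almost highest point
  set Hs : Set ℝ := {t | ∃ z ∈ closedBall z0 r, j * η m ≤ t ∧ t < (j + 1) * η m ∧
      Ψ (z, t) ∈ lowSet E δ k ∧ ∀ s ∈ Ioo t (t + 2 * η m), Ψ (z, s) ∈ densityOnePts E} with hHs
  have hAne : A.Nonempty := by
    by_contra h
    rw [not_nonempty_iff_eq_empty] at h
    rw [h, measure_empty] at hAm
    simp [hb0] at hAm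
  have hHne : Hs.Nonempty := by
    obtain ⟨z, ⟨t, ht⟩, hz⟩ := hAne
    exact ⟨t, z, hz, ht⟩
  have hHb : BddAbove Hs := ⟨(j + 1) * η m, by rintro t ⟨z, hz, h1, h2, _⟩; exact h2.le⟩
  obtain ⟨t1, ⟨z1, hz1, ht1a, ht1b, hlow, -⟩, ht1⟩ :=
    exists_lt_of_lt_csSup hHne (show sSup Hs - r < sSup Hs by linarith)
  have hsub : Ψ '' (A ×ˢ Ioo (t1 + r) (t1 + 2 * r)) ⊆ densityOnePts E ∩ ball (Ψ (z1, t1)) (3 * C * r) := by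
    rintro _ ⟨⟨z, s⟩, ⟨⟨⟨t, h1, h2, h3, h4⟩, hz⟩, hs⟩, rfl⟩
    have hs : s ∈ Ioo (t1 + r) (t1 + 2 * r) := hs
    have hz : z ∈ closedBall z0 r := hz
    constructor
    · apply h4
      have hle : t ≤ sSup Hs := le_csSup hHb ⟨z, hz, h1, h2, h3, h4⟩
      constructor
      · linarith [hs.1]
      · nlinarith [hs.2]
    · rw [mem_ball, dist_eq_norm, ← map_sub]
      have hnorm : ‖((z, s) : B × ℝ) - (z1, t1)‖ ≤ 2 * r := by
        rw [Prod.mk_sub_mk, Prod.norm_mk]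
        apply max_le
        · have := dist_triangle_right z z1 z0
          rw [← dist_eq_norm]
          have h5 := mem_closedBall.1 hz
          have h6 := mem_closedBall.1 hz1
          linarith
        · rw [Real.norm_eq_abs, abs_le]; constructor <;> linarith [hs.1, hs.2]
      calc ‖Ψ ((z, s) - (z1, t1))‖ ≤ ‖(Ψ : (B × ℝ) →L[ℝ] 𝕏)‖ * ‖((z, s) : B × ℝ) - (z1, t1)‖ :=
            (Ψ : (B × ℝ) →L[ℝ] 𝕏).le_opNorm _
        _ ≤ C * (2 * r) := by
            apply mul_le_mul _ hnorm (norm_nonneg _) hCpos.le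
            rw [hC]; linarith
        _ < 3 * C * r := by nlinarith [mul_pos hCpos hr]
  have hRpos : 0 < 3 * C * r := by positivity
  have hlowb := hlow (3 * C * r) hRpos (by
    rw [lt_div_iff₀ (by positivity)] at hr3; linarith)
  have hchain : c * (2⁻¹ * (ENNReal.ofReal (r ^ n) * μ (ball 0 1)) * ENNReal.ofReal r) ≤
      δ * (ENNReal.ofReal ((3 * C * r) ^ (n + 1)) * volume (ball (0 : 𝕏) 1)) := by
    calc c * (2⁻¹ * (ENNReal.ofReal (r ^ n) * μ (ball 0 1)) * ENNReal.ofReal r)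
        ≤ c * (μ A * ENNReal.ofReal r) := by rw [← hball]; gcongr
      _ = c * ((μ.prod volume) (A ×ˢ Ioo (t1 + r) (t1 + 2 * r))) := by
          rw [Measure.prod_prod, Real.volume_Ioo]; congr 3; ring
      _ = volume (Ψ '' (A ×ˢ Ioo (t1 + r) (t1 + 2 * r))) := (hc _).symm
      _ ≤ volume (densityOnePts E ∩ ball (Ψ (z1, t1)) (3 * C * r)) := measure_mono hsub
      _ ≤ volume ((E ∩ ball (Ψ (z1, t1)) (3 * C * r)) ∪ (densityOnePts E \ E)) := by
          apply measure_mono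
          rintro x ⟨h1, h2⟩
          by_cases hx : x ∈ E
          · exact Or.inl ⟨hx, h2⟩
          · exact Or.inr ⟨h1, hx⟩
      _ ≤ volume (E ∩ ball (Ψ (z1, t1)) (3 * C * r)) + 0 := by
          rw [← one_diff_null hE]; exact measure_union_le _ _
      _ ≤ δ * volume (ball (Ψ (z1, t1)) (3 * C * r)) := by rw [add_zero]; exact hlowb
      _ = _ := by rw [Measure.addHaar_ball_of_pos volume _ hRpos, hN]
  have hrw1 : c * (2⁻¹ * (ENNReal.ofReal (r ^ n) * μ (ball 0 1)) * ENNReal.ofReal r) =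
      (c * (2⁻¹ * μ (ball 0 1))) * ENNReal.ofReal (r ^ (n + 1)) := by
    rw [pow_succ, ENNReal.ofReal_mul (by positivity)]; ring
  have hrw2 : δ * (ENNReal.ofReal ((3 * C * r) ^ (n + 1)) * volume (ball (0 : 𝕏) 1)) =
      (δ * (ENNReal.ofReal ((3 * C) ^ (n + 1)) * volume (ball (0 : 𝕏) 1))) *
        ENNReal.ofReal (r ^ (n + 1)) := by
    rw [mul_pow, ENNReal.ofReal_mul (by positivity)]; ring
  rw [hrw1, hrw2] at hchain
  have hrp : ENNReal.ofReal (r ^ (n + 1)) ≠ 0 := by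
    simp only [ne_eq, ENNReal.ofReal_eq_zero, not_le]; positivity
  have := (ENNReal.mul_le_mul_iff_left hrp ENNReal.ofReal_ne_top).1 hchain
  exact absurd this (not_le.2 hδ)

/-- Key slicing lemma: on almost every line, an interval missing the essential boundary is
a.e. contained in `E` or in its complement. -/
lemma slice_lemma (Ψ : (B × ℝ) ≃L[ℝ] 𝕏) (μ : Measure B) [μ.IsAddHaarMeasure] {E : Set 𝕏}
    (hE : MeasurableSet E) :
    ∀ᵐ z ∂μ, ∀ a b : ℝ, (∀ t ∈ Ioo a b, Ψ (z, t) ∉ essBdry E) →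
      volume (Ioo a b ∩ {t | Ψ (z, t) ∈ E}) = 0 ∨ volume (Ioo a b \ {t | Ψ (z, t) ∈ E}) = 0 := by
  obtain ⟨δ1, hδ1, hup⟩ := slice_null_up Ψ μ
  set Ψ' : (B × ℝ) ≃L[ℝ] 𝕏 :=
    ((ContinuousLinearEquiv.refl ℝ B).prodCongr (ContinuousLinearEquiv.neg ℝ)).trans Ψ with hΨ'
  have hΨ'a : ∀ z t, Ψ' (z, t) = Ψ (z, -t) := fun z t => rfl
  obtain ⟨δ2, hδ2, hdn⟩ := slice_null_up Ψ' μ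
  set δ : ℝ≥0∞ := min (min δ1 δ2) 2⁻¹ with hδ
  have hδpos : 0 < δ := by simp [hδ, hδ1, hδ2]
  have hδlt : δ < 1 := (min_le_right _ _).trans_lt (by simp)
  have hle1 : δ ≤ δ1 := (min_le_left _ _).trans (min_le_left _ _)
  have hle2 : δ ≤ δ2 := (min_le_left _ _).trans (min_le_right _ _)
  have U : ∀ E : Set 𝕏, MeasurableSet E → ∀ᵐ z ∂μ, ∀ k : ℕ, ∀ t ε : ℝ, 0 < ε →
      Ψ (z, t) ∈ lowSet E δ k → ¬ (Ioo t (t + ε) ⊆ {s | Ψ (z, s) ∈ densityOnePts E}) := by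
    intro E hE
    rw [ae_all_iff]
    intro k
    refine measure_mono_null ?_ (hup E hE k)
    intro z hz
    simp only [mem_compl_iff, mem_ofPred_eq] at hz
    push Not at hz
    obtain ⟨t, ε, h1, h2, h3⟩ := hz
    exact ⟨t, ε, h1, lowSet_mono E hle1 k h2, fun s hs => h3 hs⟩
  have W : ∀ E : Set 𝕏, MeasurableSet E → ∀ᵐ z ∂μ, ∀ k : ℕ, ∀ t ε : ℝ, 0 < ε →
      Ψ (z, t) ∈ lowSet E δ k → ¬ (Ioo (t - ε) t ⊆ {s | Ψ (z, s) ∈ densityOnePts E}) := by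
    intro E hE
    rw [ae_all_iff]
    intro k
    refine measure_mono_null ?_ (hdn E hE k)
    intro z hz
    simp only [mem_compl_iff, mem_ofPred_eq] at hz
    push Not at hz
    obtain ⟨t, ε, h1, h2, h3⟩ := hz
    refine ⟨-t, ε, h1, ?_, fun s hs => ?_⟩
    · rw [hΨ'a, neg_neg]; exact lowSet_mono E hle2 k h2
    · rw [hΨ'a]; exact h3 (show -s ∈ _ from ⟨by linarith [hs.2], by linarith [hs.1]⟩)
  -- almost every line sees the densities
  obtain ⟨c, hc0, hct, hc⟩ := haar_scale Ψ μ
  have V : ∀ A : Set 𝕏, volume A = 0 → ∀ᵐ z ∂μ, volume {t | Ψ (z, t) ∈ A} = 0 := by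
    intro A hA
    have h0 : (μ.prod volume) (Ψ ⁻¹' A) = 0 := by
      have := hc (Ψ ⁻¹' A)
      rw [image_preimage_eq _ Ψ.surjective, hA] at this
      exact (mul_eq_zero.1 this.symm).resolve_left hc0
    exact Measure.ae_ae_of_ae_prod (p := fun x => x ∉ Ψ ⁻¹' A) (measure_eq_zero_iff_ae_notMem.1 h0)
      |>.mono fun z hz => measure_eq_zero_iff_ae_notMem.2 hz
  filter_upwards [U E hE, U Eᶜ hE.compl, W E hE, W Eᶜ hE.compl, V _ (ae_zero hE), V _ (ae_one hE)]
    with z hU hU' hW hW' hV0 hV1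
  intro a b hab
  have hcont : Continuous fun t : ℝ => Ψ (z, t) := Ψ.continuous.comp (by fun_prop)
  rw [one_compl hE] at hU' hW'
  have hres := baire_line a b {t | Ψ (z, t) ∈ densityZeroPts E} {t | Ψ (z, t) ∈ densityOnePts E}
    (by
      rw [Set.disjoint_left]
      intro t h0 h1
      exact Set.disjoint_left.1 (one_disj_zero E) h1 h0)
    (by
      intro t ht
      have := hab t ht
      unfold essBdry at this
      rw [notMem_compl_iff] at this
      exact this.symm)
    (fun k => {t | Ψ (z, t) ∈ lowSet E δ k}) (fun k => {t | Ψ (z, t) ∈ lowSet Eᶜ δ k})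
    (fun k => (lowSet_closed E δ k).preimage hcont)
    (fun k => (lowSet_closed Eᶜ δ k).preimage hcont)
    (by
      intro t ht
      obtain ⟨k, hk⟩ := mem_iUnion.1 (zero_sub_low E hδpos ht)
      exact mem_iUnion.2 ⟨k, hk⟩)
    (by
      intro t ht
      have ht' : Ψ (z, t) ∈ densityZeroPts Eᶜ := one_sub_zero hE ht
      obtain ⟨k, hk⟩ := mem_iUnion.1 (zero_sub_low Eᶜ hδpos ht')
      exact mem_iUnion.2 ⟨k, hk⟩)
    (by
      intro k
      rw [Set.disjoint_left]
      intro t h0 h1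
      exact Set.disjoint_left.1 (low_disj_one E hδlt k) h0 h1)
    (by
      intro k
      rw [Set.disjoint_left]
      intro t h0 h1
      exact Set.disjoint_left.1 (low_disj_one Eᶜ hδlt k) h0 (zero_sub_one hE h1))
    (fun k t ε hε ht => hU k t ε hε ht) (fun k t ε hε ht => hW k t ε hε ht)
    (fun k t ε hε ht => hU' k t ε hε ht) (fun k t ε hε ht => hW' k t ε hε ht)
  rcases hres with h | h
  · left
    refine measure_mono_null ?_ hV1
    rintro t ⟨h1, h2⟩
    exact ⟨h2, fun h3 => Set.disjoint_left.1 (one_disj_zero E) h3 (h h1)⟩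
  · right
    refine measure_mono_null ?_ hV0
    rintro t ⟨h1, h2⟩
    exact ⟨h2, fun h3 => Set.disjoint_left.1 (one_disj_zero E) (h h1) h3⟩

end slicing


section eilenberg
set_option linter.unusedSectionVars false
variable {X F : Type*} [MetricSpace X] [MeasurableSpace X] [BorelSpace X]
  [SecondCountableTopology X] [Nonempty X]
  [MetricSpace F] [MeasurableSpace F] [BorelSpace F]

/-- cells of a countable measurable partition of small mesh -/
def cell (X : Type*) [MetricSpace X] [SecondCountableTopology X] [Nonempty X] (m : ℕ) : ℕ → Set X :=
  disjointed (fun j => ball (TopologicalSpace.denseSeq X j) (1 / ((m : ℝ) + 1)))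

lemma cell_meas (m j : ℕ) : MeasurableSet (cell X m j) :=
  MeasurableSet.disjointed (fun _ => measurableSet_ball) j

lemma cell_disj (m : ℕ) : Pairwise (Function.onFun Disjoint (cell X m)) := disjoint_disjointed _

lemma cell_cover (m : ℕ) : ⋃ j, cell X m j = univ := by
  unfold cell
  rw [iUnion_disjointed]
  refine eq_univ_of_forall fun x => ?_
  obtain ⟨j, hj⟩ := (TopologicalSpace.denseRange_denseSeq X).exists_dist_lt x
    (show (0 : ℝ) < 1 / ((m : ℝ) + 1) by positivity)
  exact mem_iUnion.2 ⟨j, hj⟩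

lemma cell_dist {m j : ℕ} {x y : X} (hx : x ∈ cell X m j) (hy : y ∈ cell X m j) :
    dist x y < 2 / ((m : ℝ) + 1) := by
  have h1 := disjointed_subset _ _ hx
  have h2 := disjointed_subset _ _ hy
  rw [mem_ball] at h1 h2
  have := dist_triangle_right x y (TopologicalSpace.denseSeq X j)
  have h3 : 2 / ((m : ℝ) + 1) = 1 / ((m : ℝ) + 1) + 1 / ((m : ℝ) + 1) := by ring
  linarith

lemma eilenberg {P : X → F} (hP : LipschitzWith 1 P) {d : ℝ} (hd : 0 ≤ d) (S : Set X)
    {u : X → ℝ≥0∞} (hu : Continuous u) :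
    ∃ g : F → ℝ≥0∞, Measurable g ∧ (∀ z, (∑' x : (S ∩ P ⁻¹' {z} : Set X), u x) ≤ g z) ∧
      ∫⁻ z, g z ∂(μH[d] : Measure F) ≤ ∫⁻ x, u x ∂((μH[d] : Measure X).restrict S) := by
  set a : ℕ → ℕ → ℝ≥0∞ := fun m j => ⨅ x ∈ cell X m j, u x with ha
  set T : ℕ → ℕ → Set F := fun m j => toMeasurable μH[d] (P '' (S ∩ cell X m j)) with hT
  set Nm : ℕ → F → ℝ≥0∞ := fun m z => ∑' j, (T m j).indicator (fun _ => a m j) z with hN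
  have hNmeas : ∀ m, Measurable (Nm m) := fun m =>
    Measurable.tsum fun j => (measurable_const.indicator (measurableSet_toMeasurable _ _))
  have hNint : ∀ m, ∫⁻ z, Nm m z ∂(μH[d] : Measure F) ≤
      ∫⁻ x, u x ∂((μH[d] : Measure X).restrict S) := by
    intro m
    rw [hN]
    simp only
    rw [lintegral_tsum (fun j =>
      (measurable_const.indicator (measurableSet_toMeasurable _ _)).aemeasurable)]
    rw [← setLIntegral_univ (μ := (μH[d] : Measure X).restrict S), ← cell_cover m,
      lintegral_iUnion (cell_meas m) (cell_disj m)]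
    refine ENNReal.tsum_le_tsum fun j => ?_
    rw [lintegral_indicator (measurableSet_toMeasurable _ _), setLIntegral_const]
    calc a m j * μH[d] (T m j) = a m j * μH[d] (P '' (S ∩ cell X m j)) := by
          rw [hT]; simp only [measure_toMeasurable]
      _ ≤ a m j * μH[d] (S ∩ cell X m j) := by
          gcongr
          have := (hP.lipschitzOnWith (s := S ∩ cell X m j)).hausdorffMeasure_image_le hd
          simpa using this
      _ = a m j * ((μH[d] : Measure X).restrict S) (cell X m j) := by
          rw [Measure.restrict_apply (cell_meas m j), inter_comm]
      _ = ∫⁻ x in cell X m j, a m j ∂((μH[d] : Measure X).restrict S) := by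
          rw [setLIntegral_const]
      _ ≤ _ := by
          refine setLIntegral_mono' (cell_meas m j) fun x hx => ?_
          exact iInf₂_le x hx
  have hpt : ∀ z, (∑' x : (S ∩ P ⁻¹' {z} : Set X), u x) ≤ liminf (fun m => Nm m z) atTop := by
    intro z
    rw [ENNReal.tsum_eq_iSup_sum]
    refine iSup_le fun s => ?_
    have hidx : ∀ m (x : X), ∃ j, x ∈ cell X m j := fun m x => by
      have : x ∈ ⋃ j, cell X m j := by rw [cell_cover]; trivial
      exact mem_iUnion.1 this
    choose idx hidx using hidx
    have hlim : Tendsto (fun m : ℕ => 2 / ((m : ℝ) + 1)) atTop (𝓝 0) := by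
      have := (tendsto_one_div_add_atTop_nhds_zero_nat (𝕜 := ℝ)).const_mul 2
      simpa [div_eq_mul_inv] using this
    have hconv : ∀ x : X, Tendsto (fun m => a m (idx m x)) atTop (𝓝 (u x)) := by
      intro x
      rw [tendsto_order]
      constructor
      · intro b hb
        obtain ⟨b', hb', hb''⟩ := exists_between hb
        have h1 : ∀ᶠ y in 𝓝 x, b' < u y := hu.continuousAt.eventually (lt_mem_nhds hb'')
        obtain ⟨ε, hε, hh⟩ := Metric.eventually_nhds_iff.1 h1
        filter_upwards [hlim.eventually (gt_mem_nhds hε)] with m hm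
        refine hb'.trans_le (le_iInf₂ fun y hy => ?_)
        exact (hh ((cell_dist hy (hidx m x)).trans hm)).le
      · intro b hb
        exact Eventually.of_forall fun m => (iInf₂_le x (hidx m x)).trans_lt hb
    have hsum : Tendsto (fun m => ∑ x ∈ s, a m (idx m x)) atTop (𝓝 (∑ x ∈ s, u x)) :=
      tendsto_finsetSum _ fun x _ => hconv x
    rw [← hsum.liminf_eq]
    refine liminf_le_liminf ?_
    have hinj : ∀ᶠ m in atTop, ∀ x ∈ s, ∀ y ∈ s, idx m x = idx m y → x = y := by
      rw [Filter.eventually_all_finset]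
      intro x _
      rw [Filter.eventually_all_finset]
      intro y _
      by_cases hxy : x = y
      · exact Eventually.of_forall fun _ _ => hxy
      · have hpos : 0 < dist x y := dist_pos.2 hxy
        filter_upwards [hlim.eventually (gt_mem_nhds hpos)] with m hm heq
        exfalso
        have h1 := hidx m x
        rw [heq] at h1
        have := cell_dist h1 (hidx m y)
        have h2 : dist x y = dist (x : X) (y : X) := rfl
        linarith
    filter_upwards [hinj] with m hm
    classical
    calc ∑ x ∈ s, a m (idx m x) = ∑ x ∈ s, (T m (idx m x)).indicator (fun _ => a m (idx m x)) z := by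
          refine Finset.sum_congr rfl fun x _ => ?_
          rw [indicator_of_mem]
          exact subset_toMeasurable _ _ ⟨x, ⟨x.2.1, hidx m x⟩, x.2.2⟩
      _ = ∑ j ∈ s.image (fun x : (S ∩ P ⁻¹' {z} : Set X) => idx m (x : X)), (T m j).indicator (fun _ => a m j) z := by
          rw [Finset.sum_image]
          exact fun x hx y hy h => hm x hx y hy h
      _ ≤ Nm m z := ENNReal.sum_le_tsum _
  refine ⟨fun z => liminf (fun m => Nm m z) atTop, Measurable.liminf hNmeas, hpt, ?_⟩
  calc ∫⁻ z, liminf (fun m => Nm m z) atTop ∂(μH[d] : Measure F)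
      ≤ liminf (fun m => ∫⁻ z, Nm m z ∂(μH[d] : Measure F)) atTop := lintegral_liminf_le hNmeas
    _ ≤ _ := by
        refine liminf_le_of_frequently_le' ?_
        exact (Eventually.of_forall hNint).frequently

lemma eilenberg_finite {P : X → F} (hP : LipschitzWith 1 P) {d : ℝ} (hd : 0 ≤ d) {S : Set X}
    (hS : μH[d] S ≠ ⊤) : ∀ᵐ z ∂(μH[d] : Measure F), (S ∩ P ⁻¹' {z}).Finite := by
  obtain ⟨g, hg, hle, hIntg⟩ := eilenberg hP hd S (u := fun _ => 1) continuous_const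
  have hfin : ∫⁻ z, g z ∂(μH[d] : Measure F) ≠ ⊤ := by
    refine ne_top_of_le_ne_top hS (hIntg.trans ?_)
    simp
  filter_upwards [ae_lt_top hg hfin] with z hz
  have h1 := ne_top_of_le_ne_top hz.ne (hle z)
  have := ENNReal.finite_const_le_of_tsum_ne_top h1 (ε := 1) one_ne_zero
  simp only [le_refl] at this
  rw [← Set.finite_coe_iff]
  exact Set.finite_univ_iff.1 (by simpa using this)

end eilenberg

section isodiametric
open scoped Pointwise

/-- one-dimensional Brunn-Minkowski inequality -/
lemma bm_one {A B C : Set ℝ} (hA : MeasurableSet A) (hB : MeasurableSet B)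
    (hA0 : A.Nonempty) (hB0 : B.Nonempty) (h : ∀ x ∈ A, ∀ y ∈ B, (x + y) / 2 ∈ C) :
    volume A + volume B ≤ 2 * volume C := by
  -- the compact case
  have key : ∀ K L : Set ℝ, IsCompact K → IsCompact L → K.Nonempty → L.Nonempty → K ⊆ A → L ⊆ B →
      volume K + volume L ≤ 2 * volume C := by
    intro K L hK hL hK0 hL0 hKA hLB
    obtain ⟨k, hk, hkm⟩ := hK.exists_isGreatest hK0
    obtain ⟨l, hl, hlm⟩ := hL.exists_isLeast hL0
    set K' : Set ℝ := (fun x => x + l) '' K with hK'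
    set L' : Set ℝ := (fun y => k + y) '' L with hL'
    have hv1 : volume K' = volume K := by
      rw [hK']; simp
    have hv2 : volume L' = volume L := by
      rw [hL']; simp
    have hmeas : MeasurableSet L' := (hL.image (by fun_prop)).measurableSet
    have hIntg : volume (K' ∩ L') = 0 := by
      refine measure_mono_null (t := {k + l}) ?_ (by simp)
      rintro w ⟨⟨x, hx, rfl⟩, ⟨y, hy, hxy⟩⟩
      have h1 := hkm hx
      have h2 := hlm hy
      simp only at hxy ⊢
      simp only [mem_singleton_iff]
      linarith
    have hun : volume (K' ∪ L') = volume K + volume L := by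
      have := measure_union_add_inter (μ := volume) K' hmeas
      rw [hIntg, add_zero] at this
      rw [this, hv1, hv2]
    have hsub : K' ∪ L' ⊆ (fun x => (2 : ℝ) • x) '' C := by
      rintro w (⟨x, hx, rfl⟩ | ⟨y, hy, rfl⟩)
      · exact ⟨_, h x (hKA hx) l (hLB hl), by simp [smul_eq_mul]; ring⟩
      · exact ⟨_, h k (hKA hk) y (hLB hy), by simp [smul_eq_mul]; ring⟩
    rw [← hun]
    refine (measure_mono hsub).trans ?_
    have := Measure.addHaar_image_homothety (volume : Measure ℝ) 0 2 C
    have h3 := Measure.addHaar_smul (volume : Measure ℝ) 2 C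
    rw [show (fun x => (2 : ℝ) • x) '' C = (2 : ℝ) • C from rfl, h3]
    simp
  obtain ⟨x0, hx0⟩ := hA0
  obtain ⟨y0, hy0⟩ := hB0
  have key2 : ∀ K L : Set ℝ, IsCompact K → IsCompact L → K ⊆ A → L ⊆ B →
      volume K + volume L ≤ 2 * volume C := by
    intro K L hK hL hKA hLB
    calc volume K + volume L ≤ volume (insert x0 K) + volume (insert y0 L) := by
          gcongr <;> exact subset_insert _ _
      _ ≤ _ := key _ _ (hK.insert x0) (hL.insert y0) (insert_nonempty _ _) (insert_nonempty _ _)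
          (insert_subset hx0 hKA) (insert_subset hy0 hLB)
  rw [hA.measure_eq_iSup_isCompact, hB.measure_eq_iSup_isCompact]
  simp only [iSup_and']
  exact ENNReal.biSup_add_biSup_le' (p := fun K => K ⊆ A ∧ IsCompact K)
    (q := fun K => K ⊆ B ∧ IsCompact K) ⟨∅, empty_subset _, isCompact_empty⟩
    ⟨∅, empty_subset _, isCompact_empty⟩ fun K hK L hL => key2 K L hK.2 hL.2 hK.1 hL.1

lemma pl_norm {f g h : ℝ → ℝ} (hf : Measurable f) (hg : Measurable g) (hh : Measurable h)
    (hf0 : ∀ x, 0 ≤ f x) (hg0 : ∀ x, 0 ≤ g x) (hh0 : ∀ x, 0 ≤ h x)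
    (hf1 : ∀ x, f x ≤ 1) (hg1 : ∀ x, g x ≤ 1)
    (hfs : ∀ l < 1, ∃ x, l < f x) (hgs : ∀ l < 1, ∃ x, l < g x)
    (hfgh : ∀ x y, f x * g y ≤ h ((x + y) / 2) ^ 2) :
    (∫⁻ x, ENNReal.ofReal (f x)) + ∫⁻ x, ENNReal.ofReal (g x) ≤ 2 * ∫⁻ x, ENNReal.ofReal (h x) := by
  rw [lintegral_eq_lintegral_meas_lt _ (Eventually.of_forall hf0) hf.aemeasurable,
    lintegral_eq_lintegral_meas_lt _ (Eventually.of_forall hg0) hg.aemeasurable,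
    lintegral_eq_lintegral_meas_lt _ (Eventually.of_forall hh0) hh.aemeasurable]
  have hanti : ∀ k : ℝ → ℝ, Measurable (fun t : ℝ => volume {a : ℝ | t < k a}) := by
    intro k
    refine Antitone.measurable fun s t hst => measure_mono fun x hx => lt_of_le_of_lt hst hx
  rw [← lintegral_add_left (hanti f), ← lintegral_const_mul _ (hanti h)]
  refine setLIntegral_mono' measurableSet_Ioi fun t ht => ?_
  rcases lt_or_ge t 1 with h1 | h1
  · refine bm_one (measurableSet_lt measurable_const hf) (measurableSet_lt measurable_const hg)
      (hfs t h1) (hgs t h1) fun x hx y hy => ?_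
    simp only [mem_ofPred_eq] at hx hy ⊢
    have ht' : 0 < t := ht
    have h2 := hfgh x y
    have h3 : t ^ 2 < h ((x + y) / 2) ^ 2 := by nlinarith
    exact lt_of_pow_lt_pow_left₀ 2 (hh0 _) h3
  · have e1 : {a : ℝ | t < f a} = ∅ := by
      ext x; simp only [mem_ofPred_eq, mem_empty_iff_false, iff_false, not_lt]; exact (hf1 x).trans h1
    have e2 : {a : ℝ | t < g a} = ∅ := by
      ext x; simp only [mem_ofPred_eq, mem_empty_iff_false, iff_false, not_lt]; exact (hg1 x).trans h1
    rw [e1, e2]; simp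

lemma amgm_ennreal {p q r : ℝ≥0∞} (h : p + q ≤ 2 * r) : p * q ≤ r ^ 2 := by
  rcases eq_or_ne r ⊤ with rfl | hr
  · simp
  have h1 : 2 * r ≠ ⊤ := ENNReal.mul_ne_top (by simp) hr
  have hp : p ≠ ⊤ := ne_top_of_le_ne_top h1 (le_self_add.trans h)
  have hq : q ≠ ⊤ := ne_top_of_le_ne_top h1 (le_add_self.trans h)
  lift p to ℝ≥0 using hp
  lift q to ℝ≥0 using hq
  lift r to ℝ≥0 using hr
  have h2 : (p : ℝ) + q ≤ 2 * r := by exact_mod_cast h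
  have h3 : (p : ℝ) * q ≤ r ^ 2 := by
    have := p.2; have := q.2; have := r.2
    nlinarith [sq_nonneg ((p : ℝ) - q), sq_nonneg ((p : ℝ) + q)]
  exact_mod_cast h3

lemma pl_one {f g h : ℝ → ℝ≥0∞} (hf : Measurable f) (hg : Measurable g) (hh : Measurable h)
    {R : ℝ≥0∞} (hR : R ≠ ⊤) (hfR : ∀ x, f x ≤ R) (hgR : ∀ x, g x ≤ R) (hhR : ∀ x, h x ≤ R)
    (hfgh : ∀ x y, f x * g y ≤ h ((x + y) / 2) ^ 2) :
    (∫⁻ x, f x) * ∫⁻ x, g x ≤ (∫⁻ x, h x) ^ 2 := by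
  set a := ⨆ x, f x with ha
  set b := ⨆ x, g x with hb
  have haT : a ≠ ⊤ := ne_top_of_le_ne_top hR (iSup_le hfR)
  have hbT : b ≠ ⊤ := ne_top_of_le_ne_top hR (iSup_le hgR)
  rcases eq_or_ne a 0 with ha0 | ha0
  · have : ∀ x, f x = 0 := fun x => le_antisymm ((le_iSup f x).trans ha0.le) bot_le
    simp [this]
  rcases eq_or_ne b 0 with hb0 | hb0
  · have : ∀ x, g x = 0 := fun x => le_antisymm ((le_iSup g x).trans hb0.le) bot_le
    simp [this]
  set c : ℝ≥0∞ := (a * b) ^ (1 / 2 : ℝ) with hc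
  have hcc : c ^ 2 = a * b := by
    rw [hc, ← ENNReal.rpow_natCast, ← ENNReal.rpow_mul]; norm_num
  have hc0 : c ≠ 0 := by
    intro h0; rw [h0] at hcc; simp at hcc; tauto
  have hcT : c ≠ ⊤ := by
    intro h0; rw [h0] at hcc
    exact ENNReal.mul_ne_top haT hbT (by rw [← hcc]; simp)
  have hfT : ∀ x, f x / a ≠ ⊤ := fun x => ENNReal.div_ne_top (ne_top_of_le_ne_top hR (hfR x)) ha0
  have hgT : ∀ x, g x / b ≠ ⊤ := fun x => ENNReal.div_ne_top (ne_top_of_le_ne_top hR (hgR x)) hb0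
  have hhT : ∀ x, h x / c ≠ ⊤ := fun x => ENNReal.div_ne_top (ne_top_of_le_ne_top hR (hhR x)) hc0
  have hsup : ∀ (k : ℝ → ℝ≥0∞) (a : ℝ≥0∞), a = ⨆ x, k x → a ≠ 0 → a ≠ ⊤ → (∀ x, k x / a ≠ ⊤) →
      (∀ x, (k x / a).toReal ≤ 1) ∧ ∀ l < 1, ∃ x, l < (k x / a).toReal := by
    intro k a hk ha0 haT hkT
    constructor
    · intro x
      refine ENNReal.toReal_le_of_le_ofReal zero_le_one ?_
      rw [ENNReal.ofReal_one, ENNReal.div_le_iff ha0 haT, one_mul, hk]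
      exact le_iSup k x
    · intro l hl
      by_contra! hcon
      rcases lt_or_ge l 0 with hl0 | hl0
      · exact absurd (hcon 0) (not_le.2 (hl0.trans_le ENNReal.toReal_nonneg))
      have h1 : a ≤ ENNReal.ofReal l * a := by
        conv_lhs => rw [hk]
        refine iSup_le fun x => ?_
        rw [← ENNReal.div_le_iff ha0 haT]
        exact ENNReal.le_ofReal_iff_toReal_le (hkT x) hl0 |>.2 (hcon x)
      have h2 : ENNReal.ofReal l * a < 1 * a := by
        refine (ENNReal.mul_lt_mul_iff_left ha0 haT).2 ?_
        rw [← ENNReal.ofReal_one]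
        exact (ENNReal.ofReal_lt_ofReal_iff one_pos).2 hl
      rw [one_mul] at h2
      exact absurd h1 (not_le.2 h2)
  obtain ⟨hf1, hfs⟩ := hsup f a ha ha0 haT hfT
  obtain ⟨hg1, hgs⟩ := hsup g b hb hb0 hbT hgT
  have main := pl_norm (f := fun x => (f x / a).toReal) (g := fun x => (g x / b).toReal)
    (h := fun x => (h x / c).toReal) (by fun_prop) (by fun_prop) (by fun_prop)
    (fun _ => ENNReal.toReal_nonneg) (fun _ => ENNReal.toReal_nonneg)
    (fun _ => ENNReal.toReal_nonneg) hf1 hg1 hfs hgs (by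
      intro x y
      rw [← ENNReal.toReal_mul, ← ENNReal.toReal_pow]
      refine ENNReal.toReal_mono (ENNReal.pow_ne_top (hhT _)) ?_
      calc f x / a * (g y / b) = f x * g y / (a * b) := by
            rw [div_eq_mul_inv, div_eq_mul_inv, div_eq_mul_inv,
              ENNReal.mul_inv (Or.inl ha0) (Or.inl haT)]; ring
        _ ≤ h ((x + y) / 2) ^ 2 / (a * b) := by gcongr; exact hfgh x y
        _ = (h ((x + y) / 2) / c) ^ 2 := by
            rw [← hcc, ENNReal.div_eq_inv_mul, ENNReal.div_eq_inv_mul, mul_pow, ENNReal.inv_pow])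
  simp only [ENNReal.ofReal_toReal (hfT _), ENNReal.ofReal_toReal (hgT _),
    ENNReal.ofReal_toReal (hhT _)] at main
  have e : ∀ (k : ℝ → ℝ≥0∞) (a : ℝ≥0∞), Measurable k → ∫⁻ x, k x / a = (∫⁻ x, k x) / a := by
    intro k a hk
    simp only [div_eq_mul_inv]
    rw [lintegral_mul_const _ hk]
  rw [e f a hf, e g b hg, e h c hh] at main
  have := amgm_ennreal main
  have h4 : (∫⁻ x, f x) = (∫⁻ x, f x) / a * a := (ENNReal.div_mul_cancel ha0 haT).symm
  have h5 : (∫⁻ x, g x) = (∫⁻ x, g x) / b * b := (ENNReal.div_mul_cancel hb0 hbT).symm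
  have h6 : (∫⁻ x, h x) = (∫⁻ x, h x) / c * c := (ENNReal.div_mul_cancel hc0 hcT).symm
  rw [h4, h5, h6, mul_pow, hcc]
  calc (∫⁻ x, f x) / a * a * ((∫⁻ x, g x) / b * b)
      = (∫⁻ x, f x) / a * ((∫⁻ x, g x) / b) * (a * b) := by ring
    _ ≤ _ := by gcongr


lemma pfs_symm {n : ℕ} (t : ℝ) (z : Fin n → ℝ) :
    (MeasurableEquiv.piFinSuccAbove (fun _ : Fin (n + 1) => ℝ) 0).symm (t, z) =
      (Fin.cons t z : Fin (n + 1) → ℝ) := by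
  ext i
  refine Fin.cases ?_ (fun j => ?_) i <;> simp [MeasurableEquiv.piFinSuccAbove]

lemma pfs_pre {n : ℕ} (A : Set (Fin (n + 1) → ℝ)) (t : ℝ) :
    {z : Fin n → ℝ | (Fin.cons t z : Fin (n + 1) → ℝ) ∈ A} =
    Prod.mk t ⁻¹' ((MeasurableEquiv.piFinSuccAbove (fun _ : Fin (n + 1) => ℝ) 0).symm ⁻¹' A) := by
  ext z
  simp only [mem_ofPred_eq, mem_preimage, pfs_symm]

lemma vol_slice {n : ℕ} {A : Set (Fin (n + 1) → ℝ)} (hA : MeasurableSet A) :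
    volume A = ∫⁻ t : ℝ, volume {z : Fin n → ℝ | (Fin.cons t z : Fin (n + 1) → ℝ) ∈ A} := by
  have h := volume_preserving_piFinSuccAbove (fun _ : Fin (n + 1) => ℝ) 0
  have h2 := (h.symm _).measure_preimage hA.nullMeasurableSet
  rw [← h2, Measure.volume_eq_prod, Measure.prod_apply
    ((MeasurableEquiv.measurable _) hA)]
  simp only [pfs_pre]

lemma slice_meas {n : ℕ} {A : Set (Fin (n + 1) → ℝ)} (hA : MeasurableSet A) :
    Measurable (fun t : ℝ => volume {z : Fin n → ℝ | (Fin.cons t z : Fin (n + 1) → ℝ) ∈ A}) := by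
  have := (MeasurableEquiv.piFinSuccAbove (fun _ : Fin (n + 1) => ℝ) 0).symm.measurable hA
  simp only [pfs_pre]
  exact measurable_measure_prodMk_left (ν := (volume : Measure (Fin n → ℝ))) this

lemma cons_meas {n : ℕ} {A : Set (Fin (n + 1) → ℝ)} (hA : MeasurableSet A) (t : ℝ) :
    MeasurableSet {z : Fin n → ℝ | (Fin.cons t z : Fin (n + 1) → ℝ) ∈ A} := by
  have := (MeasurableEquiv.piFinSuccAbove (fun _ : Fin (n + 1) => ℝ) 0).symm.measurable hA
  rw [pfs_pre]
  exact measurable_prodMk_left this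

lemma bm_pi (R : ℝ) (n : ℕ) : ∀ A B C : Set (Fin n → ℝ), MeasurableSet A → MeasurableSet B →
    MeasurableSet C → A ⊆ Icc (fun _ => -R) (fun _ => R) → B ⊆ Icc (fun _ => -R) (fun _ => R) →
    C ⊆ Icc (fun _ => -R) (fun _ => R) →
    (∀ x ∈ A, ∀ y ∈ B, (fun i => (x i + y i) / 2) ∈ C) → volume A * volume B ≤ volume C ^ 2 := by
  induction n with
  | zero =>
    intro A B C _ _ _ _ _ _ h
    rcases A.eq_empty_or_nonempty with rfl | ⟨x, hx⟩
    · simp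
    rcases B.eq_empty_or_nonempty with rfl | ⟨y, hy⟩
    · simp
    have hC : C = univ := Subsingleton.eq_univ_of_nonempty ⟨_, h x hx y hy⟩
    have hA : A = univ := Subsingleton.eq_univ_of_nonempty ⟨_, hx⟩
    have hB : B = univ := Subsingleton.eq_univ_of_nonempty ⟨_, hy⟩
    rw [hA, hB, hC, sq]
  | succ n ih =>
    intro A B C hA hB hC hAR hBR hCR h
    rw [vol_slice hA, vol_slice hB, vol_slice hC]
    have hb : ∀ (D : Set (Fin (n + 1) → ℝ)), D ⊆ Icc (fun _ => -R) (fun _ => R) → ∀ t : ℝ,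
        {z : Fin n → ℝ | (Fin.cons t z : Fin (n + 1) → ℝ) ∈ D} ⊆ Icc (fun _ => -R) (fun _ => R) := by
      intro D hD t z hz
      have := hD hz
      exact ⟨fun i => by simpa using this.1 i.succ, fun i => by simpa using this.2 i.succ⟩
    refine pl_one (slice_meas hA) (slice_meas hB) (slice_meas hC)
      (R := volume (Icc (fun _ => -R) (fun _ => R) : Set (Fin n → ℝ)))
      isCompact_Icc.measure_lt_top.ne (fun t => measure_mono (hb A hAR t))
      (fun t => measure_mono (hb B hBR t)) (fun t => measure_mono (hb C hCR t)) ?_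
    intro s t
    refine ih _ _ _ (cons_meas hA s) (cons_meas hB t) (cons_meas hC _) (hb A hAR s) (hb B hBR t)
      (hb C hCR _) fun x hx y hy => ?_
    have := h _ hx _ hy
    simp only [mem_ofPred_eq]
    convert this using 1
    ext i
    refine Fin.cases ?_ (fun j => ?_) i <;> simp

lemma isodiam {n : ℕ} (s : Set (EuclideanSpace ℝ (Fin n))) {d : ℝ} (hd : 0 ≤ d)
    (h : ∀ x ∈ s, ∀ y ∈ s, dist x y ≤ d) :
    volume s ≤ volume (closedBall (0 : EuclideanSpace ℝ (Fin n)) (d / 2)) := by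
  rcases s.eq_empty_or_nonempty with rfl | ⟨x0, hx0⟩
  · simp
  set A := closure s with hAdef
  have hA : ∀ x ∈ A, ∀ y ∈ A, dist x y ≤ d := by
    intro x hx y hy
    have := map_mem_closure₂ (f := dist) (u := Iic d) continuous_dist hx hy
      (fun a ha b hb => h a ha b hb)
    rwa [isClosed_Iic.closure_eq] at this
  have hx0A : x0 ∈ A := subset_closure hx0
  refine (measure_mono subset_closure).trans ?_
  have hpi : ∀ D : Set (EuclideanSpace ℝ (Fin n)), MeasurableSet D →
      volume ((fun z : Fin n → ℝ => (WithLp.toLp 2 z : EuclideanSpace ℝ (Fin n))) ⁻¹' D) = volume D := by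
    intro D hD
    exact (PiLp.volume_preserving_toLp (Fin n)).measure_preimage hD.nullMeasurableSet
  have hms : ∀ D : Set (EuclideanSpace ℝ (Fin n)), MeasurableSet D →
      MeasurableSet ((fun z : Fin n → ℝ => (WithLp.toLp 2 z : EuclideanSpace ℝ (Fin n))) ⁻¹' D) := by
    intro D hD
    exact (PiLp.volume_preserving_toLp (Fin n)).measurable hD
  set R : ℝ := ‖x0‖ + d with hR
  have hbox : ∀ D : Set (EuclideanSpace ℝ (Fin n)), (∀ x ∈ D, ‖x‖ ≤ R) →
      (fun z : Fin n → ℝ => (WithLp.toLp 2 z : EuclideanSpace ℝ (Fin n))) ⁻¹' D ⊆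
        Icc (fun _ => -R) (fun _ => R) := by
    intro D hD z hz
    have h1 := hD _ hz
    have h2 : ∀ i, |z i| ≤ R := fun i => by
      have := PiLp.norm_apply_le (WithLp.toLp 2 z : EuclideanSpace ℝ (Fin n)) i
      simp only [Real.norm_eq_abs] at this
      exact this.trans h1
    exact ⟨fun i => (abs_le.1 (h2 i)).1, fun i => (abs_le.1 (h2 i)).2⟩
  have hAm : MeasurableSet A := isClosed_closure.measurableSet
  have hAb : ∀ x ∈ A, ‖x‖ ≤ R := by
    intro x hx
    have h1 := hA x hx x0 hx0A
    rw [dist_eq_norm] at h1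
    have := norm_le_norm_add_norm_sub x0 x
    rw [norm_sub_rev] at this
    linarith
  have hneg : volume (-A) = volume A := Measure.measure_neg _ _
  have := bm_pi R n _ _ _ (hms A hAm) (hms (-A) hAm.neg) (hms _ (measurableSet_closedBall))
    (hbox A hAb) (hbox (-A) (fun x hx => by
      have := hAb _ hx
      rwa [norm_neg] at this)) (hbox (closedBall 0 (d / 2)) (fun x hx => by
      rw [mem_closedBall_zero_iff] at hx
      have := norm_nonneg x0
      linarith)) (by
    intro x hx y hy
    simp only [mem_preimage, mem_closedBall_zero_iff]
    have h1 := hA _ hx _ hy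
    rw [dist_eq_norm] at h1
    have h2 : (WithLp.toLp 2 (fun i => (x i + y i) / 2) : EuclideanSpace ℝ (Fin n)) =
        (1 / 2 : ℝ) • (WithLp.toLp 2 x - -(WithLp.toLp 2 y)) := by
      ext i; simp; ring
    rw [h2, norm_smul]
    norm_num
    norm_num at h1
    linarith)
  rw [hpi A hAm, hpi (-A) hAm.neg, hpi _ measurableSet_closedBall, hneg, ← sq] at this
  exact (ENNReal.pow_le_pow_left_iff two_ne_zero).1 this

lemma kappa (n : ℕ) : (2 : ℝ≥0∞) ^ n ≤
    (μH[(n : ℝ)] : Measure (EuclideanSpace ℝ (Fin n))) (ball 0 1) := by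
  set w := volume (ball (0 : EuclideanSpace ℝ (Fin n)) 1) with hw
  have hw0 : w ≠ 0 := (measure_ball_pos volume _ one_pos).ne'
  have hwT : w ≠ ⊤ := measure_ball_lt_top.ne
  have h : ((2 : ℝ≥0∞) ^ n / w) • (volume : Measure (EuclideanSpace ℝ (Fin n))) ≤ μH[(n : ℝ)] := by
    refine Measure.le_hausdorffMeasure _ _ 1 one_pos fun s hs => ?_
    have hfin : ediam s ≠ ⊤ := ne_top_of_le_ne_top ENNReal.one_ne_top hs
    have h1 := isodiam s (d := (ediam s).toReal) ENNReal.toReal_nonneg (fun x hx y hy => by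
      have := edist_le_ediam_of_mem hx hy
      rw [edist_dist] at this
      exact (ENNReal.ofReal_le_iff_le_toReal hfin).1 this)
    rw [Measure.addHaar_closedBall _ _ (by positivity)] at h1
    rw [Measure.smul_apply, smul_eq_mul]
    calc 2 ^ n / w * volume s ≤ 2 ^ n / w * (ENNReal.ofReal (((ediam s).toReal / 2) ^ n) * w) := by
          gcongr
          simpa using h1
      _ = 2 ^ n * ENNReal.ofReal (((ediam s).toReal / 2) ^ n) * (w / w) := by
          generalize ENNReal.ofReal (((ediam s).toReal / 2) ^ n) = q
          rw [ENNReal.div_eq_inv_mul, ENNReal.div_eq_inv_mul]; ring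
      _ = ENNReal.ofReal (2 ^ n * ((ediam s).toReal / 2) ^ n) := by
          rw [ENNReal.div_self hw0 hwT, mul_one, ENNReal.ofReal_mul (by positivity)]
          congr 1
          rw [ENNReal.ofReal_pow (by norm_num)]; simp
      _ = ediam s ^ (n : ℝ) := by
          rw [← mul_pow, mul_div_cancel₀ _ (two_ne_zero), ENNReal.ofReal_pow ENNReal.toReal_nonneg,
            ENNReal.ofReal_toReal hfin, ENNReal.rpow_natCast]
  have := h (ball 0 1)
  rw [Measure.smul_apply, smul_eq_mul, ENNReal.div_mul_cancel hw0 hwT] at this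
  exact this

end isodiametric

section dens
variable {X : Type*} [NormedAddCommGroup X] [NormedSpace ℝ X] [FiniteDimensional ℝ X]
  [MeasurableSpace X] [BorelSpace X]

lemma dens_aux {n : ℕ} {S : Set X} (hS : μH[(n : ℝ)] S ≠ ⊤) (ρ : Measure X)
    {t : ℝ≥0∞} (ht0 : t ≠ 0) (htT : t ≠ ⊤) {B O : Set X} (hBS : B ⊆ S)
    (hB : ∀ x ∈ B, ∀ ε > 0, ∃ r ∈ Ioo 0 ε, t * ENNReal.ofReal (2 * r) ^ n ≤ ρ (closedBall x r))
    (hO : IsOpen O) (hBO : B ⊆ O) : t * μH[(n : ℝ)] B ≤ ρ O := by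
  set ν : Measure X := (μH[(n : ℝ)] : Measure X).restrict S with hν
  have : IsFiniteMeasure ν := ⟨by rw [hν, Measure.restrict_apply_univ]; exact lt_top_iff_ne_top.2 hS⟩
  have hfam : ∀ k : ℕ, ∃ (T : Set X) (r : X → ℝ), T.Countable ∧ T ⊆ B ∧
      (∀ x ∈ T, (closedBall x (r x) ⊆ O ∧
        t * ENNReal.ofReal (2 * r x) ^ n ≤ ρ (closedBall x (r x))) ∧ r x ∈ Ioo 0 (1 / ((k : ℝ) + 1))) ∧
      ν (B \ ⋃ x ∈ T, closedBall x (r x)) = 0 ∧ T.PairwiseDisjoint fun x => closedBall x (r x) := by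
    intro k
    obtain ⟨T, r, h1, h2, h3, h4, h5⟩ := Besicovitch.exists_disjoint_closedBall_covering_ae ν
      (fun x => {r : ℝ | closedBall x r ⊆ O ∧ t * ENNReal.ofReal (2 * r) ^ n ≤ ρ (closedBall x r)}) B
      (by
        intro x hx δ hδ
        obtain ⟨ε, hε, hεO⟩ := Metric.isOpen_iff.1 hO x (hBO hx)
        obtain ⟨r, hr, hr2⟩ := hB x hx (min δ ε) (lt_min hδ hε)
        refine ⟨r, ⟨(closedBall_subset_ball (hr.2.trans_le (min_le_right _ _))).trans hεO, hr2⟩,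
          hr.1, hr.2.trans_le (min_le_left _ _)⟩) (fun _ => 1 / ((k : ℝ) + 1))
      (fun _ _ => by positivity)
    exact ⟨T, r, h1, h2, h3, h4, h5⟩
  choose T r hTc hTB hr hcov hdisj using hfam
  set Z : Set X := ⋃ k, (B \ ⋃ x ∈ T k, closedBall x (r k x)) with hZ
  have hZ0 : μH[(n : ℝ)] Z = 0 := by
    rw [hZ, measure_iUnion_null_iff]
    intro k
    have := hcov k
    rwa [hν, Measure.restrict_eq_self _ (sdiff_subset.trans hBS)] at this
  have hle : μH[(n : ℝ)] B ≤ μH[(n : ℝ)] (B \ Z) := by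
    calc μH[(n : ℝ)] B ≤ μH[(n : ℝ)] ((B \ Z) ∪ Z) := measure_mono (by
          intro x hx; by_cases h : x ∈ Z
          · exact Or.inr h
          · exact Or.inl ⟨hx, h⟩)
      _ ≤ _ := (measure_union_le _ _).trans (by rw [hZ0, add_zero])
  have hmain : μH[(n : ℝ)] (B \ Z) ≤ ρ O / t := by
    have : ∀ k, Countable (T k) := fun k => (hTc k).to_subtype
    have h2r : ∀ k, ∀ x : T k, ediam (closedBall (x : X) (r k x)) ≤ ENNReal.ofReal (2 * r k x) := by
      intro k x
      refine ediam_le fun y hy z hz => ?_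
      rw [edist_dist]
      refine ENNReal.ofReal_le_ofReal ?_
      have := dist_triangle_right y z x
      rw [mem_closedBall] at hy hz
      linarith
    have hlim := Measure.hausdorffMeasure_le_liminf_tsum (n : ℝ) (B \ Z) (l := atTop)
      (fun k : ℕ => ENNReal.ofReal (2 * (1 / ((k : ℝ) + 1)))) (by
        have := (tendsto_one_div_add_atTop_nhds_zero_nat (𝕜 := ℝ)).const_mul 2
        have := ENNReal.tendsto_ofReal this
        simpa using this) (ι := fun k => T k) (fun k x => closedBall (x : X) (r k x))
      (Eventually.of_forall fun k x => (h2r k x).trans (ENNReal.ofReal_le_ofReal (by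
        have := (hr k x x.2).2.2
        linarith)))
      (Eventually.of_forall fun k x hx => by
        by_contra hcon
        apply hx.2
        rw [hZ]
        refine mem_iUnion.2 ⟨k, hx.1, fun h => hcon ?_⟩
        simp only [mem_iUnion] at h ⊢
        obtain ⟨y, hy, hxy⟩ := h
        exact ⟨⟨y, hy⟩, hxy⟩)
    refine hlim.trans (liminf_le_of_frequently_le' (Eventually.of_forall fun k => ?_).frequently)
    rw [ENNReal.le_div_iff_mul_le (Or.inl ht0) (Or.inl htT), ← ENNReal.tsum_mul_right]
    calc ∑' x : T k, ediam (closedBall (x : X) (r k x)) ^ (n : ℝ) * t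
        ≤ ∑' x : T k, ρ (closedBall (x : X) (r k x)) := by
          refine ENNReal.tsum_le_tsum fun x => ?_
          rw [mul_comm, ENNReal.rpow_natCast]
          refine le_trans ?_ (hr k x x.2).1.2
          gcongr
          exact h2r k x
      _ = ρ (⋃ x ∈ T k, closedBall x (r k x)) := by
          rw [measure_biUnion (hTc k) (hdisj k) fun _ _ => measurableSet_closedBall]
      _ ≤ ρ O := measure_mono (iUnion₂_subset fun x hx => (hr k x hx).1.1)
  rw [mul_comm, ← ENNReal.le_div_iff_mul_le (Or.inl ht0) (Or.inl htT)]
  exact hle.trans hmain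

/-- Sharp upper density bound. -/
lemma upper_dens {n : ℕ} {S : Set X} (hS : μH[(n : ℝ)] S ≠ ⊤) {t : ℝ≥0∞} (ht : 1 < t) (htT : t ≠ ⊤) :
    μH[(n : ℝ)] {x ∈ S | ∀ ε > 0, ∃ r ∈ Ioo 0 ε,
      t * ENNReal.ofReal (2 * r) ^ n ≤ ((μH[(n : ℝ)] : Measure X).restrict S) (closedBall x r)} = 0 := by
  set B := {x ∈ S | ∀ ε > 0, ∃ r ∈ Ioo 0 ε,
      t * ENNReal.ofReal (2 * r) ^ n ≤ ((μH[(n : ℝ)] : Measure X).restrict S) (closedBall x r)} with hB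
  set ν : Measure X := (μH[(n : ℝ)] : Measure X).restrict S with hν
  have : IsFiniteMeasure ν := ⟨by rw [hν, Measure.restrict_apply_univ]; exact lt_top_iff_ne_top.2 hS⟩
  have hBS : B ⊆ S := fun x hx => hx.1
  have hBT : μH[(n : ℝ)] B ≠ ⊤ := ne_top_of_le_ne_top hS (measure_mono hBS)
  by_contra h0
  have hlt : ν B < t * μH[(n : ℝ)] B := by
    rw [hν, Measure.restrict_eq_self _ hBS]
    conv_lhs => rw [← one_mul (μH[(n : ℝ)] B)]
    exact (ENNReal.mul_lt_mul_iff_left h0 hBT).2 ht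
  obtain ⟨O, hBO, hO, hlt2⟩ := B.exists_isOpen_lt_of_lt _ hlt
  have := dens_aux hS ν (zero_lt_one.trans ht).ne' htT hBS (fun x hx => hx.2) hO hBO
  exact absurd this (not_le.2 hlt2)

end dens

section frame
variable {n : ℕ}

local notation "𝔽" => EuclideanSpace ℝ (Fin n)
local notation "𝕐" => EuclideanSpace ℝ (Fin (n + 1))

lemma frame (e : 𝕐) (he : ‖e‖ = 1) : ∃ (L : 𝔽 →ₗᵢ[ℝ] 𝕐) (Ψ : (𝔽 × ℝ) ≃L[ℝ] 𝕐),
    (∀ z t, Ψ (z, t) = L z + t • e) ∧ (∀ z, inner ℝ (L z) e = 0) ∧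
    (∀ z t, ‖Ψ (z, t)‖ ^ 2 = ‖z‖ ^ 2 + t ^ 2) ∧
    LipschitzWith 1 (fun x => (Ψ.symm x).1) := by
  have hfr : Fact (Module.finrank ℝ 𝕐 = n + 1) := ⟨by simp⟩
  have he0 : e ≠ 0 := by intro h; rw [h] at he; simp at he
  set b := OrthonormalBasis.fromOrthogonalSpanSingleton n he0 (𝕜 := ℝ)
  set L : 𝔽 →ₗᵢ[ℝ] 𝕐 := (Submodule.subtypeₗᵢ _).comp b.repr.symm.toLinearIsometry with hL
  have hort : ∀ z, inner ℝ (L z) e = 0 := by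
    intro z
    have : (L z) ∈ (Submodule.span ℝ {e})ᗮ := by
      simp only [hL, LinearIsometry.coe_comp, Function.comp_apply, Submodule.coe_subtypeₗᵢ,
        Submodule.subtype_apply]
      exact (b.repr.symm z).2
    rw [real_inner_comm]
    exact Submodule.mem_orthogonal_singleton_iff_inner_right.1 this
  have hnorm : ∀ z (t : ℝ), ‖L z + t • e‖ ^ 2 = ‖z‖ ^ 2 + t ^ 2 := by
    intro z t
    rw [norm_add_sq_real, inner_smul_right, hort, LinearIsometry.norm_map, norm_smul, he]
    simp
  set M : (𝔽 × ℝ) →ₗ[ℝ] 𝕐 := LinearMap.coprod L.toLinearMap (LinearMap.toSpanSingleton ℝ 𝕐 e) with hM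
  have hMa : ∀ z t, M (z, t) = L z + t • e := fun z t => by simp [hM]
  have hinj : Function.Injective M := by
    rw [injective_iff_map_eq_zero]
    rintro ⟨z, t⟩ h
    rw [hMa] at h
    have h2 := hnorm z t
    rw [h] at h2
    simp only [norm_zero] at h2
    have hz : ‖z‖ = 0 := by nlinarith [sq_nonneg ‖z‖, sq_nonneg t]
    have ht : t = 0 := by nlinarith [sq_nonneg ‖z‖, sq_nonneg t]
    rw [norm_eq_zero] at hz
    rw [hz, ht]; rfl
  set Ψ : (𝔽 × ℝ) ≃L[ℝ] 𝕐 :=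
    (LinearMap.linearEquivOfInjective M hinj (by simp)).toContinuousLinearEquiv with hΨ
  have hΨa : ∀ z t, Ψ (z, t) = L z + t • e := by
    intro z t
    rw [← hMa]; rfl
  refine ⟨L, Ψ, hΨa, hort, fun z t => by rw [hΨa, hnorm], ?_⟩
  refine LipschitzWith.of_dist_le_mul fun x y => ?_
  rw [NNReal.coe_one, one_mul, dist_eq_norm, dist_eq_norm, ← Prod.fst_sub, ← map_sub]
  set w := Ψ.symm (x - y) with hw
  have h1 : x - y = Ψ (w.1, w.2) := (Ψ.apply_symm_apply (x - y)).symm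
  rw [h1]
  have h2 := hnorm w.1 w.2
  rw [← hΨa] at h2
  refine (pow_le_pow_iff_left₀ (norm_nonneg _) (norm_nonneg _) two_ne_zero).1 ?_
  rw [h2]; nlinarith [sq_nonneg w.2]

end frame

section ggline

lemma gg_line {A : Set ℝ} (hA : MeasurableSet A) {g g' : ℝ → ℝ} (hg : ∀ t, HasDerivAt g (g' t) t)
    (hg' : Continuous g') {T : Set ℝ} {p₀ q₀ : ℝ}
    (hT : ∀ a b : ℝ, Ioo a b ⊆ Ioo p₀ q₀ → (∀ t ∈ Ioo a b, t ∉ T) →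
      volume (Ioo a b ∩ A) = 0 ∨ volume (Ioo a b \ A) = 0) :
    ∀ (m : ℕ) (p q : ℝ), p ≤ q → Ioo p q ⊆ Ioo p₀ q₀ → ∀ s : Finset ℝ, (s : Set ℝ) = T ∩ Ioo p q →
      s.card = m → |∫ t in Ioo p q ∩ A, g' t| ≤ |g p| + |g q| + 2 * ∑ τ ∈ s, |g τ| := by
  intro m
  induction m using Nat.strong_induction_on with
  | _ m ih =>
  intro p q hpq hsub s hs hcard
  have hIntg : ∀ a b : ℝ, IntegrableOn g' (Ioo a b) := fun a b =>
    (hg'.integrableOn_Icc (a := a) (b := b)).mono_set Ioo_subset_Icc_self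
  rcases s.eq_empty_or_nonempty with rfl | ⟨τ, hτ⟩
  · have hno : ∀ t ∈ Ioo p q, t ∉ T := by
      intro t ht htT
      have : t ∈ T ∩ Ioo p q := ⟨htT, ht⟩
      rw [← hs] at this
      simp at this
    simp only [Finset.sum_empty, mul_zero, add_zero]
    rcases hT p q hsub hno with h0 | h0
    · rw [setIntegral_measure_zero _ h0, abs_zero]; positivity
    · have hae : (Ioo p q ∩ A : Set ℝ) =ᵐ[volume] Ioo p q := by
        rw [ae_eq_set]
        constructor
        · rw [sdiff_eq_empty.2 inter_subset_left]; simp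
        · rw [inter_comm, sdiff_inter_self_eq_sdiff]; exact h0
      rw [setIntegral_congr_set hae, ← integral_Ioc_eq_integral_Ioo,
        ← intervalIntegral.integral_of_le hpq,
        intervalIntegral.integral_eq_sub_of_hasDerivAt (fun t _ => hg t)
          (hg'.intervalIntegrable _ _)]
      have := abs_sub (g q) (g p)
      linarith
  · have hτ' : τ ∈ T ∩ Ioo p q := by rw [← hs]; exact hτ
    obtain ⟨hτT, hτp, hτq⟩ := hτ'
    classical
    set s1 := s.filter (· < τ) with hs1
    set s2 := s.filter (τ < ·) with hs2
    have hmem : ∀ t, t ∈ s ↔ t ∈ T ∧ p < t ∧ t < q := fun t => by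
      rw [← Finset.mem_coe, hs]; rfl
    have hc1 : s1.card < m := by
      rw [← hcard]
      exact Finset.card_lt_card (Finset.filter_ssubset.2 ⟨τ, hτ, lt_irrefl _⟩)
    have hc2 : s2.card < m := by
      rw [← hcard]
      exact Finset.card_lt_card (Finset.filter_ssubset.2 ⟨τ, hτ, lt_irrefl _⟩)
    have i1 := ih _ hc1 p τ hτp.le ((Ioo_subset_Ioo_right hτq.le).trans hsub) s1 (by
      ext t; simp only [hs1, Finset.coe_filter, mem_ofPred_eq, hmem, mem_inter_iff, mem_Ioo]
      constructor
      · rintro ⟨⟨h1, h2, h3⟩, h4⟩; exact ⟨h1, h2, h4⟩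
      · rintro ⟨h1, h2, h3⟩; exact ⟨⟨h1, h2, h3.trans hτq⟩, h3⟩) rfl
    have i2 := ih _ hc2 τ q hτq.le ((Ioo_subset_Ioo_left hτp.le).trans hsub) s2 (by
      ext t; simp only [hs2, Finset.coe_filter, mem_ofPred_eq, hmem, mem_inter_iff, mem_Ioo]
      constructor
      · rintro ⟨⟨h1, h2, h3⟩, h4⟩; exact ⟨h1, h4, h3⟩
      · rintro ⟨h1, h2, h3⟩; exact ⟨⟨h1, hτp.trans h2, h3⟩, h2⟩) rfl
    have hsum : ∑ t ∈ s, |g t| = ∑ t ∈ s1, |g t| + |g τ| + ∑ t ∈ s2, |g t| := by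
      have hd : s = s1 ∪ ({τ} ∪ s2) := by
        ext t
        simp only [hs1, hs2, Finset.mem_union, Finset.mem_filter, Finset.mem_singleton]
        constructor
        · intro h
          rcases lt_trichotomy t τ with h1 | h1 | h1 <;> tauto
        · rintro (h | h | h)
          · exact h.1
          · rw [h]; exact hτ
          · exact h.1
      conv_lhs => rw [hd]
      rw [Finset.sum_union, Finset.sum_union, Finset.sum_singleton, add_assoc]
      · rw [Finset.disjoint_left]
        intro t ht ht2
        rw [Finset.mem_singleton] at ht
        rw [ht, hs2, Finset.mem_filter] at ht2
        exact lt_irrefl _ ht2.2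
      · rw [Finset.disjoint_left]
        intro t ht ht2
        simp only [hs1, hs2, Finset.mem_union, Finset.mem_filter, Finset.mem_singleton] at ht ht2
        rcases ht2 with h | h
        · linarith [ht.2]
        · linarith [ht.2, h.2]
    have hsplit : ∫ t in Ioo p q ∩ A, g' t =
        (∫ t in Ioo p τ ∩ A, g' t) + ∫ t in Ioo τ q ∩ A, g' t := by
      rw [← setIntegral_union]
      · refine setIntegral_congr_set ?_
        have hu : (Ioo p q ∩ A : Set ℝ) =ᵐ[volume] ((Ioo p τ ∪ Ioo τ q) ∩ A : Set ℝ) := by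
          refine Filter.EventuallyEq.inter ?_ (ae_eq_refl A)
          rw [ae_eq_set]
          constructor
          · refine measure_mono_null (t := {τ}) ?_ (by simp)
            rintro t ⟨h1, h2⟩
            rw [mem_singleton_iff]
            by_contra h3
            apply h2
            rcases lt_or_gt_of_ne h3 with h4 | h4
            · exact Or.inl ⟨h1.1, h4⟩
            · exact Or.inr ⟨h4, h1.2⟩
          · refine measure_mono_null (t := ∅) ?_ (by simp)
            rintro t ⟨h1 | h1, h2⟩
            · exact h2 ⟨h1.1, h1.2.trans hτq⟩
            · exact h2 ⟨hτp.trans h1.1, h1.2⟩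
        rw [union_inter_distrib_right] at hu
        exact hu
      · rw [Set.disjoint_left]
        rintro t ⟨h1, _⟩ ⟨h2, _⟩
        exact lt_irrefl _ (h1.2.trans h2.1)
      · exact measurableSet_Ioo.inter hA
      · exact (hIntg _ _).mono_set inter_subset_left
      · exact (hIntg _ _).mono_set inter_subset_left
    rw [hsplit, hsum]
    have := abs_add_le (∫ t in Ioo p τ ∩ A, g' t) (∫ t in Ioo τ q ∩ A, g' t)
    linarith

end ggline

section gg
variable {n : ℕ}

local notation "𝔽" => EuclideanSpace ℝ (Fin n)
local notation "𝕐" => EuclideanSpace ℝ (Fin (n + 1))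

instance haarF : (μH[(n : ℝ)] : Measure (EuclideanSpace ℝ (Fin n))).IsAddHaarMeasure := by
  have h := isAddHaarMeasure_hausdorffMeasure (E := EuclideanSpace ℝ (Fin n))
  simpa using h

/-- The one-line estimate behind the Gauss-Green formula. -/
lemma gg_slice {E V : Set 𝕐} (hV : IsOpen V) (hVc : Convex ℝ V)
    (hE : MeasurableSet E) (Ψ : (𝔽 × ℝ) ≃L[ℝ] 𝕐) {e : 𝕐} {L : 𝔽 →ₗᵢ[ℝ] 𝕐}
    (hΨ : ∀ z t, Ψ (z, t) = L z + t • e) {φ : 𝕐 → ℝ} (hφ : ContDiff ℝ 1 φ)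
    (hφc : HasCompactSupport φ) (hφV : tsupport φ ⊆ V) {z : 𝔽}
    (hz : ∀ a b : ℝ, (∀ t ∈ Ioo a b, Ψ (z, t) ∉ essBdry E) →
      volume (Ioo a b ∩ {t | Ψ (z, t) ∈ E}) = 0 ∨ volume (Ioo a b \ {t | Ψ (z, t) ∈ E}) = 0)
    (hfin : (essBdry E ∩ V ∩ (fun x => (Ψ.symm x).1) ⁻¹' {z}).Finite) :
    ‖∫ t, E.indicator (fun y => fderiv ℝ φ y e) (Ψ (z, t))‖ₑ ≤
      2 * ∑' x : (essBdry E ∩ V ∩ (fun x => (Ψ.symm x).1) ⁻¹' {z} : Set 𝕐), ‖φ x‖ₑ := by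
  set g : ℝ → ℝ := fun t => φ (Ψ (z, t)) with hg
  set g' : ℝ → ℝ := fun t => fderiv ℝ φ (Ψ (z, t)) e with hg'
  have hΨc : Continuous (fun t : ℝ => Ψ (z, t)) := by fun_prop
  have hder : ∀ t, HasDerivAt g (g' t) t := by
    intro t
    have h1 : HasDerivAt (fun t : ℝ => Ψ (z, t)) e t := by
      simp only [hΨ]
      have := ((hasDerivAt_id t).smul_const e).const_add (L z)
      simpa using this
    have h2 : HasFDerivAt φ (fderiv ℝ φ (Ψ (z, t))) (Ψ (z, t)) :=
      (hφ.differentiable one_ne_zero _).hasFDerivAt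
    exact h2.comp_hasDerivAt t h1
  have hg'c : Continuous g' := by
    have h1 : Continuous (fun y => fderiv ℝ φ y e) :=
      (hφ.continuous_fderiv one_ne_zero).clm_apply continuous_const
    exact h1.comp hΨc
  set A : Set ℝ := {t | Ψ (z, t) ∈ E} with hA
  have hAm : MeasurableSet A := hΨc.measurable hE
  set K : Set ℝ := (fun t : ℝ => Ψ (z, t)) ⁻¹' tsupport φ with hK
  have hKc : IsCompact K := by
    have h1 : IsCompact (Ψ.symm '' tsupport φ) := IsCompact.image hφc Ψ.symm.continuous
    have h2 := h1.image continuous_snd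
    refine h2.of_isClosed_subset ((isClosed_tsupport φ).preimage hΨc) ?_
    intro t ht
    exact ⟨(z, t), ⟨Ψ (z, t), ht, by simp⟩, rfl⟩
  have hout : ∀ t, t ∉ K → g t = 0 := fun t ht => image_eq_zero_of_notMem_tsupport (f := φ) (x := Ψ (z, t)) ht
  have hout' : ∀ t, t ∉ K → g' t = 0 := by
    intro t ht
    have : fderiv ℝ φ (Ψ (z, t)) = 0 := by
      by_contra h
      exact ht (support_fderiv_subset ℝ h)
    simp only [hg', this]; rfl
  have hI : ∫ t, E.indicator (fun y => fderiv ℝ φ y e) (Ψ (z, t)) = ∫ t in A, g' t := by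
    rw [← integral_indicator hAm]; rfl
  rw [hI]
  rcases K.eq_empty_or_nonempty with hKe | hKn
  · have : ∀ t, g' t = 0 := fun t => hout' t (by rw [hKe]; simp)
    simp [this]
  obtain ⟨t1, ht1, hm1⟩ := hKc.exists_isLeast hKn
  obtain ⟨t2, ht2, hm2⟩ := hKc.exists_isGreatest hKn
  have hVo : IsOpen ((fun t : ℝ => Ψ (z, t)) ⁻¹' V) := hV.preimage hΨc
  obtain ⟨ε1, hε1, hb1⟩ := Metric.isOpen_iff.1 hVo t1 (hφV ht1)
  obtain ⟨ε2, hε2, hb2⟩ := Metric.isOpen_iff.1 hVo t2 (hφV ht2)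
  set p := t1 - ε1 / 2 with hp
  set q := t2 + ε2 / 2 with hq
  have hpV : Ψ (z, p) ∈ V := hb1 (by rw [mem_ball, Real.dist_eq, hp, abs_lt]; constructor <;> linarith)
  have hqV : Ψ (z, q) ∈ V := hb2 (by rw [mem_ball, Real.dist_eq, hq, abs_lt]; constructor <;> linarith)
  have h12 : t1 ≤ t2 := hm1 ht2
  have hpq : p < q := by linarith
  have hIV : ∀ t ∈ Ioo p q, Ψ (z, t) ∈ V := by
    intro t ht
    have hs : (t - p) / (q - p) ∈ Icc (0 : ℝ) 1 := by
      constructor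
      · exact div_nonneg (by linarith [ht.1]) (by linarith)
      · rw [div_le_one (by linarith)]; linarith [ht.2]
    have hh := hVc.add_smul_sub_mem hpV hqV hs
    have : Ψ (z, p) + ((t - p) / (q - p)) • (Ψ (z, q) - Ψ (z, p)) = Ψ (z, t) := by
      have h3 : (t - p) / (q - p) * (q - p) = t - p := div_mul_cancel₀ _ (by linarith)
      simp only [hΨ]
      rw [add_sub_add_left_eq_sub, ← sub_smul, smul_smul, h3, add_assoc, ← add_smul]
      congr 2; ring
    rwa [this] at hh
  have hKpq : K ⊆ Ioo p q := fun t ht => ⟨by linarith [hm1 ht], by linarith [hm2 ht]⟩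
  have hI2 : ∫ t in A, g' t = ∫ t in Ioo p q ∩ A, g' t := by
    rw [inter_comm]
    exact setIntegral_eq_of_subset_of_forall_sdiff_eq_zero hAm inter_subset_left
      (fun t ht => hout' t fun h => ht.2 ⟨ht.1, hKpq h⟩)
  set T : Set ℝ := {t | Ψ (z, t) ∈ essBdry E} with hT
  have hTf : (T ∩ Ioo p q).Finite := by
    refine Set.Finite.of_finite_image (f := fun t : ℝ => Ψ (z, t)) (hfin.subset ?_) ?_
    · rintro x ⟨t, ⟨h1, h2⟩, rfl⟩
      exact ⟨⟨h1, hIV t h2⟩, by simp⟩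
    · intro s _ t _ hst
      have := Ψ.injective hst
      exact (Prod.mk.inj this).2
  have hline := gg_line hAm hder hg'c (T := T) (p₀ := p) (q₀ := q)
    (fun a b _ hab => hz a b hab) _ p q hpq.le subset_rfl hTf.toFinset (by simp) rfl
  rw [hout p (fun h => lt_irrefl _ (hKpq h).1), hout q (fun h => lt_irrefl _ (hKpq h).2)] at hline
  simp only [abs_zero, zero_add] at hline
  rw [hI2, ← ofReal_norm, Real.norm_eq_abs]
  refine (ENNReal.ofReal_le_ofReal hline).trans ?_
  rw [ENNReal.ofReal_mul (by norm_num), ENNReal.ofReal_ofNat,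
    ENNReal.ofReal_sum_of_nonneg (fun _ _ => abs_nonneg _)]
  gcongr
  have hinj : Function.Injective (fun t : hTf.toFinset =>
      (⟨Ψ (z, t), by
        have h := hTf.mem_toFinset.1 t.2
        exact ⟨⟨h.1, hIV _ h.2⟩, by simp⟩⟩ :
          (essBdry E ∩ V ∩ (fun x => (Ψ.symm x).1) ⁻¹' {z} : Set 𝕐))) := by
    intro s t hst
    have := Ψ.injective (Subtype.mk.inj hst)
    exact Subtype.ext (Prod.mk.inj this).2
  have := ENNReal.tsum_comp_le_tsum_of_injective hinj (fun x => ‖φ x‖ₑ)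
  refine le_trans (le_of_eq ?_) this
  rw [tsum_fintype, ← Finset.sum_coe_sort]
  refine Finset.sum_congr rfl fun t _ => ?_
  rw [← Real.norm_eq_abs, ofReal_norm]

end gg

section ggb
variable {n : ℕ}

local notation "𝔽" => EuclideanSpace ℝ (Fin n)
local notation "𝕐" => EuclideanSpace ℝ (Fin (n + 1))

lemma gg_bound {E V : Set 𝕐} (hV : IsOpen V) (hVc : Convex ℝ V)
    (hE : MeasurableSet E) (hfin : μH[(n : ℝ)] (essBdry E ∩ V) ≠ ⊤) (e : 𝕐) (he : ‖e‖ = 1) :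
    ∃ C : ℝ≥0∞, C ≠ ⊤ ∧ ∀ φ : 𝕐 → ℝ, ContDiff ℝ 1 φ → HasCompactSupport φ → tsupport φ ⊆ V →
      ‖∫ y in E, fderiv ℝ φ y e‖ₑ ≤
        C * ∫⁻ x, ‖φ x‖ₑ ∂((μH[(n : ℝ)] : Measure 𝕐).restrict (essBdry E ∩ V)) := by
  obtain ⟨L, Ψ, hΨ, hort, hnorm, hlip⟩ := frame e he
  set μ : Measure 𝔽 := μH[(n : ℝ)] with hμ
  obtain ⟨c, hc0, hct, hc⟩ := haar_scale Ψ μ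
  refine ⟨c * 2, ENNReal.mul_ne_top hct (by simp), fun φ hφ hφc hφV => ?_⟩
  have hvol : (volume : Measure 𝕐) = c • Measure.map Ψ (μ.prod volume) := by
    ext s hs
    rw [Measure.smul_apply, Measure.map_apply Ψ.continuous.measurable hs, smul_eq_mul, ← hc,
      image_preimage_eq _ Ψ.surjective]
  set F : 𝕐 → ℝ := E.indicator (fun y => fderiv ℝ φ y e) with hF
  have hcont : Continuous (fun y => fderiv ℝ φ y e) :=
    (hφ.continuous_fderiv one_ne_zero).clm_apply continuous_const
  have hIntg : Integrable F volume := by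
    refine Integrable.indicator ?_ hE
    exact hcont.integrable_of_hasCompactSupport (hφc.fderiv_apply (𝕜 := ℝ) e)
  have hemb : MeasurableEmbedding Ψ := Ψ.toHomeomorph.measurableEmbedding
  have hint2 : Integrable (fun p : 𝔽 × ℝ => F (Ψ p)) (μ.prod volume) := by
    rw [hvol, integrable_smul_measure hc0 hct] at hIntg
    exact (hemb.integrable_map_iff).1 hIntg
  have hI : ∫ y in E, fderiv ℝ φ y e = c.toReal * ∫ z, ∫ t, F (Ψ (z, t)) ∂volume ∂μ := by
    rw [← integral_indicator hE]
    conv_lhs => rw [hvol]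
    rw [integral_smul_measure, hemb.integral_map, integral_prod _ hint2, smul_eq_mul]
  obtain ⟨g, hgm, hg1, hg2⟩ := eilenberg hlip (Nat.cast_nonneg n) (essBdry E ∩ V)
    (u := fun x => ‖φ x‖ₑ) hφ.continuous.enorm
  rw [hI, enorm_mul]
  have h1 : ‖c.toReal‖ₑ = c := by
    rw [← ofReal_norm, Real.norm_eq_abs, abs_of_nonneg ENNReal.toReal_nonneg, ENNReal.ofReal_toReal hct]
  rw [h1, mul_assoc]
  gcongr
  refine (enorm_integral_le_lintegral_enorm _).trans ?_
  calc ∫⁻ z, ‖∫ t, F (Ψ (z, t)) ∂volume‖ₑ ∂μ ≤ ∫⁻ z, 2 * g z ∂μ := by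
        refine lintegral_mono_ae ?_
        filter_upwards [slice_lemma Ψ μ hE, eilenberg_finite hlip (Nat.cast_nonneg n) hfin] with z h1 h2
        refine (gg_slice hV hVc hE Ψ hΨ hφ hφc hφV h1 h2).trans ?_
        gcongr
        exact hg1 z
    _ = 2 * ∫⁻ z, g z ∂μ := lintegral_const_mul _ hgm
    _ ≤ _ := by gcongr
end ggb

section riesz0
variable {W H : Type*} [AddCommGroup W] [Module ℝ W] [NormedAddCommGroup H] [InnerProductSpace ℝ H]
  [CompleteSpace H]

lemma riesz_abstract (T : W →ₗ[ℝ] H) (l : W →ₗ[ℝ] ℝ) {K : ℝ} (hK : ∀ φ, ‖l φ‖ ≤ K * ‖T φ‖) :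
    ∃ s : H, ∀ φ, l φ = inner ℝ s (T φ) := by
  obtain ⟨r, hr⟩ := LinearMap.exists_rightInverse_of_surjective T.rangeRestrict
    T.range_rangeRestrict
  have hr' : ∀ x, T (r x) = x := fun x => by
    have := congrArg Subtype.val (LinearMap.congr_fun hr x)
    simpa using this
  let f : LinearMap.range T →L[ℝ] ℝ := (l.comp r).mkContinuous K (fun x => by
    have := hK (r x)
    rw [hr'] at this
    exact this)
  have hf : ∀ φ, f ⟨T φ, ⟨φ, rfl⟩⟩ = l φ := by
    intro φ
    have h1 : ‖l (r ⟨T φ, ⟨φ, rfl⟩⟩ - φ)‖ ≤ 0 := by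
      refine (hK _).trans (le_of_eq ?_)
      rw [map_sub, hr', sub_self, norm_zero, mul_zero]
    rw [norm_le_zero_iff, map_sub, sub_eq_zero] at h1
    exact h1
  obtain ⟨g, hg, -⟩ := exists_extension_norm_eq _ f
  refine ⟨(InnerProductSpace.toDual ℝ H).symm g, fun φ => ?_⟩
  rw [InnerProductSpace.toDual_symm_apply, ← hf]
  exact (hg _).symm
end riesz0

section riesz
variable {n : ℕ}

local notation "𝔽" => EuclideanSpace ℝ (Fin n)
local notation "𝕐" => EuclideanSpace ℝ (Fin (n + 1))

/-- Test functions supported in `V`. -/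
def testW (V : Set 𝕐) : Submodule ℝ (𝕐 → ℝ) where
  carrier := {φ | ContDiff ℝ 1 φ ∧ HasCompactSupport φ ∧ tsupport φ ⊆ V}
  zero_mem' := by
    refine ⟨contDiff_const, HasCompactSupport.zero, ?_⟩
    simp [tsupport]
  add_mem' := by
    rintro φ ψ ⟨h1, h2, h3⟩ ⟨k1, k2, k3⟩
    exact ⟨h1.add k1, h2.add k2, (tsupport_add φ ψ).trans (union_subset h3 k3)⟩
  smul_mem' := by
    rintro c φ ⟨h1, h2, h3⟩
    refine ⟨h1.const_smul c, ?_, ?_⟩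
    · exact h2.mono (Function.support_const_smul_subset c φ)
    · exact (closure_mono (Function.support_const_smul_subset c φ)).trans h3

lemma riesz_scalar {E V : Set 𝕐} (hE : MeasurableSet E) (ν : Measure 𝕐) [IsFiniteMeasure ν]
    (e : 𝕐) {C : ℝ≥0∞} (hC : C ≠ ⊤)
    (hb : ∀ φ : 𝕐 → ℝ, ContDiff ℝ 1 φ → HasCompactSupport φ → tsupport φ ⊆ V →
      ‖∫ y in E, fderiv ℝ φ y e‖ₑ ≤ C * ∫⁻ x, ‖φ x‖ₑ ∂ν) :
    ∃ s : 𝕐 → ℝ, Integrable s ν ∧ ∀ φ : 𝕐 → ℝ, ContDiff ℝ 1 φ → HasCompactSupport φ →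
      tsupport φ ⊆ V → ∫ y in E, fderiv ℝ φ y e = ∫ x, φ x * s x ∂ν := by
  have hmem : ∀ φ : testW V, MemLp (φ : 𝕐 → ℝ) 2 ν := fun φ =>
    φ.2.1.continuous.memLp_of_hasCompactSupport φ.2.2.1
  have hIntg : ∀ φ : testW V, Integrable (fun y => fderiv ℝ (φ : 𝕐 → ℝ) y e) (volume.restrict E) :=
    fun φ => (((φ.2.1.continuous_fderiv one_ne_zero).clm_apply
      continuous_const).integrable_of_hasCompactSupport (φ.2.2.1.fderiv_apply (𝕜 := ℝ) e)).restrict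
  let T : testW V →ₗ[ℝ] Lp ℝ 2 ν :=
    { toFun := fun φ => (hmem φ).toLp
      map_add' := fun φ ψ => rfl
      map_smul' := fun c φ => rfl }
  let l : testW V →ₗ[ℝ] ℝ :=
    { toFun := fun φ => ∫ y in E, fderiv ℝ (φ : 𝕐 → ℝ) y e
      map_add' := fun φ ψ => by
        rw [← integral_add (hIntg φ) (hIntg ψ)]
        refine integral_congr_ae (Eventually.of_forall fun y => ?_)
        have h1 := φ.2.1.differentiable one_ne_zero y
        have h2 := ψ.2.1.differentiable one_ne_zero y
        simp only [Submodule.coe_add, fderiv_add h1 h2]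
        rfl
      map_smul' := fun c φ => by
        simp only [RingHom.id_apply]
        rw [← integral_smul]
        refine integral_congr_ae (Eventually.of_forall fun y => ?_)
        have h1 := φ.2.1.differentiable one_ne_zero y
        simp only [Submodule.coe_smul, fderiv_const_smul h1]
        rfl }
  obtain ⟨K, hK0, hK⟩ : ∃ K : ℝ, 0 ≤ K ∧ ∀ φ, ‖l φ‖ ≤ K * ‖T φ‖ := by
    set m : ℝ≥0∞ := ν univ ^ (1 / (1 : ℝ≥0∞).toReal - 1 / (2 : ℝ≥0∞).toReal) with hm
    have hmt : m ≠ ⊤ := by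
      refine ENNReal.rpow_ne_top_of_nonneg ?_ (measure_ne_top _ _)
      norm_num
    refine ⟨(C * m).toReal, ENNReal.toReal_nonneg, fun φ => ?_⟩
    have h1 := hb φ φ.2.1 φ.2.2.1 φ.2.2.2
    have h2 := eLpNorm_le_eLpNorm_mul_rpow_measure_univ (μ := ν) (p := 1) (q := 2)
      (by norm_num) (hmem φ).1
    rw [eLpNorm_one_eq_lintegral_enorm] at h2
    have h3 : ‖l φ‖ₑ ≤ (C * m) * eLpNorm (φ : 𝕐 → ℝ) 2 ν := by
      refine h1.trans ?_
      rw [mul_assoc, mul_comm m]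
      gcongr
    have h4 := ENNReal.toReal_mono (ENNReal.mul_ne_top (ENNReal.mul_ne_top hC hmt) (hmem φ).2.ne) h3
    rw [ENNReal.toReal_mul, toReal_enorm] at h4
    have h5 : ‖T φ‖ = (eLpNorm (φ : 𝕐 → ℝ) 2 ν).toReal := Lp.norm_toLp _ (hmem φ)
    rw [h5]; exact h4
  obtain ⟨s, hs⟩ := riesz_abstract T l hK
  refine ⟨s, (Lp.memLp s).integrable one_le_two, fun φ h1 h2 h3 => ?_⟩
  have h4 : l ⟨φ, h1, h2, h3⟩ = inner ℝ s (T ⟨φ, h1, h2, h3⟩) := by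
    exact hs _
  change l ⟨φ, h1, h2, h3⟩ = _
  rw [h4, L2.inner_def]
  refine integral_congr_ae ?_
  filter_upwards [(hmem ⟨φ, h1, h2, h3⟩).coeFn_toLp] with x hx
  have : (T ⟨φ, h1, h2, h3⟩ : 𝕐 → ℝ) x = φ x := hx
  rw [this]
  simp

lemma gg_field {E V : Set 𝕐} (hV : IsOpen V) (hVc : Convex ℝ V)
    (hE : MeasurableSet E) (hfin : μH[(n : ℝ)] (essBdry E ∩ V) ≠ ⊤) :
    ∃ σ : 𝕐 → 𝕐, Integrable σ ((μH[(n : ℝ)] : Measure 𝕐).restrict (essBdry E ∩ V)) ∧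
      ∀ φ : 𝕐 → ℝ, ContDiff ℝ 1 φ → HasCompactSupport φ → tsupport φ ⊆ V → ∀ v : 𝕐,
      ∫ y in E, fderiv ℝ φ y v =
        ∫ x, φ x * inner ℝ (σ x) v ∂((μH[(n : ℝ)] : Measure 𝕐).restrict (essBdry E ∩ V)) := by
  set ν := (μH[(n : ℝ)] : Measure 𝕐).restrict (essBdry E ∩ V) with hν
  have : IsFiniteMeasure ν := ⟨by rw [hν, Measure.restrict_apply_univ]; exact lt_top_iff_ne_top.2 hfin⟩
  set b : Fin (n + 1) → 𝕐 := fun i => EuclideanSpace.single i 1 with hb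
  have key : ∀ i, ∃ s : 𝕐 → ℝ, Integrable s ν ∧ ∀ φ : 𝕐 → ℝ, ContDiff ℝ 1 φ →
      HasCompactSupport φ → tsupport φ ⊆ V → ∫ y in E, fderiv ℝ φ y (b i) = ∫ x, φ x * s x ∂ν := by
    intro i
    obtain ⟨C, hC, h⟩ := gg_bound hV hVc hE hfin (b i) (by simp [hb])
    exact riesz_scalar hE ν (b i) hC h
  choose s hs1 hs2 using key
  refine ⟨fun x => ∑ i, s i x • b i, ?_, ?_⟩
  · exact integrable_finsetSum _ fun i _ => (hs1 i).smul_const _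
  intro φ h1 h2 h3 v
  have hv : v = ∑ i, v i • b i := by
    ext j
    simp [hb, Pi.single_apply]
  have e1 : ∀ y, fderiv ℝ φ y v = ∑ i, v i * fderiv ℝ φ y (b i) := by
    intro y
    conv_lhs => rw [hv]
    simp
  have e2 : ∀ x, φ x * inner ℝ (∑ i, s i x • b i) v = ∑ i, v i * (φ x * s i x) := by
    intro x
    rw [sum_inner, Finset.mul_sum]
    refine Finset.sum_congr rfl fun i _ => ?_
    rw [inner_smul_left]
    simp [hb, EuclideanSpace.inner_single_left]
    ring
  simp only [e1, e2]
  rw [integral_finsetSum, integral_finsetSum]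
  · refine Finset.sum_congr rfl fun i _ => ?_
    rw [integral_const_mul, integral_const_mul, hs2 i φ h1 h2 h3]
  · intro i _
    refine Integrable.const_mul ?_ _
    obtain ⟨M, hM⟩ := h2.exists_bound_of_continuous h1.continuous
    exact (hs1 i).bdd_mul h1.continuous.aestronglyMeasurable (Eventually.of_forall hM)
  · intro i _
    refine Integrable.const_mul ?_ _
    exact (((h1.continuous_fderiv one_ne_zero).clm_apply
      continuous_const).integrable_of_hasCompactSupport (h2.fderiv_apply (𝕜 := ℝ) (b i))).restrict
end riesz

section transl
variable {n : ℕ}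

local notation "𝕐" => EuclideanSpace ℝ (Fin (n + 1))

/-- The field `σ` represents the derivative of the indicator of `E` in `V` against `ν`. -/
def IsGG (E V : Set 𝕐) (ν : Measure 𝕐) (σ : 𝕐 → 𝕐) : Prop :=
  Integrable σ ν ∧ ∀ φ : 𝕐 → ℝ, ContDiff ℝ 1 φ → HasCompactSupport φ → tsupport φ ⊆ V → ∀ v : 𝕐,
      ∫ y in E, fderiv ℝ φ y v = ∫ x, φ x * inner ℝ (σ x) v ∂ν

lemma trans_phi {E V : Set 𝕐} {ν : Measure 𝕐} {σ : 𝕐 → 𝕐} (hgg : IsGG E V ν σ)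
    (hEf : volume E ≠ ⊤) {φ : 𝕐 → ℝ} (hφ : ContDiff ℝ 1 φ) (hφc : HasCompactSupport φ)
    (hφ1 : ∀ y, ‖φ y‖ ≤ 1) {B' : Set 𝕐} (hB'm : MeasurableSet B') (hB'V : B' ⊆ V) {h : 𝕐}
    (hsw : ∀ y ∈ tsupport φ, ∀ s ∈ Icc (0 : ℝ) 1, y + s • h ∈ B') :
    ‖(∫ y in E, φ (y - h)) - ∫ y in E, φ y‖ ≤ (∫⁻ x in B', ‖(inner ℝ (σ x) h : ℝ)‖ₑ ∂ν).toReal := by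
  have hfinE : IsFiniteMeasure (volume.restrict E) :=
    ⟨by rw [Measure.restrict_apply_univ]; exact lt_top_iff_ne_top.2 hEf⟩
  have hdc : HasCompactSupport (fderiv ℝ φ) := hφc.fderiv (𝕜 := ℝ)
  obtain ⟨M, hM⟩ := hdc.exists_bound_of_continuous (hφ.continuous_fderiv one_ne_zero)
  have hinner : Integrable (fun x => (inner ℝ (σ x) h : ℝ)) ν := hgg.1.inner_const h
  set f : ℝ → ℝ := fun s => ∫ y in E, φ (y - s • h) with hf
  have hcd : ∀ s : ℝ, ContDiff ℝ 1 (fun y => φ (y - s • h)) := fun s =>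
    hφ.comp (contDiff_id.sub contDiff_const)
  have hfd : ∀ (s : ℝ) y, fderiv ℝ (fun y => φ (y - s • h)) y = fderiv ℝ φ (y - s • h) := fun s y =>
    fderiv_comp_sub (f := φ) (x := y) (s • h)
  have hder : ∀ s, HasDerivAt f (∫ y in E, -fderiv ℝ φ (y - s • h) h) s := by
    intro s
    refine (hasDerivAt_integral_of_dominated_loc_of_deriv_le (bound := fun _ => M * ‖h‖)
      (F := fun s y => φ (y - s • h)) (F' := fun s y => -fderiv ℝ φ (y - s • h) h)
      (s := univ) univ_mem ?_ ?_ ?_ ?_ ?_ ?_).2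
    · exact Eventually.of_forall fun s => (hcd s).continuous.aestronglyMeasurable
    · refine Integrable.of_bound (hcd s).continuous.aestronglyMeasurable 1
        (Eventually.of_forall fun y => hφ1 _)
    · refine Continuous.aestronglyMeasurable ?_
      have := hφ.continuous_fderiv one_ne_zero
      fun_prop
    · refine Eventually.of_forall fun y s _ => ?_
      rw [norm_neg]
      exact ((fderiv ℝ φ (y - s • h)).le_opNorm h).trans (by gcongr; exact hM _)
    · exact integrable_const _
    · refine Eventually.of_forall fun y s _ => ?_
      have h1 : HasDerivAt (fun s : ℝ => y - s • h) (-h) s := by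
        have := ((hasDerivAt_id s).smul_const h).const_sub y
        simpa using this
      have h2 : HasFDerivAt φ (fderiv ℝ φ (y - s • h)) (y - s • h) :=
        (hφ.differentiable one_ne_zero _).hasFDerivAt
      have := h2.comp_hasDerivAt s h1
      rw [map_neg] at this
      exact this
  have hbd : ∀ s ∈ Ico (0 : ℝ) 1, ‖∫ y in E, -fderiv ℝ φ (y - s • h) h‖ ≤
      (∫⁻ x in B', ‖(inner ℝ (σ x) h : ℝ)‖ₑ ∂ν).toReal := by
    intro s hs
    have hts : ∀ y, φ (y - s • h) ≠ 0 → y ∈ B' := by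
      intro y hy
      have := hsw (y - s • h) (subset_tsupport _ hy) s ⟨hs.1, hs.2.le⟩
      simpa using this
    have hc : HasCompactSupport (fun y => φ (y - s • h)) :=
      hφc.comp_homeomorph (Homeomorph.subRight (s • h))
    have hsV : tsupport (fun y => φ (y - s • h)) ⊆ V := by
      have : tsupport (fun y => φ (y - s • h)) ⊆ (fun y => y - s • h) ⁻¹' tsupport φ :=
        closure_minimal (fun y hy => subset_tsupport φ hy)
          ((isClosed_tsupport φ).preimage (by fun_prop))
      intro y hy
      have := hsw (y - s • h) (this hy) s ⟨hs.1, hs.2.le⟩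
      exact hB'V (by simpa using this)
    have h1 := hgg.2 _ (hcd s) hc hsV h
    simp only [hfd] at h1
    rw [integral_neg, norm_neg, h1, ← toReal_enorm]
    refine ENNReal.toReal_mono ?_ ?_
    · exact (lt_of_le_of_lt (setLIntegral_le_lintegral _ _) hinner.2).ne
    · refine (enorm_integral_le_lintegral_enorm _).trans ?_
      rw [← lintegral_indicator hB'm]
      refine lintegral_mono fun x => ?_
      by_cases hx : φ (x - s • h) = 0
      · simp [hx]
      · rw [indicator_of_mem (hts x hx), enorm_mul]
        have : ‖φ (x - s • h)‖ₑ ≤ 1 := by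
          rw [← ofReal_norm]
          exact ENNReal.ofReal_le_one.2 (hφ1 _)
        calc _ ≤ 1 * ‖(inner ℝ (σ x) h : ℝ)‖ₑ := by gcongr
          _ = _ := one_mul _
  have := norm_image_sub_le_of_norm_deriv_le_segment_01' (f := f)
    (fun s _ => (hder s).hasDerivWithinAt) hbd
  simpa [hf] using this

lemma exists_bump {K O : Set 𝕐} (hK : IsCompact K) (hO : IsOpen O) (hKO : K ⊆ O) :
    ∃ φ : 𝕐 → ℝ, ContDiff ℝ 1 φ ∧ HasCompactSupport φ ∧ tsupport φ ⊆ O ∧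
      (∀ y, φ y ∈ Icc (0 : ℝ) 1) ∧ ∀ y ∈ K, φ y = 1 := by
  obtain ⟨δ, hδ, hδO⟩ := hK.exists_cthickening_subset_open hO hKO
  obtain ⟨f, hf0, hf1, hf⟩ := exists_contMDiffMap_zero_one_of_isClosed (n := 1)
    (modelWithCornersSelf ℝ 𝕐) (s := (thickening δ K)ᶜ) (t := K)
    isOpen_thickening.isClosed_compl hK.isClosed
    (disjoint_compl_left_iff_subset.2 (self_subset_thickening hδ K))
  have hts : tsupport f ⊆ cthickening δ K := by
    refine closure_minimal ?_ isClosed_cthickening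
    intro y hy
    by_contra h
    exact hy (hf0 fun h' => h (thickening_subset_cthickening _ _ h'))
  refine ⟨f, ?_, ?_, hts.trans hδO, hf, fun y hy => hf1 hy⟩
  · exact contMDiff_iff_contDiff.1 f.contMDiff
  · exact hK.cthickening.of_isClosed_subset (isClosed_tsupport _) hts

lemma translation {E V : Set 𝕐} {ν : Measure 𝕐} {σ : 𝕐 → 𝕐} (hgg : IsGG E V ν σ)
    (hE : MeasurableSet E) (hEf : volume E ≠ ⊤) {B B' : Set 𝕐} (hB : IsOpen B)
    (hB'm : MeasurableSet B') (hB'V : B' ⊆ V) {h : 𝕐}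
    (hsw : ∀ y ∈ B, ∀ s ∈ Icc (0 : ℝ) 1, y + s • h ∈ B') :
    volume {y ∈ B | y ∉ E ∧ y + h ∈ E} ≤ ∫⁻ x in B', ‖(inner ℝ (σ x) h : ℝ)‖ₑ ∂ν := by
  set G := {y ∈ B | y ∉ E ∧ y + h ∈ E} with hG
  have hshift : Measurable (fun y : 𝕐 => y + h) := by fun_prop
  have hGm : MeasurableSet G := hB.measurableSet.inter (hE.compl.inter (hshift hE))
  have hfinI : ∫⁻ x in B', ‖(inner ℝ (σ x) h : ℝ)‖ₑ ∂ν ≠ ⊤ :=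
    (lt_of_le_of_lt (setLIntegral_le_lintegral _ _) (hgg.1.inner_const h).2).ne
  have hshE : volume ((fun y : 𝕐 => y + h) ⁻¹' E) = volume E := measure_preimage_add_right _ _ _
  have hGf : volume G ≠ ⊤ := by
    refine measure_ne_top_of_subset (s := (fun y : 𝕐 => y + h) ⁻¹' E) (fun y (hy : y ∈ G) => hy.2.2) ?_
    rw [hshE]; exact hEf
  rw [hGm.measure_eq_iSup_isCompact_of_ne_top hGf]
  refine iSup₂_le fun K hKG => iSup_le fun hK => ?_
  refine ENNReal.le_of_forall_pos_le_add fun ε hε _ => ?_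
  have hKf : volume K ≠ ⊤ := hK.measure_lt_top.ne
  obtain ⟨O, hKO, hO, hOv⟩ := K.exists_isOpen_lt_add (μ := volume) hKf
    (ε := ε) (by exact_mod_cast hε.ne')
  obtain ⟨φ, h1, h2, h3, h4, h5⟩ := exists_bump hK (hO.inter hB)
    (subset_inter hKO fun y hy => (hKG hy).1)
  have hmain := trans_phi hgg hEf h1 h2
    (fun y => by rw [Real.norm_eq_abs, abs_of_nonneg (h4 y).1]; exact (h4 y).2) hB'm hB'V
    (fun y hy => hsw y (h3 hy).2)
  have hfinE : IsFiniteMeasure (volume.restrict E) :=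
    ⟨by rw [Measure.restrict_apply_univ]; exact lt_top_iff_ne_top.2 hEf⟩
  have hKf' : (volume K).toReal ≤ ∫ y in E, φ (y - h) := by
    have hm : MeasurableSet ((fun y : 𝕐 => y - h) ⁻¹' K) :=
      (show Measurable (fun y : 𝕐 => y - h) by fun_prop) hK.measurableSet
    have hs : (fun y : 𝕐 => y - h) ⁻¹' K ⊆ E := by
      intro y hy
      have := (hKG hy).2.2
      simpa using this
    have e1 : volume ((fun y : 𝕐 => y - h) ⁻¹' K) = volume K := by
      simp [sub_eq_add_neg]
    have e2 : (volume K).toReal = ∫ y in E, ((fun y : 𝕐 => y - h) ⁻¹' K).indicator (fun _ => (1 : ℝ)) y := by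
      rw [integral_indicator hm, Measure.restrict_restrict hm, inter_eq_left.2 hs]
      simp [e1, Measure.real]
    rw [e2]
    refine integral_mono ((integrable_const _).indicator hm) ?_ ?_
    · refine Integrable.of_bound (C := 1) ?_ (Eventually.of_forall fun y => ?_)
      · exact (h1.continuous.comp (continuous_id.sub continuous_const)).aestronglyMeasurable
      · rw [Real.norm_eq_abs, abs_of_nonneg (h4 _).1]; exact (h4 _).2
    · intro y
      by_cases hy : y - h ∈ K
      · have : y ∈ (fun y : 𝕐 => y - h) ⁻¹' K := hy
        simp only [indicator_of_mem this]
        rw [h5 _ hy]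
      · have : y ∉ (fun y : 𝕐 => y - h) ⁻¹' K := hy
        simp only [indicator_of_notMem this]
        exact (h4 _).1
  have hOK : volume (O \ K) ≤ ε := by
    rw [measure_sdiff hKO hK.measurableSet.nullMeasurableSet hKf]
    exact tsub_le_iff_left.2 hOv.le
  have hE2 : ∫ y in E, φ y ≤ ε := by
    have hm : MeasurableSet (O \ K) := hO.measurableSet.diff hK.measurableSet
    have hfO : volume (O \ K) ≠ ⊤ := ne_top_of_le_ne_top ENNReal.coe_ne_top hOK
    calc ∫ y in E, φ y ≤ ∫ y in E, (O \ K).indicator (fun _ => (1 : ℝ)) y := by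
          refine integral_mono_ae ?_ ((integrable_const _).indicator hm) ?_
          · refine Integrable.of_bound (C := 1) h1.continuous.aestronglyMeasurable
              (Eventually.of_forall fun y => ?_)
            rw [Real.norm_eq_abs, abs_of_nonneg (h4 _).1]; exact (h4 _).2
          · filter_upwards [ae_restrict_mem hE] with y hy
            have hyK : y ∉ K := fun h' => (hKG h').2.1 hy
            by_cases hyO : y ∈ O
            · have : y ∈ O \ K := ⟨hyO, hyK⟩
              simp only [indicator_of_mem this]
              exact (h4 y).2
            · have : y ∉ O \ K := fun h' => hyO h'.1
              simp only [indicator_of_notMem this]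
              rw [image_eq_zero_of_notMem_tsupport (f := φ) fun h' => hyO (h3 h').1]
      _ = (volume (E ∩ (O \ K))).toReal := by
          rw [integral_indicator hm, Measure.restrict_restrict hm, inter_comm]
          simp [Measure.real]
      _ ≤ ((ε : ℝ≥0∞)).toReal := by
          refine ENNReal.toReal_mono ENNReal.coe_ne_top ((measure_mono inter_subset_right).trans hOK)
      _ = ε := by simp
  have hfin : (volume K).toReal ≤ (∫⁻ x in B', ‖(inner ℝ (σ x) h : ℝ)‖ₑ ∂ν).toReal + ε := by
    have := (Real.norm_eq_abs _ ▸ le_abs_self _ :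
      (∫ y in E, φ (y - h)) - ∫ y in E, φ y ≤ ‖(∫ y in E, φ (y - h)) - ∫ y in E, φ y‖)
    linarith
  rw [← ENNReal.toReal_le_toReal hKf (ENNReal.add_ne_top.2 ⟨hfinI, ENNReal.coe_ne_top⟩),
    ENNReal.toReal_add hfinI ENNReal.coe_ne_top]
  simpa using hfin
end transl

section blow
variable {n : ℕ}

local notation "𝔽" => EuclideanSpace ℝ (Fin n)
local notation "𝕐" => EuclideanSpace ℝ (Fin (n + 1))

lemma bad_bound {E : Set 𝕐} (hE : MeasurableSet E) (Ψ : (𝔽 × ℝ) ≃L[ℝ] 𝕐) {e : 𝕐} {L : 𝔽 →ₗᵢ[ℝ] 𝕐}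
    (hΨ : ∀ z t, Ψ (z, t) = L z + t • e) (z0 : 𝔽) (ρ : ℝ) (I : Set ℝ) (hI : MeasurableSet I)
    {Q : Set 𝕐} (hQ : ∀ z ∈ ball z0 ρ, ∀ t ∈ I, Ψ (z, t) ∈ Q) {ε δ : ℝ≥0∞}
    (hε : ∀ w : 𝔽, ‖w‖ < 2 * ρ → volume {y ∈ Q | y ∉ E ∧ y + L w ∈ E} ≤ ε)
    (hδ : δ ≤ volume (E ∩ Ψ '' (ball z0 ρ ×ˢ I))) :
    δ * (μH[(n : ℝ)] : Measure 𝔽) {z ∈ ball z0 ρ | volume (I ∩ {t | Ψ (z, t) ∈ E}) = 0} ≤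
      (μH[(n : ℝ)] : Measure 𝔽) (ball 0 (2 * ρ)) * ε := by
  set μ : Measure 𝔽 := μH[(n : ℝ)] with hμ
  obtain ⟨c, hc0, hct, hc⟩ := haar_scale Ψ μ
  set D := ball z0 ρ with hD
  have hDm : MeasurableSet D := measurableSet_ball
  have hΨm : Measurable Ψ := Ψ.continuous.measurable
  set M : Set (𝔽 × ℝ) := {p | p.2 ∈ I ∧ Ψ p ∈ E} with hM
  have hMm : MeasurableSet M := (measurable_snd hI).inter (hΨm hE)
  set m : 𝔽 → ℝ≥0∞ := fun z => volume (Prod.mk z ⁻¹' M) with hm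
  have hmm : Measurable m := measurable_measure_prodMk_left hMm
  set Kset : Set ((𝔽 × 𝔽) × ℝ) := {p | p.2 ∈ I ∧ Ψ (p.1.1, p.2) ∉ E ∧ Ψ (p.1.1 + p.1.2, p.2) ∈ E}
    with hKs
  have hKm : MeasurableSet Kset := by
    have h1 : Measurable (fun p : (𝔽 × 𝔽) × ℝ => Ψ (p.1.1, p.2)) := by fun_prop
    have h2 : Measurable (fun p : (𝔽 × 𝔽) × ℝ => Ψ (p.1.1 + p.1.2, p.2)) := by fun_prop
    exact (measurable_snd hI).inter ((h1 hE.compl).inter (h2 hE))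
  set k : 𝔽 × 𝔽 → ℝ≥0∞ := fun p => volume (Prod.mk p ⁻¹' Kset) with hk
  have hkm : Measurable k := measurable_measure_prodMk_left hKm
  set Bad := {z ∈ D | volume (I ∩ {t | Ψ (z, t) ∈ E}) = 0} with hBad
  have hBadm : MeasurableSet Bad := hDm.inter (hmm (measurableSet_singleton 0))
  have hBadD : Bad ⊆ D := fun z hz => hz.1
  -- total mass
  have hmass : δ ≤ c * ∫⁻ z in D, m z ∂μ := by
    refine hδ.trans (le_of_eq ?_)
    have : E ∩ Ψ '' (D ×ˢ I) = Ψ '' (M ∩ D ×ˢ univ) := by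
      ext y
      constructor
      · rintro ⟨hy, p, ⟨hp1, hp2⟩, rfl⟩
        exact ⟨p, ⟨⟨hp2, hy⟩, hp1, trivial⟩, rfl⟩
      · rintro ⟨p, ⟨⟨h1, h2⟩, h3, -⟩, rfl⟩
        exact ⟨h2, p, ⟨h3, h1⟩, rfl⟩
    rw [this, hc, ← Measure.restrict_apply hMm, ← Measure.prod_restrict, Measure.restrict_univ,
      Measure.prod_apply hMm]
  have hw : ∀ w ∈ ball (0 : 𝔽) (2 * ρ), c * ∫⁻ z in D, k (z, w) ∂μ ≤ ε := by
    intro w hw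
    refine le_trans ?_ (hε w (by simpa using hw))
    set Kw : Set (𝔽 × ℝ) := {p | p.2 ∈ I ∧ Ψ p ∉ E ∧ Ψ p + L w ∈ E} with hKw
    have hKwm : MeasurableSet Kw := by
      have h2 : Measurable (fun p : 𝔽 × ℝ => Ψ p + L w) := by fun_prop
      exact (measurable_snd hI).inter ((hΨm hE.compl).inter (h2 hE))
    have e1 : ∀ z, k (z, w) = volume (Prod.mk z ⁻¹' Kw) := by
      intro z
      have : ∀ t, Ψ (z + w, t) = Ψ (z, t) + L w := by
        intro t; rw [hΨ, hΨ, map_add]; abel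
      simp only [hk, hKs, hKw, preimage_ofPred_eq, this]
    simp only [e1]
    rw [← Measure.prod_apply hKwm]
    have e2 : ((μ.restrict D).prod volume) Kw = (μ.prod volume) (Kw ∩ D ×ˢ univ) := by
      rw [← Measure.restrict_apply hKwm, ← Measure.prod_restrict, Measure.restrict_univ]
    rw [e2, ← hc]
    refine measure_mono ?_
    rintro y ⟨p, ⟨⟨h1, h2⟩, h3, -⟩, rfl⟩
    exact ⟨hQ p.1 h3 p.2 h1, h2⟩
  have hz : ∀ z ∈ Bad, ∫⁻ z' in D, m z' ∂μ ≤ ∫⁻ w in ball (0 : 𝔽) (2 * ρ), k (z, w) ∂μ := by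
    intro z hz
    rw [← lintegral_indicator hDm, ← lintegral_indicator measurableSet_ball,
      ← lintegral_add_left_eq_self _ z]
    refine lintegral_mono fun w => ?_
    by_cases hzw : z + w ∈ D
    · have hwb : w ∈ ball (0 : 𝔽) (2 * ρ) := by
        have h1 := mem_ball_iff_norm.1 hzw
        have h2 := mem_ball_iff_norm.1 (hBadD hz)
        rw [mem_ball_zero_iff]
        calc ‖w‖ = ‖(z + w - z0) - (z - z0)‖ := by congr 1; abel
          _ ≤ _ := norm_sub_le _ _
          _ < 2 * ρ := by linarith
      rw [indicator_of_mem hzw, indicator_of_mem hwb]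
      have hsub : Prod.mk (z + w) ⁻¹' M ⊆ (Prod.mk (z, w) ⁻¹' Kset) ∪ (I ∩ {t | Ψ (z, t) ∈ E}) := by
        intro t ht
        by_cases h : Ψ (z, t) ∈ E
        · exact Or.inr ⟨ht.1, h⟩
        · exact Or.inl ⟨ht.1, h, ht.2⟩
      calc m (z + w) ≤ _ := measure_mono hsub
        _ ≤ _ := measure_union_le _ _
        _ = k (z, w) := by rw [hz.2, add_zero]
    · rw [indicator_of_notMem hzw]; exact zero_le
  calc δ * μ Bad ≤ c * (∫⁻ z in D, m z ∂μ) * μ Bad := by gcongr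
    _ = c * ∫⁻ _z in Bad, (∫⁻ z in D, m z ∂μ) ∂μ := by rw [setLIntegral_const, mul_assoc]
    _ ≤ c * ∫⁻ z in Bad, (∫⁻ w in ball (0 : 𝔽) (2 * ρ), k (z, w) ∂μ) ∂μ := by
        gcongr c * ?_
        exact setLIntegral_mono' hBadm hz
    _ ≤ c * ∫⁻ z in D, (∫⁻ w in ball (0 : 𝔽) (2 * ρ), k (z, w) ∂μ) ∂μ := by
        gcongr c * ?_
        exact lintegral_mono_set hBadD
    _ = c * ∫⁻ w in ball (0 : 𝔽) (2 * ρ), (∫⁻ z in D, k (z, w) ∂μ) ∂μ := by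
        rw [lintegral_lintegral_swap]
        exact hkm.aemeasurable
    _ = ∫⁻ w in ball (0 : 𝔽) (2 * ρ), c * (∫⁻ z in D, k (z, w) ∂μ) ∂μ := by
        rw [lintegral_const_mul]
        exact Measurable.lintegral_prod_left' hkm
    _ ≤ ∫⁻ _w in ball (0 : 𝔽) (2 * ρ), ε ∂μ := setLIntegral_mono' measurableSet_ball hw
    _ = μ (ball 0 (2 * ρ)) * ε := by rw [setLIntegral_const, mul_comm]

lemma blow {E : Set 𝕐} (hE : MeasurableSet E) (Ψ : (𝔽 × ℝ) ≃L[ℝ] 𝕐) {e : 𝕐} {L : 𝔽 →ₗᵢ[ℝ] 𝕐}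
    (hΨ : ∀ z t, Ψ (z, t) = L z + t • e) (hnorm : ∀ z t, ‖Ψ (z, t)‖ ^ 2 = ‖z‖ ^ 2 + t ^ 2)
    (hlip : LipschitzWith 1 (fun x => (Ψ.symm x).1)) (x : 𝕐) {R η : ℝ} (hR : 0 < R) (hη : 0 < η)
    (hη2 : η ≤ 1 / 2) {ε δ : ℝ≥0∞}
    (hε1 : ∀ w : 𝔽, ‖w‖ < 2 * R → volume {y ∈ ball x R | y ∉ E ∧ y + L w ∈ E} ≤ ε)
    (hε2 : ∀ w : 𝔽, ‖w‖ < 2 * R → volume {y ∈ ball x R | y ∈ E ∧ y + L w ∉ E} ≤ ε)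
    (hδ1 : δ ≤ volume (E ∩ ball x (η * R))) (hδ2 : δ ≤ volume (Eᶜ ∩ ball x (η * R))) :
    δ * (μH[(n : ℝ)] : Measure 𝔽) (ball 0 ((1 - η) * R)) ≤
      δ * μH[(n : ℝ)] (essBdry E ∩ ball x R) +
        2 * ((μH[(n : ℝ)] : Measure 𝔽) (ball 0 (2 * R)) * ε) := by
  set μ : Measure 𝔽 := μH[(n : ℝ)] with hμ
  set z0 := (Ψ.symm x).1 with hz0
  set t0 := (Ψ.symm x).2 with ht0
  have hx : Ψ (z0, t0) = x := by
    have : (z0, t0) = Ψ.symm x := rfl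
    rw [this, Ψ.apply_symm_apply]
  have hdist : ∀ z t, ‖Ψ (z, t) - x‖ ^ 2 = ‖z - z0‖ ^ 2 + (t - t0) ^ 2 := by
    intro z t
    rw [← hx, ← map_sub, Prod.mk_sub_mk, hnorm]
  set ρ := (1 - η) * R with hρ
  have hρ0 : 0 < ρ := mul_pos (by linarith) hR
  have hρR : ρ ≤ R := by rw [hρ]; nlinarith
  set I : Set ℝ := Ioo (t0 - η * R) (t0 + η * R) with hI
  have hηR : 0 < η * R := mul_pos hη hR
  have hcyl : ∀ z ∈ ball z0 ρ, ∀ t ∈ I, Ψ (z, t) ∈ ball x R := by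
    intro z hz t ht
    rw [mem_ball_iff_norm] at hz ⊢
    have h1 : ‖z - z0‖ ^ 2 < ρ ^ 2 := by gcongr
    have h2 : (t - t0) ^ 2 ≤ (η * R) ^ 2 :=
      sq_le_sq' (by linarith [ht.1]) (by linarith [ht.2])
    have h3 := hdist z t
    have h4 : ρ ^ 2 + (η * R) ^ 2 ≤ R ^ 2 := by
      have : ρ ^ 2 + (η * R) ^ 2 = R ^ 2 - 2 * η * (1 - η) * R ^ 2 := by rw [hρ]; ring
      rw [this]
      have : 0 ≤ 2 * η * (1 - η) * R ^ 2 := by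
        have : 0 ≤ 1 - η := by linarith
        positivity
      linarith
    exact lt_of_pow_lt_pow_left₀ 2 hR.le (by linarith)
  have hball : ball x (η * R) ⊆ Ψ '' (ball z0 ρ ×ˢ I) := by
    intro y hy
    refine ⟨Ψ.symm y, ?_, Ψ.apply_symm_apply y⟩
    have h3 := hdist (Ψ.symm y).1 (Ψ.symm y).2
    rw [Prod.mk.eta, Ψ.apply_symm_apply] at h3
    rw [mem_ball_iff_norm] at hy
    have h4 : ‖y - x‖ ^ 2 < (η * R) ^ 2 := by gcongr
    have h5 : ‖(Ψ.symm y).1 - z0‖ < η * R :=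
      lt_of_pow_lt_pow_left₀ 2 hηR.le (by nlinarith [sq_nonneg ((Ψ.symm y).2 - t0)])
    have h6 : |(Ψ.symm y).2 - t0| < η * R :=
      lt_of_pow_lt_pow_left₀ 2 hηR.le
        (by rw [sq_abs]; nlinarith [sq_nonneg (‖(Ψ.symm y).1 - z0‖)])
    refine ⟨?_, ?_⟩
    · rw [mem_ball_iff_norm]
      refine h5.trans_le ?_
      rw [hρ]; nlinarith
    · rw [abs_lt] at h6
      exact ⟨by linarith, by linarith⟩
  have hb0 := bad_bound hE Ψ hΨ z0 ρ I measurableSet_Ioo hcyl (ε := ε) (δ := δ)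
    (fun w hw => hε1 w (by linarith)) (hδ1.trans (measure_mono (by gcongr)))
  have hb1 := bad_bound hE.compl Ψ hΨ z0 ρ I measurableSet_Ioo hcyl (ε := ε) (δ := δ)
    (fun w hw => by simpa using hε2 w (by linarith)) (hδ2.trans (measure_mono (by gcongr)))
  set Bad0 := {z ∈ ball z0 ρ | volume (I ∩ {t | Ψ (z, t) ∈ E}) = 0} with hB0
  set Bad1 := {z ∈ ball z0 ρ | volume (I ∩ {t | Ψ (z, t) ∈ Eᶜ}) = 0} with hB1
  set Z : Set 𝔽 := {z | ¬ ∀ a b : ℝ, (∀ t ∈ Ioo a b, Ψ (z, t) ∉ essBdry E) →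
      volume (Ioo a b ∩ {t | Ψ (z, t) ∈ E}) = 0 ∨ volume (Ioo a b \ {t | Ψ (z, t) ∈ E}) = 0} with hZ
  have hZ0 : μ Z = 0 := slice_lemma Ψ μ hE
  set P : 𝕐 → 𝔽 := fun x => (Ψ.symm x).1 with hP
  have hsub : ball z0 ρ ⊆ P '' (essBdry E ∩ ball x R) ∪ (Bad0 ∪ (Bad1 ∪ Z)) := by
    intro z hz
    by_cases hzZ : z ∈ Z
    · exact Or.inr (Or.inr (Or.inr hzZ))
    have hs := not_not.1 hzZ (t0 - η * R) (t0 + η * R)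
    by_cases h : ∀ t ∈ Ioo (t0 - η * R) (t0 + η * R), Ψ (z, t) ∉ essBdry E
    · rcases hs h with h | h
      · exact Or.inr (Or.inl ⟨hz, h⟩)
      · exact Or.inr (Or.inr (Or.inl ⟨hz, h⟩))
    · push Not at h
      obtain ⟨t, ht, hte⟩ := h
      exact Or.inl ⟨Ψ (z, t), ⟨hte, hcyl z hz t ht⟩, by simp [hP]⟩
  have hproj : μ (P '' (essBdry E ∩ ball x R)) ≤ μH[(n : ℝ)] (essBdry E ∩ ball x R) := by
    have := hlip.hausdorffMeasure_image_le (Nat.cast_nonneg n) (essBdry E ∩ ball x R)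
    simpa using this
  have hmu : μ (ball 0 ρ) = μ (ball z0 ρ) := (Measure.addHaar_ball_center μ z0 ρ).symm
  have hmono : μ (ball 0 (2 * ρ)) ≤ μ (ball (0 : 𝔽) (2 * R)) := by gcongr
  calc δ * μ (ball 0 ρ) ≤ δ * (μH[(n : ℝ)] (essBdry E ∩ ball x R) + (μ Bad0 + (μ Bad1 + 0))) := by
        rw [hmu]
        gcongr
        refine (measure_mono hsub).trans ((measure_union_le _ _).trans (add_le_add hproj ?_))
        refine (measure_union_le _ _).trans ?_
        gcongr
        refine (measure_union_le _ _).trans ?_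
        rw [hZ0]
    _ = δ * μH[(n : ℝ)] (essBdry E ∩ ball x R) + (δ * μ Bad0 + δ * μ Bad1) := by ring
    _ ≤ _ := by
        rw [two_mul]
        exact add_le_add le_rfl (add_le_add (hb0.trans (mul_le_mul_left hmono ε))
          (hb1.trans (mul_le_mul_left hmono ε)))
end blow

section scales
variable {N : ℕ}

local notation "𝕏" => EuclideanSpace ℝ (Fin N)

lemma ratio_double (E : Set 𝕏) (x : 𝕏) {r s : ℝ} (hs : 0 < s) (hsr : s ≤ r) (hr : r ≤ 2 * s) :
    volume (E ∩ ball x s) / volume (ball x s) ≤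
      2 ^ N * (volume (E ∩ ball x r) / volume (ball x r)) := by
  have h1 : volume (ball x r) ≤ 2 ^ N * volume (ball x s) := by
    calc volume (ball x r) ≤ volume (ball x (2 * s)) := by gcongr
      _ = _ := by
        rw [Measure.addHaar_ball_mul_of_pos volume x (by norm_num : (0 : ℝ) < 2) s,
          Measure.addHaar_ball_center volume x s]
        simp
  have hs0 := vball_pos x hs
  have hr0 := vball_pos x (hs.trans_le hsr)
  have hst := vball_top x s
  have hrt := vball_top x r
  rw [ENNReal.div_le_iff hs0 hst]
  calc volume (E ∩ ball x s) ≤ volume (E ∩ ball x r) := by gcongr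
    _ = (volume (E ∩ ball x r) / volume (ball x r)) * volume (ball x r) :=
        (ENNReal.div_mul_cancel hr0 hrt).symm
    _ ≤ (volume (E ∩ ball x r) / volume (ball x r)) * (2 ^ N * volume (ball x s)) := by gcongr
    _ = _ := by ring

lemma density_zero_aux {E : Set 𝕏} (hE : MeasurableSet E) {x : 𝕏}
    (h : ∀ δ : ℝ≥0∞, 0 < δ → ∃ ε : ℝ, 0 < ε ∧ ∀ r ∈ Ioo 0 ε,
      volume (E ∩ ball x r) / volume (ball x r) < δ ∨ volume (Eᶜ ∩ ball x r) / volume (ball x r) < δ)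
    {ε0 : ℝ} (h0 : ∀ r ∈ Ioo 0 ε0,
      volume (E ∩ ball x r) / volume (ball x r) < (4 * 2 ^ N)⁻¹ ∨
      volume (Eᶜ ∩ ball x r) / volume (ball x r) < (4 * 2 ^ N)⁻¹) {r0 : ℝ} (hr0 : r0 ∈ Ioo 0 ε0)
    (hr : volume (E ∩ ball x r0) / volume (ball x r0) < (4 * 2 ^ N)⁻¹) : x ∈ densityZeroPts E := by
  set f : ℝ → ℝ≥0∞ := fun r => volume (E ∩ ball x r) / volume (ball x r) with hf
  set g : ℝ → ℝ≥0∞ := fun r => volume (Eᶜ ∩ ball x r) / volume (ball x r) with hg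
  set d : ℝ≥0∞ := (4 * 2 ^ N)⁻¹ with hd
  have hd4 : d ≤ 4⁻¹ := by
    rw [hd, ENNReal.inv_le_inv]
    calc (4 : ℝ≥0∞) = 4 * 1 := (mul_one _).symm
      _ ≤ 4 * 2 ^ N := by gcongr; exact one_le_pow₀ (by norm_num)
  have hd2 : 2 ^ N * d = 4⁻¹ := by
    rw [hd, ENNReal.mul_inv (Or.inl (by norm_num)) (Or.inl (by norm_num)), mul_comm 4⁻¹, ← mul_assoc,
      ENNReal.mul_inv_cancel (by positivity) (by finiteness), one_mul]
  have hexc : ∀ s, 0 < s → f s ≤ 4⁻¹ → ∀ δ, δ ≤ 4⁻¹ → ¬ g s < δ := by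
    intro s hs h1 δ hδ h2
    have h3 : g s = 1 - f s := ratio_compl hE x hs
    have h4 : (1 : ℝ≥0∞) ≤ g s + f s := by rw [h3]; exact le_tsub_add
    have h5 : g s + f s ≤ 4⁻¹ + 4⁻¹ := add_le_add (h2.le.trans hδ) h1
    have h6 : (4⁻¹ + 4⁻¹ : ℝ≥0∞) < 1 := by
      rw [← ENNReal.toReal_lt_toReal (by simp) (by simp), ENNReal.toReal_add (by simp) (by simp)]
      norm_num
    exact absurd (h4.trans h5) (not_le.2 h6)
  have hprop : ∀ k : ℕ, ∀ s, r0 / 2 ^ k ≤ s → s ≤ r0 → f s < d := by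
    intro k
    induction k with
    | zero =>
      intro s h1 h2
      have : s = r0 := le_antisymm h2 (by simpa using h1)
      rw [this]; exact hr
    | succ k ih =>
      intro s h1 h2
      have hs : 0 < s := lt_of_lt_of_le (by have := hr0.1; positivity) h1
      have h3 : f (min (2 * s) r0) < d := by
        refine ih _ (le_min ?_ ?_) (min_le_right _ _)
        · have : r0 / 2 ^ k = 2 * (r0 / 2 ^ (k + 1)) := by field_simp; ring
          rw [this]; linarith
        · exact div_le_self hr0.1.le (one_le_pow₀ (by norm_num))
      have h4 := ratio_double E x hs (le_min (by linarith) h2 : s ≤ min (2 * s) r0) (min_le_left _ _)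
      have h5 : f s ≤ 4⁻¹ := by
        rw [← hd2]
        refine h4.trans ?_
        gcongr
      rcases h0 s ⟨hs, h2.trans_lt hr0.2⟩ with h6 | h6
      · exact h6
      · exact absurd h6 (hexc s hs h5 d hd4)
  have hall : ∀ s, 0 < s → s ≤ r0 → f s < d := by
    intro s hs hsr
    obtain ⟨k, hk⟩ := pow_unbounded_of_one_lt (r0 / s) (by norm_num : (1 : ℝ) < 2)
    refine hprop k s ?_ hsr
    rw [div_le_iff₀ (by positivity)]
    rw [div_lt_iff₀ hs] at hk
    linarith
  change Tendsto f (𝓝[>] 0) (𝓝 0)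
  rw [ENNReal.tendsto_nhds_zero]
  intro δ hδ
  obtain ⟨ε, hε, h1⟩ := h (min δ 4⁻¹) (lt_min hδ (by simp))
  filter_upwards [Ioo_mem_nhdsGT (lt_min hε hr0.1)] with r hr'
  rcases h1 r ⟨hr'.1, hr'.2.trans_le (min_le_left _ _)⟩ with h2 | h2
  · exact h2.le.trans (min_le_left _ _)
  · exact absurd h2 (hexc r hr'.1 ((hall r hr'.1 (hr'.2.le.trans (min_le_right _ _))).le.trans hd4) _
      (min_le_right _ _))

lemma nontriv {E : Set 𝕏} (hE : MeasurableSet E) {x : 𝕏} (hx : x ∈ essBdry E) :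
    ∃ δ : ℝ≥0∞, 0 < δ ∧ δ ≠ ⊤ ∧ ∀ ε : ℝ, 0 < ε → ∃ r ∈ Ioo 0 ε,
      δ * volume (ball x r) ≤ volume (E ∩ ball x r) ∧
      δ * volume (ball x r) ≤ volume (Eᶜ ∩ ball x r) := by
  by_contra hcon
  have h : ∀ δ : ℝ≥0∞, 0 < δ → ∃ ε : ℝ, 0 < ε ∧ ∀ r ∈ Ioo 0 ε,
      volume (E ∩ ball x r) / volume (ball x r) < δ ∨
      volume (Eᶜ ∩ ball x r) / volume (ball x r) < δ := by
    intro δ hδ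
    by_contra h2
    push Not at h2
    refine hcon ⟨min δ 1, lt_min hδ one_pos, ne_top_of_le_ne_top ENNReal.one_ne_top (min_le_right _ _),
      fun ε hε => ?_⟩
    obtain ⟨r, hr, h3, h4⟩ := h2 ε hε
    have hr0 := vball_pos x hr.1
    have hrt := vball_top x r
    refine ⟨r, hr, ?_, ?_⟩
    · exact (ENNReal.le_div_iff_mul_le (Or.inl hr0) (Or.inl hrt)).1 ((min_le_left _ _).trans h3)
    · exact (ENNReal.le_div_iff_mul_le (Or.inl hr0) (Or.inl hrt)).1 ((min_le_left _ _).trans h4)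
  obtain ⟨ε0, hε0, h0⟩ := h (4 * 2 ^ N)⁻¹ (by
    rw [ENNReal.inv_pos]; finiteness)
  have hr0 : ε0 / 2 ∈ Ioo 0 ε0 := ⟨by linarith, by linarith⟩
  apply hx
  rcases h0 _ hr0 with h1 | h1
  · exact Or.inr (density_zero_aux hE h h0 hr0 h1)
  · refine Or.inl ?_
    rw [← zero_compl hE]
    refine density_zero_aux hE.compl (fun δ hδ => ?_) (ε0 := ε0) (fun r hr => ?_) hr0 h1
    · obtain ⟨ε, hε, h2⟩ := h δ hδ
      refine ⟨ε, hε, fun r hr => ?_⟩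
      rw [compl_compl]
      exact (h2 r hr).symm
    · rw [compl_compl]
      exact (h0 r hr).symm
end scales

section point
variable {n : ℕ}

local notation "𝔽" => EuclideanSpace ℝ (Fin n)
local notation "𝕐" => EuclideanSpace ℝ (Fin (n + 1))

lemma exists_dir (v : 𝕐) : ∃ e : 𝕐, ‖e‖ = 1 ∧ v = ‖v‖ • e := by
  by_cases hv : v = 0
  · exact ⟨EuclideanSpace.single 0 1, by simp, by simp [hv]⟩
  · have : ‖v‖ ≠ 0 := norm_ne_zero_iff.2 hv
    refine ⟨‖v‖⁻¹ • v, by rw [norm_smul, norm_inv, norm_norm, inv_mul_cancel₀ this], ?_⟩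
    rw [smul_smul, mul_inv_cancel₀ this, one_smul]

lemma trans_point {E V : Set 𝕐} {ν : Measure 𝕐} {σ : 𝕐 → 𝕐} (hgg : IsGG E V ν σ)
    (hE : MeasurableSet E) (hEf : volume E ≠ ⊤) {x : 𝕐} {R : ℝ} (_hR : 0 < R)
    (hV : closedBall x (5 * R) ⊆ V) {h : 𝕐} (hh : ‖h‖ < 2 * R) (hort : (inner ℝ (σ x) h : ℝ) = 0) :
    volume {y ∈ ball x (3 * R) | y ∉ E ∧ y + h ∈ E} ≤
      ENNReal.ofReal (2 * R) * ∫⁻ y in closedBall x (5 * R), ‖σ y - σ x‖ₑ ∂ν := by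
  refine (translation hgg hE hEf isOpen_ball (measurableSet_closedBall (x := x) (ε := 5 * R)) hV
    (h := h) ?_).trans ?_
  · intro y hy s hs
    rw [mem_ball_iff_norm] at hy
    rw [mem_closedBall_iff_norm]
    calc ‖y + s • h - x‖ = ‖(y - x) + s • h‖ := by congr 1; abel
      _ ≤ ‖y - x‖ + ‖s • h‖ := norm_add_le _ _
      _ ≤ 3 * R + 1 * (2 * R) := by
          rw [norm_smul, Real.norm_eq_abs, abs_of_nonneg hs.1]
          gcongr
          exact hs.2
      _ = 5 * R := by ring
  · rw [← lintegral_const_mul' _ _ ENNReal.ofReal_ne_top]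
    refine lintegral_mono fun y => ?_
    have h1 : (inner ℝ (σ y) h : ℝ) = inner ℝ (σ y - σ x) h := by rw [inner_sub_left, hort, sub_zero]
    rw [h1, ← ofReal_norm, ← ofReal_norm, ← ENNReal.ofReal_mul (by linarith)]
    refine ENNReal.ofReal_le_ofReal ((norm_inner_le_norm _ _).trans ?_)
    rw [mul_comm]
    gcongr

lemma trans_m1 {E E' : Set 𝕐} (x h : 𝕐) {R : ℝ} (hR : 0 < R) :
    volume {y ∈ ball x R | y ∉ E' ∧ y + h ∈ E'} ≤
      volume {y ∈ ball x (3 * R) | y ∉ E ∧ y + h ∈ E} + 2 * volume (symmDiff E' E) := by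
  have hsub : {y ∈ ball x R | y ∉ E' ∧ y + h ∈ E'} ⊆ {y ∈ ball x (3 * R) | y ∉ E ∧ y + h ∈ E} ∪
      (symmDiff E' E ∪ (fun y => y + h) ⁻¹' (symmDiff E' E)) := by
    rintro y ⟨h1, h2, h3⟩
    by_cases h4 : y ∈ E
    · exact Or.inr (Or.inl (Or.inr ⟨h4, h2⟩))
    by_cases h5 : y + h ∈ E
    · exact Or.inl ⟨ball_subset_ball (by linarith) h1, h4, h5⟩
    · exact Or.inr (Or.inr (Or.inl ⟨h3, h5⟩))
  refine (measure_mono hsub).trans ((measure_union_le _ _).trans ?_)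
  gcongr
  refine (measure_union_le _ _).trans (le_of_eq ?_)
  rw [measure_preimage_add_right, two_mul]

lemma trans_m2 {E E' : Set 𝕐} (x h : 𝕐) {R : ℝ} (_hR : 0 < R) (hh : ‖h‖ < 2 * R) :
    volume {y ∈ ball x R | y ∈ E' ∧ y + h ∉ E'} ≤
      volume {y ∈ ball x (3 * R) | y ∉ E ∧ y + -h ∈ E} + 2 * volume (symmDiff E' E) := by
  have hsub : {y ∈ ball x R | y ∈ E' ∧ y + h ∉ E'} ⊆
      (fun y => y + h) ⁻¹' {y ∈ ball x (3 * R) | y ∉ E ∧ y + -h ∈ E} ∪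
      (symmDiff E' E ∪ (fun y => y + h) ⁻¹' (symmDiff E' E)) := by
    rintro y ⟨h1, h2, h3⟩
    by_cases h4 : y + h ∈ E
    · exact Or.inr (Or.inr (Or.inr ⟨h4, h3⟩))
    by_cases h5 : y ∈ E
    · refine Or.inl ⟨?_, h4, by simpa using h5⟩
      rw [mem_ball_iff_norm] at h1 ⊢
      calc ‖y + h - x‖ = ‖(y - x) + h‖ := by congr 1; abel
        _ ≤ ‖y - x‖ + ‖h‖ := norm_add_le _ _
        _ < 3 * R := by linarith
    · exact Or.inr (Or.inl (Or.inl ⟨h2, h5⟩))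
  refine (measure_mono hsub).trans ((measure_union_le _ _).trans ?_)
  rw [measure_preimage_add_right]
  gcongr
  refine (measure_union_le _ _).trans (le_of_eq ?_)
  rw [measure_preimage_add_right, two_mul]

lemma ball_vol (μ : Measure 𝔽) [μ.IsAddHaarMeasure] {r : ℝ} (hr : 0 < r) :
    μ (ball 0 r) = ENNReal.ofReal r ^ n * μ (ball 0 1) := by
  rw [Measure.addHaar_ball_of_pos μ 0 hr, ENNReal.ofReal_pow hr.le]
  simp

lemma half_mass {E E' Q : Set 𝕐} {a : ℝ≥0∞} (ha : a ≠ ⊤)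
    (h : 2 * a ≤ volume (E ∩ Q)) (hs : volume (symmDiff E' E) ≤ a) : a ≤ volume (E' ∩ Q) := by
  have hsub : E ∩ Q ⊆ (E' ∩ Q) ∪ symmDiff E' E := by
    rintro y ⟨h1, h2⟩
    by_cases h3 : y ∈ E'
    · exact Or.inl ⟨h3, h2⟩
    · exact Or.inr (Or.inr ⟨h1, h3⟩)
  have h1 : a + a ≤ volume (E' ∩ Q) + a := by
    rw [← two_mul]
    exact h.trans ((measure_mono hsub).trans ((measure_union_le _ _).trans (by gcongr)))
  exact (ENNReal.add_le_add_iff_right ha).1 h1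

lemma point_est {E V : Set 𝕐} {ν : Measure 𝕐} {σ : 𝕐 → 𝕐} (hgg : IsGG E V ν σ)
    (hE : MeasurableSet E) (hEf : volume E ≠ ⊤) (hV : IsOpen V) {x : 𝕐} (hxV : x ∈ V)
    (hx : x ∈ essBdry E)
    (hleb : ∀ ε : ℝ≥0∞, 0 < ε → ∃ r0 : ℝ, 0 < r0 ∧ ∀ r ∈ Ioo 0 r0,
      ∫⁻ y in closedBall x r, ‖σ y - σ x‖ₑ ∂ν ≤ ε * ν (closedBall x r))
    (hden : ∀ t : ℝ, 1 < t → ∃ r0 : ℝ, 0 < r0 ∧ ∀ r ∈ Ioo 0 r0,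
      ν (closedBall x r) ≤ ENNReal.ofReal t * ENNReal.ofReal (2 * r) ^ n)
    {Em : ℕ → Set 𝕐} (hEm : ∀ m, MeasurableSet (Em m))
    (hconv : Tendsto (fun m => volume (symmDiff (Em m) E)) atTop (𝓝 0))
    {θ : ℝ} (hθ0 : 0 ≤ θ) (hθ : θ < 1) {ε0 : ℝ} (hε0 : 0 < ε0) :
    ∃ R ∈ Ioo 0 ε0, ∀ᶠ m in atTop,
      ENNReal.ofReal θ * ν (closedBall x R) ≤ μH[(n : ℝ)] (essBdry (Em m) ∩ ball x R) := by
  set μ : Measure 𝔽 := μH[(n : ℝ)] with hμ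
  obtain ⟨e, he, hσe⟩ := exists_dir (σ x)
  obtain ⟨L, Ψ, hΨ, hort, hnorm, hlip⟩ := frame e he
  have hort' : ∀ w, (inner ℝ (σ x) (L w) : ℝ) = 0 := by
    intro w
    rw [hσe, inner_smul_left, real_inner_comm, hort, mul_zero]
  -- numerical parameters
  set β : ℝ := (1 - θ) / 4 with hβ
  set t : ℝ := 1 + β with ht
  set η : ℝ := (1 - θ) / (2 * (n + 1)) with hη
  have hβ0 : 0 < β := by rw [hβ]; linarith
  have hn1 : (1 : ℝ) ≤ n + 1 := by have : (0 : ℝ) ≤ n := Nat.cast_nonneg n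
                                   linarith
  have hη0 : 0 < η := div_pos (by linarith) (by linarith)
  have hη2 : η ≤ 1 / 2 := by
    rw [hη, div_le_div_iff₀ (by linarith) (by norm_num)]; nlinarith
  have hnum : θ * t + β ≤ (1 - η) ^ n := by
    have h1 : 1 + (n : ℝ) * (-η) ≤ (1 + -η) ^ n := one_add_mul_le_pow (by linarith) n
    have h2 : (n : ℝ) * η ≤ (1 - θ) / 2 := by
      rw [hη, ← mul_div_assoc, div_le_div_iff₀ (by linarith) (by norm_num)]
      have : (0 : ℝ) ≤ n := Nat.cast_nonneg n
      nlinarith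
    have h3 : θ * t + β ≤ 1 - (1 - θ) / 2 := by
      rw [ht, hβ]; nlinarith
    have h4 : 1 + -η = 1 - η := by ring
    rw [h4] at h1
    linarith
  obtain ⟨δ, hδ0, hδt, hδ⟩ := nontriv hE hx
  set ω : ℝ≥0∞ := volume (ball (0 : 𝕐) 1) with hω
  have hω0 : ω ≠ 0 := vball_pos 0 one_pos
  have hωt : ω ≠ ⊤ := vball_top 0 1
  set κ : ℝ≥0∞ := μ (ball 0 1) with hκ
  have hκ0 : κ ≠ 0 := (measure_ball_pos μ 0 one_pos).ne'
  have hκt : κ ≠ ⊤ := measure_ball_lt_top.ne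
  have hκ2 : 2 ^ n ≤ κ := kappa n
  set δ1 : ℝ≥0∞ := (δ / 2) * (ENNReal.ofReal η ^ (n + 1) * ω) with hδ1
  have hηe : ENNReal.ofReal η ≠ 0 := (ENNReal.ofReal_pos.2 hη0).ne'
  have hβe : ENNReal.ofReal β ≠ 0 := (ENNReal.ofReal_pos.2 hβ0).ne'
  have hδ10 : δ1 ≠ 0 := by
    refine mul_ne_zero (ENNReal.div_pos hδ0.ne' (by simp)).ne' (mul_ne_zero (pow_ne_zero _ hηe) hω0)
  have hδ1t : δ1 ≠ ⊤ := by
    refine ENNReal.mul_ne_top (ENNReal.div_ne_top hδt (by simp)) (ENNReal.mul_ne_top ?_ hωt)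
    finiteness
  -- the small parameter
  set ε1 : ℝ≥0∞ := δ1 * ENNReal.ofReal β / (2 * 2 ^ n) with hε1
  have hε10 : ε1 ≠ 0 := (ENNReal.div_pos (mul_ne_zero hδ10 hβe) (by finiteness)).ne'
  have hε1t : ε1 ≠ ⊤ := ENNReal.div_ne_top (ENNReal.mul_ne_top hδ1t ENNReal.ofReal_ne_top) (by simp)
  set Cc : ℝ≥0∞ := 2 * ENNReal.ofReal t * 10 ^ n with hCc
  have hCct : Cc ≠ ⊤ := by rw [hCc]; finiteness
  set ε2 : ℝ≥0∞ := ε1 / 2 / Cc with hε2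
  have hε20 : 0 < ε2 := ENNReal.div_pos (ENNReal.div_pos hε10 (by simp)).ne' hCct
  have hCc0 : Cc ≠ 0 := by
    have : ENNReal.ofReal t ≠ 0 := (ENNReal.ofReal_pos.2 (by linarith)).ne'
    rw [hCc]
    exact mul_ne_zero (mul_ne_zero (by simp) this) (pow_ne_zero _ (by norm_num))
  have hε2C : ε2 * Cc ≤ ε1 / 2 := (ENNReal.div_mul_cancel hCc0 hCct).le
  obtain ⟨r1, hr1, hleb1⟩ := hleb ε2 hε20
  obtain ⟨r2, hr2, hden2⟩ := hden t (by linarith)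
  obtain ⟨r3, hr3, hV3⟩ := Metric.isOpen_iff.1 hV x hxV
  obtain ⟨r, hr, hE1, hE2⟩ := hδ (η * min ε0 (min (r1 / 5) (min (r2 / 5) (r3 / 6)))) (by positivity)
  set R := r / η with hRdef
  have hrR : r = η * R := by rw [hRdef]; field_simp
  have hR : 0 < R := div_pos hr.1 hη0
  have hRm : R < min ε0 (min (r1 / 5) (min (r2 / 5) (r3 / 6))) := by
    rw [hRdef, div_lt_iff₀ hη0, mul_comm]; exact hr.2
  simp only [lt_min_iff] at hRm
  obtain ⟨hRε, hRr1, hRr2, hRr3⟩ := hRm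
  refine ⟨R, ⟨hR, hRε⟩, ?_⟩
  set ρ : ℝ≥0∞ := ENNReal.ofReal R with hρ
  have hρ0 : ρ ≠ 0 := (ENNReal.ofReal_pos.2 hR).ne'
  have hρt : ρ ≠ ⊤ := ENNReal.ofReal_ne_top
  have hρn0 : ρ ^ (n + 1) ≠ 0 := pow_ne_zero _ hρ0
  have hρnt : ρ ^ (n + 1) ≠ ⊤ := by finiteness
  -- mass in the ball
  have hvb : volume (ball x r) = ENNReal.ofReal η ^ (n + 1) * ρ ^ (n + 1) * ω := by
    rw [Measure.addHaar_ball_of_pos volume x hr.1, ENNReal.ofReal_pow hr.1.le, hrR,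
      ENNReal.ofReal_mul hη0.le, mul_pow]
    simp [hω, hρ]
  have hδv : 2 * (δ1 * ρ ^ (n + 1)) = δ * volume (ball x r) := by
    have : 2 * (δ / 2) = δ := ENNReal.mul_div_cancel (by simp) (by simp)
    calc 2 * (δ1 * ρ ^ (n + 1))
        = (2 * (δ / 2)) * (ENNReal.ofReal η ^ (n + 1) * ρ ^ (n + 1) * ω) := by rw [hδ1]; ring
      _ = _ := by rw [this, hvb]
  -- translation estimate for E
  have hVR : closedBall x (5 * R) ⊆ V :=
    (closedBall_subset_ball (by linarith)).trans hV3
  have htr : ∀ w : 𝔽, ‖w‖ < 2 * R → volume {y ∈ ball x (3 * R) | y ∉ E ∧ y + L w ∈ E} ≤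
      ε1 / 2 * ρ ^ (n + 1) := by
    intro w hw
    refine (trans_point hgg hE hEf hR hVR (h := L w) (by rwa [L.norm_map]) (hort' w)).trans ?_
    have h5 : 5 * R ∈ Ioo 0 r1 := ⟨by linarith, by linarith⟩
    have h6 : 5 * R ∈ Ioo 0 r2 := ⟨by linarith, by linarith⟩
    calc _ ≤ ENNReal.ofReal (2 * R) * (ε2 * (ENNReal.ofReal t * ENNReal.ofReal (2 * (5 * R)) ^ n)) := by
          gcongr
          refine (hleb1 _ h5).trans ?_
          gcongr
          exact hden2 _ h6
      _ = (ε2 * Cc) * ρ ^ (n + 1) := by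
          have e1 : ENNReal.ofReal (2 * R) = 2 * ρ := by
            rw [ENNReal.ofReal_mul (by norm_num)]; simp [hρ]
          have e2 : ENNReal.ofReal (2 * (5 * R)) = 10 * ρ := by
            rw [← mul_assoc, ENNReal.ofReal_mul (by norm_num)]; norm_num [hρ]
          rw [e1, e2, hCc]; ring
      _ ≤ _ := by gcongr
  -- choose m large
  have hsm : 0 < min (ε1 / 4 * ρ ^ (n + 1)) (δ1 * ρ ^ (n + 1)) := by
    refine lt_min ?_ ?_
    · exact pos_iff_ne_zero.2 (mul_ne_zero (ENNReal.div_pos hε10 (by simp)).ne' hρn0)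
    · exact pos_iff_ne_zero.2 (mul_ne_zero hδ10 hρn0)
  filter_upwards [hconv.eventually (gt_mem_nhds hsm)] with m hm
  have hm1 : volume (symmDiff (Em m) E) ≤ ε1 / 4 * ρ ^ (n + 1) := hm.le.trans (min_le_left _ _)
  have hm2 : volume (symmDiff (Em m) E) ≤ δ1 * ρ ^ (n + 1) := hm.le.trans (min_le_right _ _)
  have hsum : ε1 / 2 * ρ ^ (n + 1) + 2 * (ε1 / 4 * ρ ^ (n + 1)) = ε1 * ρ ^ (n + 1) := by
    have h4 : 2 * (ε1 / 4) = ε1 / 2 := by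
      rw [ENNReal.div_eq_inv_mul, ENNReal.div_eq_inv_mul, ← mul_assoc]
      congr 1
      rw [← ENNReal.toReal_eq_toReal_iff' (by finiteness) (by simp)]
      simp
      norm_num
    rw [← mul_assoc, h4, ← add_mul, ENNReal.add_halves]
  have hd1 : δ1 * ρ ^ (n + 1) ≤ volume (Em m ∩ ball x (η * R)) := by
    rw [← hrR]
    exact half_mass (ENNReal.mul_ne_top hδ1t hρnt) (by rw [hδv]; exact hE1) hm2
  have hd2 : δ1 * ρ ^ (n + 1) ≤ volume ((Em m)ᶜ ∩ ball x (η * R)) := by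
    rw [← hrR]
    refine half_mass (ENNReal.mul_ne_top hδ1t hρnt) (by rw [hδv]; exact hE2) ?_
    rwa [compl_symmDiff_compl]
  have hb := blow (hEm m) Ψ hΨ hnorm hlip x hR hη0 hη2 (ε := ε1 * ρ ^ (n + 1))
    (fun w hw => (trans_m1 x (L w) hR).trans (by
      rw [← hsum]; gcongr; exact htr w hw))
    (fun w hw => (trans_m2 x (L w) hR (by rwa [L.norm_map])).trans (by
      rw [← hsum, ← map_neg]; gcongr; exact htr (-w) (by rwa [norm_neg])))
    hd1 hd2
  rw [ball_vol μ (by nlinarith : 0 < (1 - η) * R), ball_vol μ (by linarith : 0 < 2 * R)] at hb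
  set Hm := μH[(n : ℝ)] (essBdry (Em m) ∩ ball x R) with hHm
  have hE2R : ENNReal.ofReal (2 * R) = 2 * ρ := by
    rw [ENNReal.ofReal_mul (by norm_num)]; simp [hρ]
  have hlow : ENNReal.ofReal θ * ENNReal.ofReal t + ENNReal.ofReal β ≤ ENNReal.ofReal (1 - η) ^ n := by
    rw [← ENNReal.ofReal_mul hθ0, ← ENNReal.ofReal_add (mul_nonneg hθ0 (by linarith)) hβ0.le,
      ← ENNReal.ofReal_pow (by linarith)]
    exact ENNReal.ofReal_le_ofReal hnum
  have hε1e : 2 * 2 ^ n * ε1 = δ1 * ENNReal.ofReal β :=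
    ENNReal.mul_div_cancel (by positivity) (by finiteness)
  -- combine
  have hmain : (δ1 * ρ ^ (n + 1)) * (κ * ρ ^ n * (ENNReal.ofReal θ * ENNReal.ofReal t)) +
      (δ1 * ρ ^ (n + 1)) * (κ * ρ ^ n * ENNReal.ofReal β) ≤
      (δ1 * ρ ^ (n + 1)) * Hm + (δ1 * ρ ^ (n + 1)) * (κ * ρ ^ n * ENNReal.ofReal β) := by
    calc _ = (δ1 * ρ ^ (n + 1)) * (κ * ρ ^ n * (ENNReal.ofReal θ * ENNReal.ofReal t + ENNReal.ofReal β)) := by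
          ring
      _ ≤ (δ1 * ρ ^ (n + 1)) * (κ * ρ ^ n * (ENNReal.ofReal (1 - η) ^ n)) := by gcongr
      _ = (δ1 * ρ ^ (n + 1)) * (ENNReal.ofReal ((1 - η) * R) ^ n * κ) := by
          rw [ENNReal.ofReal_mul (by linarith), mul_pow]; ring
      _ ≤ _ := hb
      _ = (δ1 * ρ ^ (n + 1)) * Hm + (2 * 2 ^ n * ε1) * ρ ^ (n + 1) * (κ * ρ ^ n) := by
          rw [hE2R, mul_pow]; ring
      _ = _ := by rw [hε1e]; ring
  have hfinb : (δ1 * ρ ^ (n + 1)) * (κ * ρ ^ n * ENNReal.ofReal β) ≠ ⊤ := by finiteness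
  have h7 := (ENNReal.add_le_add_iff_right hfinb).1 hmain
  have h8 : κ * ρ ^ n * (ENNReal.ofReal θ * ENNReal.ofReal t) ≤ Hm :=
    (ENNReal.mul_le_mul_iff_right (mul_ne_zero hδ10 hρn0) (ENNReal.mul_ne_top hδ1t hρnt)).1 h7
  refine le_trans ?_ h8
  calc ENNReal.ofReal θ * ν (closedBall x R)
      ≤ ENNReal.ofReal θ * (ENNReal.ofReal t * ENNReal.ofReal (2 * R) ^ n) := by
        gcongr
        exact hden2 R ⟨hR, by linarith⟩
    _ = 2 ^ n * ρ ^ n * (ENNReal.ofReal θ * ENNReal.ofReal t) := by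
        rw [hE2R, mul_pow]; ring
    _ ≤ _ := by gcongr
end point

section lsc
variable {n : ℕ}

local notation "𝕐" => EuclideanSpace ℝ (Fin (n + 1))

/-- Points with good small balls along the sequence `Em`. -/
def GoodPt (E : Set 𝕐) (Em : ℕ → Set 𝕐) (x : 𝕐) : Prop :=
  ∀ θ : ℝ, 0 ≤ θ → θ < 1 → ∀ ε0 : ℝ, 0 < ε0 → ∃ R ∈ Ioo 0 ε0, ∀ᶠ m in atTop,
    ENNReal.ofReal θ * μH[(n : ℝ)] (essBdry E ∩ closedBall x R) ≤
      μH[(n : ℝ)] (essBdry (Em m) ∩ ball x R)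

lemma good_convex {E V : Set 𝕐} (hV : IsOpen V) (hVc : Convex ℝ V)
    (hE : MeasurableSet E) (hEf : volume E ≠ ⊤) (hfin : μH[(n : ℝ)] (essBdry E ∩ V) ≠ ⊤)
    {Em : ℕ → Set 𝕐} (hEm : ∀ m, MeasurableSet (Em m))
    (hconv : Tendsto (fun m => volume (symmDiff (Em m) E)) atTop (𝓝 0)) :
    μH[(n : ℝ)] {x ∈ essBdry E ∩ V | ¬ GoodPt E Em x} = 0 := by
  obtain ⟨σ, hσ⟩ := gg_field hV hVc hE hfin
  set S := essBdry E ∩ V with hS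
  set ν : Measure 𝕐 := (μH[(n : ℝ)] : Measure 𝕐).restrict S with hν
  have hgg : IsGG E V ν σ := hσ
  have : IsFiniteMeasure ν := ⟨by rw [hν, Measure.restrict_apply_univ]; exact lt_top_iff_ne_top.2 hfin⟩
  have hleb := (Besicovitch.vitaliFamily ν).ae_tendsto_lintegral_enorm_sub_div
    hσ.1.locallyIntegrable
  rw [ae_iff] at hleb
  set B1 := {x | ¬ Tendsto (fun a => (∫⁻ y in a, ‖σ y - σ x‖ₑ ∂ν) / ν a)
    ((Besicovitch.vitaliFamily ν).filterAt x) (𝓝 0)} with hB1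
  have hB1S : μH[(n : ℝ)] (B1 ∩ S) = 0 :=
    le_antisymm ((Measure.le_restrict_apply S B1).trans hleb.le) zero_le
  set B2 : ℕ → Set 𝕐 := fun k => {x ∈ S | ∀ ε > 0, ∃ r ∈ Ioo 0 ε,
      ENNReal.ofReal (1 + 1 / ((k : ℝ) + 1)) * ENNReal.ofReal (2 * r) ^ n ≤ ν (closedBall x r)} with hB2
  have hB20 : ∀ k, μH[(n : ℝ)] (B2 k) = 0 := by
    intro k
    refine upper_dens hfin ?_ ENNReal.ofReal_ne_top
    rw [← ENNReal.ofReal_one]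
    refine (ENNReal.ofReal_lt_ofReal_iff (by positivity)).2 ?_
    have : (0 : ℝ) < 1 / ((k : ℝ) + 1) := by positivity
    linarith
  refine measure_mono_null ?_ (measure_union_null hB1S (measure_iUnion_null hB20))
  rintro x ⟨hxS, hxg⟩
  by_contra hcon
  rw [mem_union, not_or, mem_iUnion] at hcon
  push Not at hcon
  obtain ⟨hx1, hx2⟩ := hcon
  apply hxg
  have hxT : Tendsto (fun a => (∫⁻ y in a, ‖σ y - σ x‖ₑ ∂ν) / ν a)
      ((Besicovitch.vitaliFamily ν).filterAt x) (𝓝 0) := by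
    by_contra h
    exact hx1 ⟨h, hxS⟩
  have hxT' := hxT.comp (Besicovitch.tendsto_filterAt ν x)
  intro θ hθ0 hθ ε0 hε0
  obtain ⟨r3, hr3, hV3⟩ := Metric.isOpen_iff.1 hV x hxS.2
  obtain ⟨R, hR, hRm⟩ := point_est (ε0 := min ε0 r3) hgg hE hEf hV hxS.2 hxS.1 (x := x) (by
    intro ε hε
    have h1 := hxT'.eventually (gt_mem_nhds hε)
    obtain ⟨r0, hr0, h2⟩ := (mem_nhdsGT_iff_exists_Ioo_subset).1 h1
    refine ⟨r0, hr0, fun r hr => ?_⟩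
    have h3 : (∫⁻ y in closedBall x r, ‖σ y - σ x‖ₑ ∂ν) / ν (closedBall x r) < ε := h2 hr
    by_cases h0 : ν (closedBall x r) = 0
    · rw [Measure.restrict_eq_zero.2 h0]; simp
    · exact (ENNReal.div_le_iff_le_mul (Or.inl h0) (Or.inl (measure_ne_top _ _))).1 h3.le) (by
    intro t ht
    obtain ⟨k, hk⟩ := exists_nat_one_div_lt (sub_pos.2 ht)
    have h1 := hx2 k
    simp only [hB2, mem_ofPred_eq, not_and] at h1
    have h1 := h1 hxS
    push Not at h1
    obtain ⟨r0, hr0, h2⟩ := h1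
    refine ⟨r0, hr0, fun r hr => (h2 r hr).le.trans ?_⟩
    gcongr
    linarith) hEm hconv hθ0 hθ (lt_min hε0 hr3)
  refine ⟨R, ⟨hR.1, hR.2.trans_le (min_le_left _ _)⟩, ?_⟩
  have hsub : closedBall x R ⊆ V :=
    (closedBall_subset_ball (hR.2.trans_le (min_le_right _ _))).trans hV3
  have heq : ν (closedBall x R) = μH[(n : ℝ)] (essBdry E ∩ closedBall x R) := by
    rw [hν, Measure.restrict_apply measurableSet_closedBall, hS]
    congr 1
    ext y
    constructor
    · rintro ⟨h1, h2, h3⟩; exact ⟨h2, h1⟩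
    · rintro ⟨h1, h2⟩; exact ⟨h2, h1, hsub h2⟩
  rw [heq] at hRm
  exact hRm

lemma good_open {E V : Set 𝕐} (hV : IsOpen V)
    (hE : MeasurableSet E) (hEf : volume E ≠ ⊤) (hfin : μH[(n : ℝ)] (essBdry E ∩ V) ≠ ⊤)
    {Em : ℕ → Set 𝕐} (hEm : ∀ m, MeasurableSet (Em m))
    (hconv : Tendsto (fun m => volume (symmDiff (Em m) E)) atTop (𝓝 0)) :
    μH[(n : ℝ)] {x ∈ essBdry E ∩ V | ¬ GoodPt E Em x} = 0 := by
  refine measure_null_of_locally_null _ ?_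
  rintro x ⟨hxS, -⟩
  obtain ⟨r, hr, hV3⟩ := Metric.isOpen_iff.1 hV x hxS.2
  refine ⟨{x ∈ essBdry E ∩ V | ¬ GoodPt E Em x} ∩ ball x r,
    inter_mem self_mem_nhdsWithin (mem_nhdsWithin_of_mem_nhds (ball_mem_nhds x hr)), ?_⟩
  refine measure_mono_null ?_ (good_convex isOpen_ball (convex_ball x r) hE hEf
    (ne_top_of_le_ne_top hfin (measure_mono (inter_subset_inter_right _ hV3))) hEm hconv)
  rintro y ⟨⟨hy1, hy2⟩, hy3⟩
  exact ⟨⟨hy1.1, hy3⟩, hy2⟩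

/-- Lower semicontinuity of the perimeter in an open set. -/
lemma perim_lsc {E V : Set 𝕐} (hV : IsOpen V)
    (hE : MeasurableSet E) (hEf : volume E ≠ ⊤) (hfin : μH[(n : ℝ)] (essBdry E ∩ V) ≠ ⊤)
    {Em : ℕ → Set 𝕐} (hEm : ∀ m, MeasurableSet (Em m))
    (hconv : Tendsto (fun m => volume (symmDiff (Em m) E)) atTop (𝓝 0)) :
    μH[(n : ℝ)] (essBdry E ∩ V) ≤
      atTop.liminf (fun m => μH[(n : ℝ)] (essBdry (Em m) ∩ V)) := by
  have hgood := good_open hV hE hEf hfin hEm hconv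
  set S := essBdry E ∩ V with hS
  set ν : Measure 𝕐 := (μH[(n : ℝ)] : Measure 𝕐).restrict S with hν
  have : IsFiniteMeasure ν := ⟨by rw [hν, Measure.restrict_apply_univ]; exact lt_top_iff_ne_top.2 hfin⟩
  set Z := {x ∈ S | ¬ GoodPt E Em x} with hZ
  have key : ∀ θ : ℝ, 0 ≤ θ → θ < 1 → ENNReal.ofReal θ * μH[(n : ℝ)] S ≤
      atTop.liminf (fun m => μH[(n : ℝ)] (essBdry (Em m) ∩ V)) := by
    intro θ hθ0 hθ
    obtain ⟨T, r, hTc, hTs, hTr, hTν, hTd⟩ := Besicovitch.exists_disjoint_closedBall_covering_ae ν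
      (fun x => {R | closedBall x R ⊆ V ∧ ∀ᶠ m in atTop,
        ENNReal.ofReal θ * μH[(n : ℝ)] (essBdry E ∩ closedBall x R) ≤
          μH[(n : ℝ)] (essBdry (Em m) ∩ ball x R)}) (S \ Z) (by
        rintro x ⟨hxS, hxZ⟩ δ hδ
        have hx : GoodPt E Em x := by
          by_contra h
          exact hxZ ⟨hxS, h⟩
        obtain ⟨r3, hr3, hV3⟩ := Metric.isOpen_iff.1 hV x hxS.2
        obtain ⟨R, hR, hRm⟩ := hx θ hθ0 hθ (min δ r3) (lt_min hδ hr3)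
        exact ⟨R, ⟨(closedBall_subset_ball (hR.2.trans_le (min_le_right _ _))).trans hV3, hRm⟩,
          hR.1, hR.2.trans_le (min_le_left _ _)⟩) (fun _ => 1) (fun _ _ => one_pos)
    set W := ⋃ x ∈ T, closedBall x (r x) with hW
    have hWm : MeasurableSet W :=
      MeasurableSet.biUnion hTc fun _ _ => measurableSet_closedBall
    have h1 : μH[(n : ℝ)] (S \ W) = 0 := by
      have h2 : μH[(n : ℝ)] (((S \ Z) \ W) ∩ S) = 0 :=
        le_antisymm ((Measure.le_restrict_apply S _).trans hTν.le) zero_le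
      refine measure_mono_null ?_ (measure_union_null h2 hgood)
      rintro x ⟨hx1, hx2⟩
      by_cases hx : x ∈ Z
      · exact Or.inr hx
      · exact Or.inl ⟨⟨⟨hx1, hx⟩, hx2⟩, hx1⟩
    have h3 : μH[(n : ℝ)] S ≤ ∑' x : T, μH[(n : ℝ)] (essBdry E ∩ closedBall (x : 𝕐) (r x)) := by
      calc μH[(n : ℝ)] S ≤ μH[(n : ℝ)] (S ∩ W) + μH[(n : ℝ)] (S \ W) :=
            measure_le_inter_add_sdiff _ _ _
        _ = μH[(n : ℝ)] (S ∩ W) := by rw [h1, add_zero]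
        _ ≤ μH[(n : ℝ)] (⋃ x ∈ T, (essBdry E ∩ closedBall x (r x))) := by
            refine measure_mono ?_
            rintro y ⟨hy1, hy2⟩
            simp only [hW, mem_iUnion] at hy2 ⊢
            obtain ⟨x, hx, hxy⟩ := hy2
            exact ⟨x, hx, hy1.1, hxy⟩
        _ ≤ _ := measure_biUnion_le _ hTc _
    refine (mul_le_mul_right h3 _).trans ?_
    rw [← ENNReal.tsum_mul_left]
    refine ENNReal.summable.tsum_le_of_sum_le fun F => ?_
    refine le_liminf_of_le (by isBoundedDefault) ?_
    have hall : ∀ᶠ m in atTop, ∀ x ∈ F,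
        ENNReal.ofReal θ * μH[(n : ℝ)] (essBdry E ∩ closedBall (x : 𝕐) (r x)) ≤
          μH[(n : ℝ)] (essBdry (Em m) ∩ ball (x : 𝕐) (r x)) :=
      (Filter.eventually_all_finset F).2 fun x _ => (hTr x x.2).1.2
    filter_upwards [hall] with m hm
    refine (Finset.sum_le_sum hm).trans ?_
    have hd : (F : Set T).PairwiseDisjoint fun x => ball (x : 𝕐) (r x) := by
      intro x _ y _ hxy
      exact (hTd x.2 y.2 (fun h => hxy (Subtype.ext h))).mono ball_subset_closedBall
        ball_subset_closedBall
    set ρ : Measure 𝕐 := (μH[(n : ℝ)] : Measure 𝕐).restrict (essBdry (Em m)) with hρ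
    have hρb : ∀ A : Set 𝕐, MeasurableSet A → ρ A = μH[(n : ℝ)] (essBdry (Em m) ∩ A) := by
      intro A hA
      rw [hρ, Measure.restrict_apply hA, inter_comm]
    calc ∑ x ∈ F, μH[(n : ℝ)] (essBdry (Em m) ∩ ball (x : 𝕐) (r x))
        = ∑ x ∈ F, ρ (ball (x : 𝕐) (r x)) :=
          Finset.sum_congr rfl fun x _ => (hρb _ measurableSet_ball).symm
      _ = ρ (⋃ x ∈ F, ball (x : 𝕐) (r x)) :=
          (measure_biUnion_finset hd fun _ _ => measurableSet_ball).symm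
      _ ≤ ρ V := measure_mono (iUnion₂_subset fun x _ =>
          ball_subset_closedBall.trans (hTr x x.2).1.1)
      _ = _ := hρb _ hV.measurableSet
  have hlim : Tendsto (fun θ : ℝ => ENNReal.ofReal θ * μH[(n : ℝ)] S) (𝓝[<] 1)
      (𝓝 (μH[(n : ℝ)] S)) := by
    have h1 : Tendsto (fun θ : ℝ => ENNReal.ofReal θ) (𝓝[<] 1) (𝓝 1) := by
      rw [← ENNReal.ofReal_one]
      exact (ENNReal.continuous_ofReal.tendsto 1).mono_left nhdsWithin_le_nhds
    have h2 := ENNReal.Tendsto.mul_const (b := μH[(n : ℝ)] S) h1 (Or.inl one_ne_zero)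
    rwa [one_mul] at h2
  refine le_of_tendsto hlim ?_
  filter_upwards [Ioo_mem_nhdsLT (zero_lt_one' ℝ)] with θ hθ
  exact key θ hθ.1.le hθ.2
end lsc

lemma essBdry_zero_dim (E : Set (EuclideanSpace ℝ (Fin 0))) : essBdry E = ∅ := by
  rw [essBdry, compl_empty_iff, eq_univ_iff_forall]
  intro x
  by_cases hx : x ∈ E
  · left
    have : ∀ r : ℝ, E ∩ ball x r = ball x r := by
      intro r
      refine inter_eq_right.2 fun y _ => ?_
      rwa [Subsingleton.elim y x]
    refine tendsto_const_nhds.congr' ?_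
    filter_upwards [self_mem_nhdsWithin] with r hr
    rw [this r, ENNReal.div_self (measure_ball_pos _ _ hr).ne' measure_ball_lt_top.ne]
  · right
    have : ∀ r : ℝ, E ∩ ball x r = ∅ := by
      intro r
      rw [eq_empty_iff_forall_notMem]
      rintro y ⟨hy, -⟩
      rw [Subsingleton.elim y x] at hy
      exact hx hy
    refine tendsto_const_nhds.congr fun r => ?_
    rw [this r]
    simp

lemma liminf_add_aux (u v : ℕ → ℝ≥0∞) :
    atTop.liminf u + atTop.liminf v ≤ atTop.liminf (fun m => u m + v m) := by
  simp only [liminf_eq_iSup_iInf_of_nat]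
  have hm : ∀ w : ℕ → ℝ≥0∞, Monotone fun k => ⨅ i ≥ k, w i := fun w a b hab =>
    le_iInf₂ fun i hi => iInf₂_le i (hab.trans hi)
  rw [ENNReal.iSup_add_iSup_of_monotone (hm u) (hm v)]
  refine iSup_mono fun k => le_iInf₂ fun i hi => ?_
  exact add_le_add (iInf₂_le i hi) (iInf₂_le i hi)

theorem stmt_12 {N : ℕ} (D : Set (EuclideanSpace ℝ (Fin N))) (hD : IsOpen D)
    (hDb : IsBounded D)
    (Om : Set (EuclideanSpace ℝ (Fin N))) (Omn : ℕ → Set (EuclideanSpace ℝ (Fin N)))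
    (hmeasn : ∀ n, MeasurableSet (Omn n)) (hmeas : MeasurableSet Om)
    (hsubn : ∀ n, Omn n ⊆ D) (hsub : Om ⊆ D)
    (hfpn : ∀ n, perim (Omn n) D < ⊤) (hfp : perim Om D < ⊤)
    (hconv : Tendsto (fun n => volume (symmDiff (Omn n) Om)) atTop (𝓝 0))
    (Om0 K : Set (EuclideanSpace ℝ (Fin N))) (hK : K = frontier Om0)
    (hKcl : IsClosed K) (hKD : K ⊆ D)
    (U : Set (EuclideanSpace ℝ (Fin N))) (hU : IsOpen U) (hKU : K ⊆ U) (hUD : U ⊆ D)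
    (hnulln : ∀ n, μH[(N : ℝ) - 1] (essBdry (Omn n) ∩ frontier U) = 0)
    (hnull : μH[(N : ℝ) - 1] (essBdry Om ∩ frontier U) = 0)
    (A : ℝ≥0∞) (hA : 1 ≤ A) :
    μH[(N : ℝ) - 1] (essBdry Om ∩ K ∩ D) + A * μH[(N : ℝ) - 1] ((essBdry Om \ K) ∩ D) ≤
      Filter.atTop.liminf (fun n =>
        μH[(N : ℝ) - 1] (essBdry (Omn n) ∩ K ∩ D) +
          A * μH[(N : ℝ) - 1] ((essBdry (Omn n) \ K) ∩ D)) := by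
  rcases N with _ | n
  · simp [essBdry_zero_dim]
  have hc : (((n + 1 : ℕ) : ℝ)) - 1 = (n : ℝ) := by push_cast; ring
  rw [perim] at hfp
  rw [hc] at hfp ⊢
  have hvol : volume Om ≠ ⊤ := ne_top_of_le_ne_top hDb.measure_lt_top.ne (measure_mono hsub)
  have hDK : IsOpen (D \ K) := hD.sdiff hKcl
  have l1 := perim_lsc hD hmeas hvol hfp.ne hmeasn hconv
  have l2 := perim_lsc hDK hmeas hvol
    (ne_top_of_le_ne_top hfp.ne (measure_mono (inter_subset_inter_right _ sdiff_subset)))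
    hmeasn hconv
  have dec : ∀ S : Set (EuclideanSpace ℝ (Fin (n + 1))),
      μH[(n : ℝ)] (S ∩ K ∩ D) + A * μH[(n : ℝ)] ((S \ K) ∩ D) =
        μH[(n : ℝ)] (S ∩ D) + (A - 1) * μH[(n : ℝ)] (S ∩ (D \ K)) := by
    intro S
    have e1 : S ∩ K ∩ D = (S ∩ D) ∩ K := by
      ext y; simp only [mem_inter_iff]; tauto
    have e2 : (S \ K) ∩ D = (S ∩ D) \ K := by
      ext y; simp only [mem_inter_iff, Set.mem_sdiff]; tauto
    have e3 : S ∩ (D \ K) = (S ∩ D) \ K := by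
      ext y; simp only [mem_inter_iff, Set.mem_sdiff]; tauto
    rw [e1, e2, e3]
    rw [← measure_inter_add_sdiff (S ∩ D) hKcl.measurableSet, add_assoc]
    congr 1
    nth_rewrite 1 [← add_tsub_cancel_of_le hA]
    rw [add_mul, one_mul]
  simp only [dec]
  refine le_trans ?_ (liminf_add_aux _ _)
  refine add_le_add l1 ?_
  refine (mul_le_mul_right l2 _).trans ?_
  have h3 := ENNReal.le_liminf_mul (f := (atTop : Filter ℕ)) (u := fun _ => A - 1)
    (v := fun m => μH[(n : ℝ)] (essBdry (Omn m) ∩ (D \ K)))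
  rw [liminf_const] at h3
  exact h3

end
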